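/- arXiv:1608.01915 — 2 statements merged into one kernel-verified Lean document; each statement's English description precedes it below -/
import Mathlib

section
/- Let (Y,‖·‖_Y) be a Banach space that admits an equivalent uniformly convex norm. Then there exists c = c(Y) ∈ (0,∞) such that for every n ∈ ℕ, every n-dimensional normed space (X,‖·‖_X), and every ε ∈ (0,1/2], one has r^{X→Y}(ε) ≥ exp(−1/ε^{cn}). -/
open MeasureTheory Metric Set

noncomputable section

/-- `N` is a norm on the real vector space `V`. -/
def IsNorm {V : Type*} [AddCommGroup V] [Module ℝ V] (N : V → ℝ) : Prop :=
  (∀ x, N x = 0 → x = 0) ∧ (∀ (a : ℝ) (x : V), N (a • x) = |a| * N x) ∧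
    (∀ x y : V, N (x + y) ≤ N x + N y)

/-- The norm `N` is uniformly convex. -/
def UniformlyConvexNorm {V : Type*} [AddCommGroup V] [Module ℝ V] (N : V → ℝ) : Prop :=
  ∀ ε ∈ Set.Ioc (0 : ℝ) 2, ∃ δ ∈ Set.Ioc (0 : ℝ) 1, ∀ x y : V,
    N x ≤ 1 → N y ≤ 1 → ε ≤ N (x - y) → N (x + y) ≤ 2 * (1 - δ)

/-- `Y` admits an equivalent uniformly convex norm. -/
def AdmitsEquivUniformlyConvexNorm (Y : Type*) [NormedAddCommGroup Y] [NormedSpace ℝ Y] : Prop :=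
  ∃ N : Y → ℝ, IsNorm N ∧
    (∃ a b : ℝ, 0 < a ∧ 0 < b ∧ ∀ y : Y, a * ‖y‖ ≤ N y ∧ N y ≤ b * ‖y‖) ∧
    UniformlyConvexNorm N

/-- The set of admissible radii `r ∈ (0,1)` in the definition of the modulus
`r^{X→Y}(ε)` of uniform approximation by affine maps. -/
def uaapSet (X Y : Type*) [NormedAddCommGroup X] [NormedSpace ℝ X]
    [NormedAddCommGroup Y] [NormedSpace ℝ Y] (ε : ℝ) : Set ℝ :=
  {r : ℝ | r ∈ Set.Ioo (0 : ℝ) 1 ∧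
    ∀ f : X → Y, LipschitzOnWith 1 f (closedBall (0 : X) 1) →
      ∃ ρ : ℝ, r ≤ ρ ∧ ∃ x : X, closedBall x ρ ⊆ closedBall (0 : X) 1 ∧
        ∃ Λ : X →ᵃ[ℝ] Y, ∀ y ∈ closedBall x ρ, ‖f y - Λ y‖ ≤ ε * ρ}

/-!
The difference quotients of a Lipschitz map `g` along the `m`-adic subdivisions of a segment form a
bounded martingale in `Y`. Uniform convexity makes its energies between two scales superadditive up
to constants. Hence among `N` consecutive blocks of scales some block carries at most a quarter of
the total energy, and after `r` such steps there is `k < N ^ r` such that refining the scale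
`t ≈ m ^ (-k)` to `t / m` changes the difference quotients by only `O(m / 4 ^ r)` in mean square
over base points and directions. Averaging `g` over balls of radius `σ t` makes it so smooth that
it is affine up to a small error at scale `t / m`, and the small change of the difference quotients
carries this affine approximation up to scale `t`.

A base point at which this works for an `ε`-dense set of directions costs the volume ratio
`(128 / ε) ^ n`. With `m` a power of `(1 / ε) ^ n` and `r` of order `n log (1 / ε)` this cost is
absorbed by `4 ^ r`, while `N ^ r` is polynomial in `(1 / ε) ^ n`, so that
`m ^ (-k) ≥ exp (-(1 / ε) ^ (c n))`.
-/

open Filter Topology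
open scoped NNReal

section TwoPoint

variable {V : Type*} [AddCommGroup V] [Module ℝ V] {ι : Type*} {p : Seminorm ℝ V} {c : ℝ}

/-- A norm in the sense of `IsNorm`, as a bundled seminorm. -/
def IsNorm.toSeminorm {N : V → ℝ} (hN : IsNorm N) : Seminorm ℝ V :=
  Seminorm.of N hN.2.2 hN.2.1

/-- The 2-uniform convexity inequality with constant `c`, weakened by the additive error
`c / 8 * (p x ^ 2 + p y ^ 2)`. The error term makes it available for an arbitrary modulus of
uniform convexity. -/
def IsAlmostTwoConvex (p : Seminorm ℝ V) (c : ℝ) : Prop :=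
  ∀ x y, p (x + y) ^ 2 + 2 * c * p (x - y) ^ 2 ≤ (2 + c / 8) * (p x ^ 2 + p y ^ 2)

lemma card_mul_sq_le_sum_sq {s : Finset ι} {Z : ι → V} {z : V}
    (hz : (s.card : ℝ) • z = ∑ i ∈ s, Z i) :
    s.card * p z ^ 2 ≤ ∑ i ∈ s, p (Z i) ^ 2 := by
  rcases s.eq_empty_or_nonempty with rfl | hs
  · simp
  have hcard : (0 : ℝ) < s.card := by exact_mod_cast hs.card_pos
  have hle : s.card * p z ≤ ∑ i ∈ s, p (Z i) := calc
    s.card * p z = p (∑ i ∈ s, Z i) := by rw [← hz, map_smul_eq_mul, Real.norm_natCast]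
    _ ≤ ∑ i ∈ s, p (Z i) := Finset.le_sum_of_subadditive p (map_zero p).le (map_add_le_add p) s Z
  have hsq : (s.card * p z) ^ 2 ≤ s.card * ∑ i ∈ s, p (Z i) ^ 2 :=
    (pow_le_pow_left₀ (by positivity) hle 2).trans sq_sum_le_card_mul_sum_sq
  refine le_of_mul_le_mul_left ?_ hcard
  linarith

lemma IsAlmostTwoConvex.card_mul_sq_add_le (hp : IsAlmostTwoConvex p c) (hc : 0 ≤ c)
    {s : Finset ι} {Z : ι → V} {z : V} (hz : (s.card : ℝ) • z = ∑ i ∈ s, Z i) :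
    s.card * p z ^ 2 + c * ∑ i ∈ s, p (Z i - z) ^ 2 ≤ (1 + c / 8) * ∑ i ∈ s, p (Z i) ^ 2 := by
  have hmean := card_mul_sq_le_sum_sq (p := p) hz
  have hmid : s.card * p ((2 : ℝ) • z) ^ 2 ≤ ∑ i ∈ s, p (Z i + z) ^ 2 := by
    refine card_mul_sq_le_sum_sq ?_
    rw [Finset.sum_add_distrib, ← hz, Finset.sum_const, two_smul, smul_add, Nat.cast_smul_eq_nsmul]
  have htwo : ∑ i ∈ s, p (Z i + z) ^ 2 + 2 * c * ∑ i ∈ s, p (Z i - z) ^ 2 ≤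
      (2 + c / 8) * (∑ i ∈ s, p (Z i) ^ 2 + s.card * p z ^ 2) := by
    have := Finset.sum_le_sum fun i (_ : i ∈ s) ↦ hp (Z i) z
    simpa only [Finset.sum_add_distrib, ← Finset.mul_sum, Finset.sum_const, nsmul_eq_mul] using this
  rw [map_smul_eq_mul, Real.norm_two] at hmid
  nlinarith [mul_le_mul_of_nonneg_left hmean hc]

lemma map_add_le_of_uniformlyConvex {δ ε : ℝ} (hδ : ∀ x y, p x ≤ 1 → p y ≤ 1 → ε ≤ p (x - y) →
    p (x + y) ≤ 2 * (1 - δ)) {x y : V} (hx : 0 < p x) (hyx : p y ≤ p x)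
    (hxy : ε * p x ≤ p (x - y)) : p (x + y) ≤ 2 * (1 - δ) * p x := by
  have hscale : ∀ z, p ((p x)⁻¹ • z) = p z / p x := fun z ↦ by
    rw [map_smul_eq_mul, norm_inv, Real.norm_of_nonneg hx.le, inv_mul_eq_div]
  have := hδ ((p x)⁻¹ • x) ((p x)⁻¹ • y) (by rw [hscale, div_self hx.ne'])
    (by rwa [hscale, div_le_one hx]) (by rwa [← smul_sub, hscale, le_div_iff₀ hx])
  rwa [← smul_add, hscale, div_le_iff₀ hx] at this

/-- If `b` is close to `a`, the gain comes from `hs`, otherwise from the strict convexity of the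
square function. -/
lemma sq_le_of_le_add_of_le_mul {a b s δ : ℝ} (hδ₀ : 0 ≤ δ) (hδ₁ : δ ≤ 1) (hb : 0 ≤ b)
    (hba : b ≤ a) (hs₀ : 0 ≤ s) (hsab : s ≤ a + b) (hs : s ≤ 2 * (1 - δ) * a) :
    s ^ 2 ≤ (2 - δ ^ 2 / 2) * (a ^ 2 + b ^ 2) := by
  rcases le_total ((1 - δ) * a) b with hclose | hfar
  · have hprod : s ^ 2 ≤ 4 * (1 - δ) * (a * b) := by
      nlinarith [mul_le_mul_of_nonneg_left hclose (mul_nonneg (sub_nonneg.2 hδ₁) (hb.trans hba))]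
    nlinarith [sq_nonneg (a - b), mul_nonneg (sub_nonneg.2 hδ₁) (sq_nonneg (a - b))]
  · have hgap : (δ * a) ^ 2 ≤ (a - b) ^ 2 :=
      pow_le_pow_left₀ (mul_nonneg hδ₀ (hb.trans hba)) (by linarith) 2
    nlinarith [mul_le_mul_of_nonneg_left (pow_le_pow_left₀ hb hba 2) (sq_nonneg δ)]

lemma exists_isAlmostTwoConvex (hp : UniformlyConvexNorm p) :
    ∃ c > 0, IsAlmostTwoConvex p c := by
  obtain ⟨δ, ⟨hδ₀, hδ₁⟩, hδ⟩ := hp (1 / 4) (by norm_num)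
  refine ⟨δ ^ 2 / 8, by positivity, fun x y ↦ ?_⟩
  wlog hyx : p y ≤ p x generalizing x y
  · simpa only [add_comm y x, map_sub_rev p y x, add_comm (p y ^ 2)] using this y x (by linarith)
  have hx₀ := apply_nonneg p x
  have hy₀ := apply_nonneg p y
  have hd₀ := apply_nonneg p (x - y)
  have hs₀ := apply_nonneg p (x + y)
  have hs := map_add_le_add p x y
  rcases le_or_gt (1 / 4 * p x) (p (x - y)) with hfar | hclose
  · have hs' : p (x + y) ≤ 2 * (1 - δ) * p x := by
      rcases hx₀.eq_or_lt with hx | hx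
      · rw [← hx]
        linarith
      · exact map_add_le_of_uniformlyConvex hδ hx hyx hfar
    have hgain := sq_le_of_le_add_of_le_mul hδ₀.le hδ₁ hy₀ hyx hs₀ hs hs'
    have hd : p (x - y) ^ 2 ≤ 2 * (p x ^ 2 + p y ^ 2) := by
      nlinarith [map_sub_le_add p x y, sq_nonneg (p x - p y)]
    nlinarith [mul_le_mul_of_nonneg_left hd (sq_nonneg δ), sq_nonneg (δ * p x),
      sq_nonneg (δ * p y)]
  · have hd : p (x - y) ^ 2 ≤ (p x ^ 2 + p y ^ 2) / 16 := by
      nlinarith [sq_nonneg (p y)]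
    nlinarith [mul_le_mul_of_nonneg_left hd (sq_nonneg δ), sq_nonneg (p x - p y)]

end TwoPoint

section SelfImprovement

/-- Abstracts the energies of a martingale between the scales `k ≤ l`: they increase with `l` and
are superadditive up to the constants `c` and `1 + c / 8`. -/
structure IsAlmostSuperadditive (W : ℕ → ℕ → ℝ) (c : ℝ) : Prop where
  nonneg : ∀ k l, 0 ≤ W k l
  mono : ∀ {k l q}, k ≤ l → l ≤ q → W k l ≤ W k q
  add_le : ∀ {k l q}, k ≤ l → l ≤ q → W k l + c * W l q ≤ (1 + c / 8) * W k q

variable {W : ℕ → ℕ → ℝ} {c : ℝ} {N : ℕ}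

lemma IsAlmostSuperadditive.mul_sum_le (hW : IsAlmostSuperadditive W c) (hc : 0 ≤ c)
    (k L : ℕ) {j : ℕ} (hj : j ≤ N) :
    c * ∑ i ∈ Finset.range j, W (k + i * L) (k + (i + 1) * L) ≤
      W k (k + j * L) + j * (c / 8 * W k (k + N * L)) := by
  induction j with
  | zero => simpa using hW.nonneg k k
  | succ j ih =>
    have hstep : W k (k + j * L) + c * W (k + j * L) (k + (j + 1) * L) ≤
        (1 + c / 8) * W k (k + (j + 1) * L) := hW.add_le (by lia) (by gcongr; lia)
    have hlast : W k (k + (j + 1) * L) ≤ W k (k + N * L) := hW.mono (by lia) (by gcongr)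
    rw [Finset.sum_range_succ, mul_add]
    push_cast
    linarith [ih (by lia), mul_le_mul_of_nonneg_left hlast (show 0 ≤ c / 8 by positivity)]

lemma IsAlmostSuperadditive.exists_le_div_four (hW : IsAlmostSuperadditive W c) (hc : 0 < c)
    (hN : 8 / c ≤ N) (k L : ℕ) :
    ∃ i < N, W (k + i * L) (k + (i + 1) * L) ≤ W k (k + N * L) / 4 := by
  have hN₀ : (0 : ℝ) < N := lt_of_lt_of_le (by positivity) hN
  have hsum : ∑ i ∈ Finset.range N, W (k + i * L) (k + (i + 1) * L) ≤
      ∑ _i ∈ Finset.range N, W k (k + N * L) / 4 := by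
    have htel := hW.mul_sum_le hc.le k L (le_refl N)
    rw [Finset.sum_const, Finset.card_range, nsmul_eq_mul]
    refine le_of_mul_le_mul_left ?_ hc
    have hcN : 8 ≤ N * c := (div_le_iff₀ hc).1 hN
    nlinarith [mul_le_mul_of_nonneg_right hcN (hW.nonneg k (k + N * L))]
  obtain ⟨i, hi, hle⟩ :=
    Finset.exists_le_of_sum_le (Finset.nonempty_range_iff.2 (by exact_mod_cast hN₀.ne')) hsum
  exact ⟨i, Finset.mem_range.1 hi, hle⟩

lemma IsAlmostSuperadditive.exists_step_le (hW : IsAlmostSuperadditive W c) (hc : 0 < c)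
    (hN : 8 / c ≤ N) (r k : ℕ) :
    ∃ j < N ^ r, W (k + j) (k + j + 1) ≤ W k (k + N ^ r) / 4 ^ r := by
  induction r generalizing k with
  | zero => exact ⟨0, by simp⟩
  | succ r ih =>
    obtain ⟨i, hi, hblock⟩ := hW.exists_le_div_four hc hN k (N ^ r)
    obtain ⟨j, hj, hstep⟩ := ih (k + i * N ^ r)
    refine ⟨i * N ^ r + j, ?_, ?_⟩
    · calc i * N ^ r + j < (i + 1) * N ^ r := by lia
        _ ≤ N ^ (r + 1) := by rw [pow_succ']; gcongr; lia
    · rw [add_assoc k (i * N ^ r) (N ^ r), ← add_one_mul, add_assoc k (i * N ^ r) j] at hstep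
      calc W (k + (i * N ^ r + j)) (k + (i * N ^ r + j) + 1)
          ≤ W (k + i * N ^ r) (k + (i + 1) * N ^ r) / 4 ^ r := hstep
        _ ≤ W k (k + N ^ (r + 1)) / 4 / 4 ^ r := by rw [pow_succ' N]; gcongr
        _ = W k (k + N ^ (r + 1)) / 4 ^ (r + 1) := by rw [div_div, pow_succ' (4 : ℝ)]

lemma IsAlmostSuperadditive.integral {Ω : Type*} [MeasurableSpace Ω] {ν : Measure Ω}
    {W : Ω → ℕ → ℕ → ℝ} (hW : ∀ ω, IsAlmostSuperadditive (W ω) c)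
    (hint : ∀ k l, Integrable (fun ω ↦ W ω k l) ν) :
    IsAlmostSuperadditive (fun k l ↦ ∫ ω, W ω k l ∂ν) c where
  nonneg k l := integral_nonneg fun ω ↦ (hW ω).nonneg k l
  mono hkl hlq := integral_mono (hint _ _) (hint _ _) fun ω ↦ (hW ω).mono hkl hlq
  add_le {k l q} hkl hlq := by
    rw [← integral_const_mul, ← integral_const_mul,
      ← integral_add (hint k l) ((hint l q).const_mul c)]
    exact integral_mono ((hint k l).add ((hint l q).const_mul c)) ((hint k q).const_mul _)
      fun ω ↦ (hW ω).add_le hkl hlq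

end SelfImprovement

section AdicMartingale

variable {V : Type*} [AddCommGroup V] [Module ℝ V] {p : Seminorm ℝ V} {m : ℕ} {D : ℕ → ℕ → V}

/-- `D l` is the `l`-th step of a martingale on the `m`-adic filtration of `[0, 1)`: `D l j` is its
value on the cell `[j / m ^ l, (j + 1) / m ^ l)`, which has to be the mean of the values on the
subcells of each deeper level. -/
def IsAdicMartingale (m : ℕ) (D : ℕ → ℕ → V) : Prop :=
  ∀ l q j, ((m ^ q : ℕ) : ℝ) • D l j = ∑ i ∈ Finset.range (m ^ q), D (l + q) (j * m ^ q + i)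

/-- The squared `L²` norm of the difference between the steps `l` and `k` of an `m`-adic
martingale; meant for `k ≤ l`, when `j / m ^ (l - k)` is the cell of level `k` that contains the
cell `j` of level `l`. -/
def adicEnergy (p : Seminorm ℝ V) (m : ℕ) (D : ℕ → ℕ → V) (k l : ℕ) : ℝ :=
  ((m : ℝ) ^ l)⁻¹ * ∑ j ∈ Finset.range (m ^ l), p (D l j - D k (j / m ^ (l - k))) ^ 2

lemma adicEnergy_nonneg (k l : ℕ) : 0 ≤ adicEnergy p m D k l := by
  unfold adicEnergy
  positivity

lemma adicEnergy_le (hm : 0 < m) {C : ℝ} (hC : ∀ l j, p (D l j) ≤ C) (k l : ℕ) :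
    adicEnergy p m D k l ≤ (2 * C) ^ 2 := by
  have hterm : ∀ j ∈ Finset.range (m ^ l),
      p (D l j - D k (j / m ^ (l - k))) ^ 2 ≤ (2 * C) ^ 2 := fun j _ ↦
    pow_le_pow_left₀ (apply_nonneg _ _)
      ((map_sub_le_add p _ _).trans (by linarith [hC l j, hC k (j / m ^ (l - k))])) 2
  have hsum := Finset.sum_le_card_nsmul _ _ _ hterm
  rw [Finset.card_range, nsmul_eq_mul, Nat.cast_pow] at hsum
  exact (inv_mul_le_iff₀ (by positivity)).2 hsum

lemma sum_range_mul_block {M : Type*} [AddCommMonoid M] (a b : ℕ) (f : ℕ → M) :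
    ∑ j ∈ Finset.range (a * b), f j =
      ∑ j ∈ Finset.range a, ∑ i ∈ Finset.range b, f (j * b + i) := by
  induction a with
  | zero => simp
  | succ a ih => rw [Nat.succ_mul, Finset.sum_range_add, ih, Finset.sum_range_succ]

lemma adicEnergy_add_eq (hm : 0 < m) {k l : ℕ} (hkl : k ≤ l) (q : ℕ) :
    adicEnergy p m D k (l + q) = ((m : ℝ) ^ (l + q))⁻¹ *
      ∑ j ∈ Finset.range (m ^ l), ∑ i ∈ Finset.range (m ^ q),
        p (D (l + q) (j * m ^ q + i) - D k (j / m ^ (l - k))) ^ 2 := by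
  rw [adicEnergy, pow_add m, sum_range_mul_block]
  congr 1
  refine Finset.sum_congr rfl fun j _ ↦ Finset.sum_congr rfl fun i hi ↦ ?_
  rw [show l + q - k = q + (l - k) by lia, pow_add, ← Nat.div_div_eq_div_mul, add_comm _ i,
    Nat.add_mul_div_right _ _ (by positivity), Nat.div_eq_of_lt (Finset.mem_range.1 hi), zero_add]

lemma adicEnergy_eq_pow_mul (hm : 0 < m) (k l q : ℕ) :
    adicEnergy p m D k l = ((m : ℝ) ^ (l + q))⁻¹ *
      ∑ j ∈ Finset.range (m ^ l), (m ^ q : ℕ) * p (D l j - D k (j / m ^ (l - k))) ^ 2 := by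
  rw [adicEnergy, ← Finset.mul_sum, pow_add, Nat.cast_pow]
  field_simp

lemma IsAdicMartingale.smul_sub_eq_sum (hD : IsAdicMartingale m D) (l q j : ℕ) (w : V) :
    ((Finset.range (m ^ q)).card : ℝ) • (D l j - w) =
      ∑ i ∈ Finset.range (m ^ q), (D (l + q) (j * m ^ q + i) - w) := by
  rw [Finset.sum_sub_distrib, ← hD, Finset.sum_const, smul_sub, Finset.card_range,
    Nat.cast_smul_eq_nsmul ℝ _ w]

lemma IsAdicMartingale.isAlmostSuperadditive_adicEnergy (hD : IsAdicMartingale m D) (hm : 0 < m)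
    {c : ℝ} (hp : IsAlmostTwoConvex p c) (hc : 0 ≤ c) :
    IsAlmostSuperadditive (adicEnergy p m D) c where
  nonneg := adicEnergy_nonneg
  mono {k l _} hkl hlq := by
    obtain ⟨q, rfl⟩ := Nat.exists_eq_add_of_le hlq
    rw [adicEnergy_eq_pow_mul hm k l q, adicEnergy_add_eq hm hkl]
    gcongr with j
    simpa only [Finset.card_range] using card_mul_sq_le_sum_sq (hD.smul_sub_eq_sum l q j _)
  add_le {k l _} hkl hlq := by
    obtain ⟨q, rfl⟩ := Nat.exists_eq_add_of_le hlq
    rw [adicEnergy_eq_pow_mul hm k l q, adicEnergy_add_eq hm hkl, adicEnergy_add_eq hm le_rfl,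
      mul_left_comm, mul_left_comm (1 + c / 8), ← mul_add, Finset.mul_sum, Finset.mul_sum,
      ← Finset.sum_add_distrib]
    gcongr with j
    simpa only [Finset.card_range, sub_sub_sub_cancel_right, tsub_self, pow_zero, Nat.div_one]
      using hp.card_mul_sq_add_le hc (hD.smul_sub_eq_sum l q j (D k (j / m ^ (l - k))))

end AdicMartingale

section RadialRetraction

variable {X : Type*} [NormedAddCommGroup X] [NormedSpace ℝ X]

/-- The retraction of a normed space onto its closed unit ball along rays from the origin. -/
def radialRetraction (x : X) : X := (max 1 ‖x‖)⁻¹ • x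

lemma radialRetraction_mem_closedBall (x : X) : radialRetraction x ∈ closedBall (0 : X) 1 := by
  have hpos : 0 < max 1 ‖x‖ := lt_max_of_lt_left one_pos
  rw [mem_closedBall_zero_iff, radialRetraction, norm_smul, norm_inv, Real.norm_of_nonneg hpos.le,
    inv_mul_le_iff₀ hpos, mul_one]
  exact le_max_right _ _

lemma radialRetraction_of_mem {x : X} (hx : x ∈ closedBall (0 : X) 1) :
    radialRetraction x = x := by
  rw [radialRetraction, max_eq_left (mem_closedBall_zero_iff.1 hx), inv_one, one_smul]

lemma lipschitzWith_radialRetraction : LipschitzWith 2 (radialRetraction : X → X) := by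
  refine LipschitzWith.of_dist_le_mul fun x y ↦ ?_
  have hx : 0 < max 1 ‖x‖ := lt_max_of_lt_left one_pos
  have hdecomp : radialRetraction x - radialRetraction y =
      (max 1 ‖x‖)⁻¹ • (x - y + (max 1 ‖y‖ - max 1 ‖x‖) • radialRetraction y) := by
    simp only [radialRetraction]
    match_scalars <;> field_simp
    ring
  have hmax : |max 1 ‖y‖ - max 1 ‖x‖| ≤ ‖x - y‖ := by
    rw [norm_sub_rev, max_comm 1, max_comm 1]
    exact (abs_max_sub_max_le_abs _ _ _).trans (abs_norm_sub_norm_le y x)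
  have hy₁ : ‖radialRetraction y‖ ≤ 1 :=
    mem_closedBall_zero_iff.1 (radialRetraction_mem_closedBall y)
  rw [dist_eq_norm, dist_eq_norm, hdecomp, norm_smul, norm_inv, Real.norm_of_nonneg hx.le]
  calc (max 1 ‖x‖)⁻¹ * ‖x - y + (max 1 ‖y‖ - max 1 ‖x‖) • radialRetraction y‖
      ≤ 1 * (‖x - y‖ + |max 1 ‖y‖ - max 1 ‖x‖| * ‖radialRetraction y‖) := by
        refine mul_le_mul (inv_le_one_of_one_le₀ (le_max_left _ _)) ?_ (norm_nonneg _) one_pos.le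
        exact (norm_add_le _ _).trans_eq (by rw [norm_smul, Real.norm_eq_abs])
    _ ≤ 1 * (‖x - y‖ + ‖x - y‖ * 1) := by gcongr
    _ = (2 : ℝ≥0) * ‖x - y‖ := by rw [NNReal.coe_ofNat]; ring

lemma exists_lipschitzWith_eqOn_closedBall {Z : Type*} [PseudoEMetricSpace Z] {K : ℝ≥0} {f : X → Z}
    (hf : LipschitzOnWith K f (closedBall (0 : X) 1)) :
    ∃ g : X → Z, LipschitzWith (K * 2) g ∧ EqOn f g (closedBall (0 : X) 1) := by
  refine ⟨f ∘ radialRetraction, ?_, fun x hx ↦ by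
    rw [Function.comp_apply, radialRetraction_of_mem hx]⟩
  rw [← lipschitzOnWith_univ]
  exact hf.comp lipschitzWith_radialRetraction.lipschitzOnWith
    fun x _ ↦ radialRetraction_mem_closedBall x

end RadialRetraction

section AlmostAdditive

variable {X Y : Type*} [NormedAddCommGroup X] [NormedSpace ℝ X] [NormedAddCommGroup Y]
  [NormedSpace ℝ Y] {Δ : X → Y} {K L : ℝ}

/-- The blow-up `2 ^ k • Δ (v / 2 ^ k)` of `Δ` at the origin. -/
def dyadicBlowup (Δ : X → Y) (k : ℕ) (v : X) : Y := (2 : ℝ) ^ k • Δ (((2 : ℝ) ^ k)⁻¹ • v)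

lemma norm_two_pow_inv_smul (k : ℕ) (v : X) : ‖((2 : ℝ) ^ k)⁻¹ • v‖ = ((2 : ℝ) ^ k)⁻¹ * ‖v‖ := by
  rw [norm_smul, Real.norm_of_nonneg (by positivity)]

lemma norm_dyadicBlowup_le (hK : ∀ v, ‖Δ v‖ ≤ K * ‖v‖) (k : ℕ) (v : X) :
    ‖dyadicBlowup Δ k v‖ ≤ K * ‖v‖ := by
  rw [dyadicBlowup, norm_smul, Real.norm_of_nonneg (by positivity)]
  calc (2 : ℝ) ^ k * ‖Δ (((2 : ℝ) ^ k)⁻¹ • v)‖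
      ≤ 2 ^ k * (K * (((2 : ℝ) ^ k)⁻¹ * ‖v‖)) := by
        rw [← norm_two_pow_inv_smul]
        gcongr
        exact hK _
    _ = K * ‖v‖ := by field_simp

lemma norm_dyadicBlowup_add_sub_sub_le
    (hL : ∀ a b, ‖Δ (a + b) - Δ a - Δ b‖ ≤ L * ‖a‖ * ‖b‖) (k : ℕ) (a b : X) :
    ‖dyadicBlowup Δ k (a + b) - dyadicBlowup Δ k a - dyadicBlowup Δ k b‖ ≤
      L * ‖a‖ * ‖b‖ * (1 / 2) ^ k := by
  simp only [dyadicBlowup, ← smul_sub, smul_add, norm_smul]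
  rw [Real.norm_of_nonneg (show (0 : ℝ) ≤ 2 ^ k by positivity)]
  calc (2 : ℝ) ^ k * ‖Δ (((2 : ℝ) ^ k)⁻¹ • a + ((2 : ℝ) ^ k)⁻¹ • b) - Δ (((2 : ℝ) ^ k)⁻¹ • a) -
        Δ (((2 : ℝ) ^ k)⁻¹ • b)‖
      ≤ 2 ^ k * (L * (((2 : ℝ) ^ k)⁻¹ * ‖a‖) * (((2 : ℝ) ^ k)⁻¹ * ‖b‖)) := by
        rw [← norm_two_pow_inv_smul, ← norm_two_pow_inv_smul]
        gcongr
        exact hL _ _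
    _ = L * ‖a‖ * ‖b‖ * (1 / 2) ^ k := by rw [one_div, inv_pow]; field_simp

lemma dist_dyadicBlowup_succ_le
    (hL : ∀ a b, ‖Δ (a + b) - Δ a - Δ b‖ ≤ L * ‖a‖ * ‖b‖) (v : X) (k : ℕ) :
    dist (dyadicBlowup Δ k v) (dyadicBlowup Δ (k + 1) v) ≤ L / 2 * ‖v‖ ^ 2 / 2 / 2 ^ k := by
  set w : X := ((2 : ℝ) ^ (k + 1))⁻¹ • v with hw
  have hww : ((2 : ℝ) ^ k)⁻¹ • v = w + w := by
    rw [hw, ← two_smul ℝ, smul_smul, pow_succ]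
    congr 1
    field_simp
  have hsub : dyadicBlowup Δ k v - dyadicBlowup Δ (k + 1) v =
      (2 : ℝ) ^ k • (Δ (w + w) - Δ w - Δ w) := by
    rw [dyadicBlowup, dyadicBlowup, hww, ← hw, pow_succ, mul_smul, ← smul_sub, two_smul, sub_sub]
  rw [dist_eq_norm, hsub, norm_smul, Real.norm_of_nonneg (by positivity)]
  calc (2 : ℝ) ^ k * ‖Δ (w + w) - Δ w - Δ w‖ ≤ 2 ^ k * (L * ‖w‖ * ‖w‖) := by
        gcongr
        exact hL w w
    _ = L / 2 * ‖v‖ ^ 2 / 2 / 2 ^ k := by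
        rw [hw, norm_two_pow_inv_smul, pow_succ]
        field_simp

lemma exists_continuousLinearMap_norm_sub_le [CompleteSpace Y] (hK : ∀ v, ‖Δ v‖ ≤ K * ‖v‖)
    (hL : ∀ a b, ‖Δ (a + b) - Δ a - Δ b‖ ≤ L * ‖a‖ * ‖b‖) :
    ∃ A : X →L[ℝ] Y, (∀ v, ‖A v‖ ≤ K * ‖v‖) ∧ ∀ v, ‖Δ v - A v‖ ≤ L / 2 * ‖v‖ ^ 2 := by
  have hlim (v : X) : ∃ y, Tendsto (fun k ↦ dyadicBlowup Δ k v) atTop (𝓝 y) :=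
    cauchySeq_tendsto_of_complete (cauchySeq_of_le_geometric_two (dist_dyadicBlowup_succ_le hL v))
  choose A hA using hlim
  have hA_norm (v : X) : ‖A v‖ ≤ K * ‖v‖ :=
    le_of_tendsto' (hA v).norm fun k ↦ norm_dyadicBlowup_le hK k v
  have hA_add (a b : X) : A (a + b) = A a + A b := by
    have hzero : Tendsto (fun k : ℕ ↦ L * ‖a‖ * ‖b‖ * (1 / 2 : ℝ) ^ k) atTop (𝓝 0) := by
      simpa using (tendsto_pow_atTop_nhds_zero_of_lt_one (r := (1 / 2 : ℝ)) (by norm_num)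
        (by norm_num)).const_mul (L * ‖a‖ * ‖b‖)
    have := tendsto_nhds_unique (((hA (a + b)).sub (hA a)).sub (hA b))
      (squeeze_zero_norm (fun k ↦ norm_dyadicBlowup_add_sub_sub_le hL k a b) hzero)
    rwa [sub_sub, sub_eq_zero] at this
  refine ⟨(AddMonoidHom.mk' A hA_add).toRealLinearMap
    (AddMonoidHomClass.continuous_of_bound _ K hA_norm), hA_norm, fun v ↦ ?_⟩
  have hdist := dist_le_of_le_geometric_two_of_tendsto₀ (dist_dyadicBlowup_succ_le hL v) (hA v)
  simpa [dyadicBlowup, dist_eq_norm] using hdist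

end AlmostAdditive

section BallMean

variable {X Y : Type*} [NormedAddCommGroup X] [MeasurableSpace X] {μ : Measure X}
  [NormedAddCommGroup Y] {g h : X → Y} {s : ℝ}

lemma integrableOn_closedBall [ProperSpace X] [BorelSpace X] [IsFiniteMeasureOnCompacts μ]
    (hg : Continuous g) (x : X) (s : ℝ) : IntegrableOn g (closedBall x s) μ :=
  hg.continuousOn.integrableOn_compact (isCompact_closedBall x s)

variable [NormedSpace ℝ Y]

/-- The mean of `g` over the closed ball of radius `s` around `x`; as a function of `x` it smooths
`g` at scale `s`. -/
def ballMean (μ : Measure X) (s : ℝ) (g : X → Y) (x : X) : Y := ⨍ u in closedBall x s, g u ∂μ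

lemma measureReal_closedBall_pos [ProperSpace X] [μ.IsOpenPosMeasure]
    [IsFiniteMeasureOnCompacts μ] (x : X) (hs : 0 < s) : 0 < μ.real (closedBall x s) :=
  ENNReal.toReal_pos (measure_closedBall_pos μ x hs).ne' measure_closedBall_lt_top.ne

lemma norm_ballMean_le [ProperSpace X] [μ.IsOpenPosMeasure] [IsFiniteMeasureOnCompacts μ]
    (hs : 0 < s) {C : ℝ} {x : X} (hC : ∀ u ∈ closedBall x s, ‖g u‖ ≤ C) :
    ‖ballMean μ s g x‖ ≤ C := by
  have hV := measureReal_closedBall_pos (μ := μ) x hs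
  rw [ballMean, setAverage_eq, norm_smul, norm_inv, Real.norm_of_nonneg hV.le,
    inv_mul_le_iff₀ hV, mul_comm]
  exact norm_setIntegral_le_of_norm_le_const measure_closedBall_lt_top hC

lemma setIntegral_closedBall_add_left [BorelSpace X] [μ.IsAddLeftInvariant] (g : X → Y) (b x : X)
    (s : ℝ) :
    ∫ u in closedBall x s, g (b + u) ∂μ = ∫ u in closedBall (b + x) s, g u ∂μ := by
  rw [← (measurePreserving_add_left μ b).setIntegral_preimage_emb (measurableEmbedding_addLeft b)
    g (closedBall (b + x) s), preimage_add_closedBall, add_sub_cancel_left]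

variable [BorelSpace X] [μ.IsAddHaarMeasure]

lemma ballMean_eq_inv_smul (s : ℝ) (g : X → Y) (x : X) :
    ballMean μ s g x = (μ.real (closedBall (0 : X) s))⁻¹ • ∫ u in closedBall x s, g u ∂μ := by
  rw [ballMean, setAverage_eq, Measure.addHaar_real_closedBall_center]

lemma ballMean_comp_add_left (s : ℝ) (g : X → Y) (b x : X) :
    ballMean μ s (fun u ↦ g (b + u)) x = ballMean μ s g (b + x) := by
  rw [ballMean_eq_inv_smul, ballMean_eq_inv_smul, setIntegral_closedBall_add_left]

lemma ballMean_const_smul (s : ℝ) (a : ℝ) (g : X → Y) (x : X) :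
    ballMean μ s (fun u ↦ a • g u) x = a • ballMean μ s g x := by
  rw [ballMean_eq_inv_smul, ballMean_eq_inv_smul, integral_smul, smul_comm]

variable [ProperSpace X]

lemma ballMean_sub (hg : Continuous g) (hh : Continuous h) (s : ℝ) (x : X) :
    ballMean μ s (fun u ↦ g u - h u) x = ballMean μ s g x - ballMean μ s h x := by
  rw [ballMean_eq_inv_smul, ballMean_eq_inv_smul, ballMean_eq_inv_smul,
    integral_sub (integrableOn_closedBall hg x s) (integrableOn_closedBall hh x s), smul_sub]

lemma lipschitzWith_ballMean {K : ℝ≥0} (hg : LipschitzWith K g) (hs : 0 < s) :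
    LipschitzWith K (ballMean μ s g) := by
  have hc := hg.continuous
  refine LipschitzWith.of_dist_le_mul fun x y ↦ ?_
  rw [dist_eq_norm, dist_eq_norm, ← add_zero x, ← add_zero y, ← ballMean_comp_add_left,
    ← ballMean_comp_add_left, ← ballMean_sub (by fun_prop) (by fun_prop), add_zero, add_zero]
  refine norm_ballMean_le hs fun u _ ↦ (hg.norm_sub_le _ _).trans_eq ?_
  rw [add_sub_add_right_eq_sub]

lemma norm_ballMean_sub_le [CompleteSpace Y] {K : ℝ≥0} (hg : LipschitzWith K g) (hs : 0 < s)
    (x : X) : ‖ballMean μ s g x - g x‖ ≤ K * s := by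
  have hconst : ballMean μ s (fun _ ↦ g x) x = g x :=
    setAverage_const (measure_closedBall_pos μ x hs).ne' measure_closedBall_lt_top.ne (g x)
  rw [← hconst, ← ballMean_sub hg.continuous continuous_const]
  refine norm_ballMean_le hs fun u hu ↦ (hg.norm_sub_le u x).trans ?_
  gcongr
  rwa [← dist_eq_norm]

lemma sq_ballMean_le [CompleteSpace Y] (p : Seminorm ℝ Y) (hp : Continuous p) (hg : Continuous g)
    (hs : 0 < s) (x : X) :
    p (ballMean μ s g x) ^ 2 ≤ ballMean μ s (fun u ↦ p (g u) ^ 2) x :=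
  (p.convexOn.pow (fun y _ ↦ apply_nonneg p y) 2).map_set_average_le (hp.pow 2).continuousOn
    isClosed_univ (measure_closedBall_pos μ x hs).ne' measure_closedBall_lt_top.ne
    (Eventually.of_forall fun _ ↦ mem_univ _) (integrableOn_closedBall hg x s)
    (integrableOn_closedBall ((hp.comp hg).pow 2) x s)

end BallMean

section SecondDifference

variable {X Y : Type*} [NormedAddCommGroup X] [NormedSpace ℝ X] [FiniteDimensional ℝ X]
  [MeasurableSpace X] [BorelSpace X] {μ : Measure X} [μ.IsAddHaarMeasure]
  [NormedAddCommGroup Y] [NormedSpace ℝ Y] {g h : X → Y} {s : ℝ}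

lemma measureReal_closedBall_sdiff_le (b x : X) (hs : 0 < s) :
    μ.real (closedBall b s \ closedBall x s) ≤
      Module.finrank ℝ X * (‖b - x‖ / s) * μ.real (closedBall (0 : X) s) := by
  set q := ‖b - x‖ / s
  have hV := measureReal_closedBall_pos (μ := μ) (0 : X) hs
  rcases eq_or_ne b x with rfl | hbx
  · simp [q]
  rcases le_total q 1 with hle | hle
  · have hdist : ‖b - x‖ = q * s := (div_mul_cancel₀ _ hs.ne').symm
    have hshrink : closedBall b ((1 - q) * s) ⊆ closedBall x s :=
      closedBall_subset_closedBall' (by rw [dist_eq_norm]; linarith)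
    have hq₀ : 0 ≤ q := by positivity
    calc μ.real (closedBall b s \ closedBall x s)
        ≤ μ.real (closedBall b s \ closedBall b ((1 - q) * s)) :=
          measureReal_mono (sdiff_subset_sdiff_right hshrink)
            (measure_ne_top_of_subset sdiff_subset measure_closedBall_lt_top.ne)
      _ = μ.real (closedBall b s) - μ.real (closedBall b ((1 - q) * s)) :=
          measureReal_sdiff (closedBall_subset_closedBall (by nlinarith))
            measurableSet_closedBall measure_closedBall_lt_top.ne
      _ = (1 - (1 - q) ^ Module.finrank ℝ X) * μ.real (closedBall (0 : X) s) := by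
          rw [Measure.addHaar_real_closedBall' μ b (mul_nonneg (sub_nonneg.2 hle) hs.le),
            Measure.addHaar_real_closedBall' μ b hs.le, Measure.addHaar_real_closedBall' μ 0 hs.le,
            mul_pow]
          ring
      _ ≤ Module.finrank ℝ X * q * μ.real (closedBall (0 : X) s) := by
          have bernoulli := one_add_mul_le_pow (show -2 ≤ -q by linarith) (Module.finrank ℝ X)
          gcongr
          rw [← sub_eq_add_neg] at bernoulli
          linarith
  · have hn₁ : (1 : ℝ) ≤ Module.finrank ℝ X := by
      have := nontrivial_of_ne b x hbx
      exact_mod_cast Module.finrank_pos (R := ℝ) (M := X)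
    calc μ.real (closedBall b s \ closedBall x s) ≤ μ.real (closedBall b s) :=
          measureReal_mono sdiff_subset measure_closedBall_lt_top.ne
      _ = 1 * 1 * μ.real (closedBall (0 : X) s) := by
          rw [Measure.addHaar_real_closedBall_center, one_mul, one_mul]
      _ ≤ Module.finrank ℝ X * q * μ.real (closedBall (0 : X) s) := by gcongr

lemma norm_ballMean_sub_ballMean_le {C : ℝ} (hh : Continuous h) (hC : ∀ u, ‖h u‖ ≤ C) (hs : 0 < s)
    (b x : X) :
    ‖ballMean μ s h b - ballMean μ s h x‖ ≤ 2 * Module.finrank ℝ X * C / s * ‖b - x‖ := by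
  have hV := measureReal_closedBall_pos (μ := μ) (0 : X) hs
  have hC₀ : 0 ≤ C := (norm_nonneg _).trans (hC 0)
  have hdiff (y z : X) : ‖∫ u in closedBall y s \ closedBall z s, h u ∂μ‖ ≤
      C * (Module.finrank ℝ X * (‖y - z‖ / s) * μ.real (closedBall (0 : X) s)) := calc
    _ ≤ C * μ.real (closedBall y s \ closedBall z s) :=
      norm_setIntegral_le_of_norm_le_const
        ((measure_mono sdiff_subset).trans_lt measure_closedBall_lt_top) fun u _ ↦ hC u
    _ ≤ _ := by
      gcongr
      exact measureReal_closedBall_sdiff_le y z hs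
  rw [ballMean_eq_inv_smul, ballMean_eq_inv_smul, ← smul_sub,
    ← integral_inter_add_sdiff measurableSet_closedBall (integrableOn_closedBall hh b s),
    ← integral_inter_add_sdiff measurableSet_closedBall (integrableOn_closedBall hh x s),
    inter_comm (closedBall x s), add_sub_add_left_eq_sub, norm_smul, norm_inv,
    Real.norm_of_nonneg hV.le, inv_mul_le_iff₀ hV]
  refine (norm_sub_le_of_le (hdiff b x) (hdiff x b)).trans_eq ?_
  rw [norm_sub_rev x b]
  ring

lemma norm_secondDiff_ballMean_le {K : ℝ≥0} (hg : LipschitzWith K g) (hs : 0 < s) (x a b : X) :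
    ‖(ballMean μ s g (x + (a + b)) - ballMean μ s g x) -
        (ballMean μ s g (x + a) - ballMean μ s g x) -
        (ballMean μ s g (x + b) - ballMean μ s g x)‖ ≤
      2 * Module.finrank ℝ X * K / s * ‖a‖ * ‖b‖ := by
  have hc := hg.continuous
  have htrans (y : X) : ballMean μ s g (a + y) - ballMean μ s g y =
      ballMean μ s (fun u ↦ g (a + u) - g u) y := by
    rw [ballMean_sub (by fun_prop) hc, ballMean_comp_add_left]
  have hbound (u : X) : ‖g (a + u) - g u‖ ≤ K * ‖a‖ := by
    simpa using hg.norm_sub_le (a + u) u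
  calc _ = ‖(ballMean μ s g (a + (x + b)) - ballMean μ s g (x + b)) -
        (ballMean μ s g (a + x) - ballMean μ s g x)‖ := by
        rw [add_left_comm x, add_comm a x]
        congr 1
        abel
    _ ≤ 2 * Module.finrank ℝ X * (K * ‖a‖) / s * ‖x + b - x‖ := by
        rw [htrans, htrans]
        exact norm_ballMean_sub_ballMean_le (by fun_prop) hbound hs _ _
    _ = 2 * Module.finrank ℝ X * K / s * ‖a‖ * ‖b‖ := by
        rw [add_sub_cancel_left]
        ring

end SecondDifference

section Selection

variable {X : Type*} [NormedAddCommGroup X] [ProperSpace X] [MeasurableSpace X] [BorelSpace X]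
  {μ : Measure X} [μ.IsAddHaarMeasure] {H : X → ℝ} {φ : X → X → ℝ} {s : ℝ}

lemma setIntegral_closedBall_swap (hφ : Continuous fun z : X × X ↦ φ z.1 z.2) (x y : X) (a b : ℝ) :
    ∫ v in closedBall x a, ∫ u in closedBall y b, φ v u ∂μ ∂μ =
      ∫ u in closedBall y b, ∫ v in closedBall x a, φ v u ∂μ ∂μ := by
  refine integral_integral_swap ?_
  rw [Measure.prod_restrict]
  exact hφ.continuousOn.integrableOn_compact
    ((isCompact_closedBall x a).prod (isCompact_closedBall y b))

lemma setIntegral_closedBall_mono {x y : X} {a b : ℝ} (hH : Continuous H) (hH₀ : ∀ u, 0 ≤ H u)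
    (hle : a + dist x y ≤ b) :
    ∫ u in closedBall x a, H u ∂μ ≤ ∫ u in closedBall y b, H u ∂μ :=
  setIntegral_mono_set (integrableOn_closedBall hH y b) (Eventually.of_forall hH₀)
    (closedBall_subset_closedBall' hle).eventuallyLE

lemma continuous_setIntegral_closedBall {Z : Type*} [TopologicalSpace Z]
    [FirstCountableTopology Z] [LocallyCompactSpace Z] {φ : Z → X → ℝ}
    (hφ : Continuous fun z : Z × X ↦ φ z.1 z.2) (y : X) (b : ℝ) :
    Continuous fun z ↦ ∫ u in closedBall y b, φ z u ∂μ :=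
  continuous_parametric_integral_of_continuous hφ (isCompact_closedBall y b)

lemma continuous_ballMean {Z : Type*} [TopologicalSpace Z] [FirstCountableTopology Z]
    [LocallyCompactSpace Z] {φ : Z → X → ℝ} {h : Z → X} (hφ : Continuous fun z : Z × X ↦ φ z.1 z.2)
    (hh : Continuous h) (s : ℝ) : Continuous fun z ↦ ballMean μ s (φ z) (h z) := by
  have hcentred (z : Z) : ballMean μ s (φ z) (h z) =
      (μ.real (closedBall (0 : X) s))⁻¹ * ∫ u in closedBall (0 : X) s, φ z (h z + u) ∂μ := by
    rw [ballMean_eq_inv_smul, setIntegral_closedBall_add_left, add_zero, smul_eq_mul]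
  have hadd : Continuous fun w : Z × X ↦ φ w.1 (h w.1 + w.2) :=
    hφ.comp (by fun_prop : Continuous fun w : Z × X ↦ (w.1, h w.1 + w.2))
  simp only [hcentred]
  exact continuous_const.mul
    (continuous_setIntegral_closedBall (φ := fun z u ↦ φ z (h z + u)) hadd 0 s)

lemma setIntegral_ballMean_le (hH : Continuous H) (hH₀ : ∀ u, 0 ≤ H u) (hs : 0 < s) {a b : ℝ}
    (hab : a + s ≤ b) :
    ∫ x in closedBall (0 : X) a, ballMean μ s H x ∂μ ≤ ∫ x in closedBall (0 : X) b, H x ∂μ := by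
  have hadd : Continuous fun z : X × X ↦ H (z.1 + z.2) := by fun_prop
  have hswap : ∫ x in closedBall (0 : X) a, ballMean μ s H x ∂μ =
      ballMean μ s (fun u ↦ ∫ x in closedBall (0 : X) a, H (x + u) ∂μ) 0 := by
    rw [ballMean_eq_inv_smul, ← setIntegral_closedBall_swap (φ := fun x u ↦ H (x + u)) hadd,
      ← integral_smul]
    refine integral_congr_ae (Eventually.of_forall fun x ↦ ?_)
    dsimp only
    rw [ballMean_eq_inv_smul, setIntegral_closedBall_add_left, add_zero]
  rw [hswap]
  refine (Real.le_norm_self _).trans (norm_ballMean_le hs fun u hu ↦ ?_)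
  rw [Real.norm_of_nonneg (integral_nonneg fun x ↦ hH₀ _)]
  simp only [add_comm _ u]
  rw [setIntegral_closedBall_add_left, add_zero]
  exact setIntegral_closedBall_mono hH hH₀ (by linarith [mem_closedBall.1 hu])

lemma exists_mem_closedBall_le_div (hH : Continuous H) {x : X} {a I : ℝ} (ha : 0 < a)
    (hI : ∫ u in closedBall x a, H u ∂μ ≤ I) :
    ∃ u ∈ closedBall x a, H u ≤ I / μ.real (closedBall (0 : X) a) := by
  obtain ⟨u, hu, hle⟩ := exists_le_setAverage (measure_closedBall_pos μ x ha).ne'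
    measure_closedBall_lt_top.ne (integrableOn_closedBall (μ := μ) hH x a)
  refine ⟨u, hu, hle.trans ?_⟩
  rw [setAverage_eq, Measure.addHaar_real_closedBall_center, smul_eq_mul, ← div_eq_inv_mul]
  gcongr

lemma setIntegral_setIntegral_ballMean_le (hφ : Continuous fun z : X × X ↦ φ z.1 z.2)
    (hφ₀ : ∀ v y, 0 ≤ φ v y) (hs : 0 < s) {R a b : ℝ} (hab : a + s ≤ b) :
    ∫ x in closedBall (0 : X) a, ∫ v in closedBall (0 : X) R, ballMean μ s (φ v) x ∂μ ∂μ ≤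
      ∫ v in closedBall (0 : X) R, ∫ y in closedBall (0 : X) b, φ v y ∂μ ∂μ := by
  have hmean : Continuous fun z : X × X ↦ ballMean μ s (φ z.1) z.2 :=
    continuous_ballMean (φ := fun z : X × X ↦ φ z.1)
      (hφ.comp (by fun_prop : Continuous fun w : (X × X) × X ↦ (w.1.1, w.2))) continuous_snd s
  have hleft : Continuous fun v ↦ ∫ x in closedBall (0 : X) a, ballMean μ s (φ v) x ∂μ :=
    continuous_setIntegral_closedBall (φ := fun v x ↦ ballMean μ s (φ v) x) hmean 0 a
  have hright : Continuous fun v ↦ ∫ y in closedBall (0 : X) b, φ v y ∂μ :=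
    continuous_setIntegral_closedBall hφ 0 b
  rw [← setIntegral_closedBall_swap (φ := fun v x ↦ ballMean μ s (φ v) x) hmean]
  exact setIntegral_mono (integrableOn_closedBall hleft 0 R) (integrableOn_closedBall hright 0 R)
    fun v ↦ setIntegral_ballMean_le (hφ.comp (Continuous.prodMk_right v)) (hφ₀ v) hs hab

lemma exists_forall_exists_ballMean_le (hφ : Continuous fun z : X × X ↦ φ z.1 z.2)
    (hφ₀ : ∀ v y, 0 ≤ φ v y) {R r ρ τ I : ℝ} (hρ : 0 < ρ) (hs : 0 < s) (hr : ρ + s ≤ r)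
    (hτ : 0 < τ)
    (hI : ∫ v in closedBall (0 : X) R, ∫ y in closedBall (0 : X) r, φ v y ∂μ ∂μ ≤ I) :
    ∃ x₀ ∈ closedBall (0 : X) ρ, ∀ v₀ ∈ closedBall (0 : X) (R - τ), ∃ v ∈ closedBall v₀ τ,
      ballMean μ s (φ v) x₀ ≤
        I / (μ.real (closedBall (0 : X) ρ) * μ.real (closedBall (0 : X) τ)) := by
  have hmean : Continuous fun z : X × X ↦ ballMean μ s (φ z.2) z.1 :=
    continuous_ballMean (φ := fun z : X × X ↦ φ z.2)
      (hφ.comp (by fun_prop : Continuous fun w : (X × X) × X ↦ (w.1.2, w.2))) continuous_fst s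
  have hinner : Continuous fun x ↦ ∫ v in closedBall (0 : X) R, ballMean μ s (φ v) x ∂μ :=
    continuous_setIntegral_closedBall (φ := fun x v ↦ ballMean μ s (φ v) x) hmean 0 R
  obtain ⟨x₀, hx₀, hle⟩ := exists_mem_closedBall_le_div hinner hρ
    ((setIntegral_setIntegral_ballMean_le hφ hφ₀ hs hr).trans hI)
  refine ⟨x₀, hx₀, fun v₀ hv₀ ↦ ?_⟩
  have hslice : Continuous fun v ↦ ballMean μ s (φ v) x₀ :=
    continuous_ballMean hφ continuous_const s
  have hslice₀ (v : X) : 0 ≤ ballMean μ s (φ v) x₀ := by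
    rw [ballMean_eq_inv_smul]
    exact smul_nonneg (by positivity) (integral_nonneg fun u ↦ hφ₀ v u)
  have hsub : ∫ v in closedBall v₀ τ, ballMean μ s (φ v) x₀ ∂μ ≤
      ∫ v in closedBall (0 : X) R, ballMean μ s (φ v) x₀ ∂μ :=
    setIntegral_closedBall_mono hslice hslice₀ (by linarith [mem_closedBall.1 hv₀])
  rw [← div_div]
  exact exists_mem_closedBall_le_div hslice hτ (hsub.trans hle)

end Selection

section DifferenceQuotient

variable {X Y : Type*} [NormedAddCommGroup X] [NormedSpace ℝ X] [NormedAddCommGroup Y]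
  [NormedSpace ℝ Y] {g : X → Y} {m : ℕ} {p : Seminorm ℝ Y}

/-- The difference quotient of `g` at `y` in the direction `v` with step `t`; it is `0` for
`t = 0`. -/
def diffQuot (g : X → Y) (v : X) (t : ℝ) (y : X) : Y := t⁻¹ • (g (y + t • v) - g y)

/-- How much a difference quotient changes when its step is refined by the factor `m`. -/
def slopeGap (g : X → Y) (m : ℕ) (v : X) (t : ℝ) (y : X) : Y :=
  diffQuot g v (t / m) y - diffQuot g v t y

/-- The difference quotients of `g` along the cells of the `m`-adic partitions of the segment from
`x` to `x + t • v`, indexed by level and cell as in `IsAdicMartingale`. -/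
def gridSlope (g : X → Y) (m : ℕ) (t : ℝ) (v x : X) (l j : ℕ) : Y :=
  diffQuot g v (t / m ^ l) (x + (j * (t / m ^ l)) • v)

lemma norm_diffQuot_le {K : ℝ≥0} (hg : LipschitzWith K g) (v : X) (t : ℝ) (y : X) :
    ‖diffQuot g v t y‖ ≤ K * ‖v‖ := by
  rcases eq_or_ne t 0 with rfl | ht
  · simpa [diffQuot] using by positivity
  have hinc : ‖g (y + t • v) - g y‖ ≤ K * (‖t‖ * ‖v‖) := by
    simpa only [add_sub_cancel_left, norm_smul] using hg.norm_sub_le (y + t • v) y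
  rw [diffQuot, norm_smul, norm_inv, inv_mul_le_iff₀ (norm_pos_iff.2 ht)]
  linarith

lemma natCast_smul_diffQuot_eq_sum (g : X → Y) (v : X) (t : ℝ) (y : X) (N : ℕ) :
    (N : ℝ) • diffQuot g v (N * t) y = ∑ i ∈ Finset.range N, diffQuot g v t (y + (i * t) • v) := by
  rcases eq_or_ne N 0 with rfl | hN
  · simp
  have htele := Finset.sum_range_sub (fun i : ℕ ↦ g (y + (i * t) • v)) N
  simp only [diffQuot, ← Finset.smul_sum, add_assoc, ← add_smul, ← add_one_mul,
    ← Nat.cast_add_one, htele, smul_smul, mul_inv]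
  rw [mul_inv_cancel_left₀ (Nat.cast_ne_zero.2 hN), Nat.cast_zero, zero_mul, zero_smul, add_zero]

lemma isAdicMartingale_gridSlope (g : X → Y) (hm : 0 < m) (t : ℝ) (v x : X) :
    IsAdicMartingale m (gridSlope g m t v x) := by
  intro l q j
  have hstep : t / m ^ l = (m ^ q : ℕ) * (t / m ^ (l + q)) := by
    rw [pow_add]
    push_cast
    field_simp
  have hgrid := natCast_smul_diffQuot_eq_sum g v (t / m ^ (l + q)) (x + (j * (t / m ^ l)) • v)
    (m ^ q)
  rw [← hstep] at hgrid
  refine hgrid.trans (Finset.sum_congr rfl fun i _ ↦ ?_)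
  rw [gridSlope, add_assoc, ← add_smul, hstep]
  push_cast
  ring_nf

lemma gridSlope_succ_sub (g : X → Y) (hm : 0 < m) (t : ℝ) (v x : X) (k i : ℕ) :
    gridSlope g m t v x (k + 1) (i * m) - gridSlope g m t v x k i =
      slopeGap g m v (t / m ^ k) (x + (i * (t / m ^ k)) • v) := by
  have hcell : ((i * m : ℕ) : ℝ) * (t / m ^ k / m) = i * (t / m ^ k) := by
    push_cast
    field_simp
  rw [slopeGap, gridSlope, gridSlope, pow_succ, ← div_div, hcell]

lemma sum_sq_slopeGap_le_adicEnergy (g : X → Y) (hm : 0 < m) (t : ℝ) (v x : X) (k : ℕ) :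
    ((m : ℝ) ^ (k + 1))⁻¹ * ∑ i ∈ Finset.range (m ^ k),
        p (slopeGap g m v (t / m ^ k) (x + (i * (t / m ^ k)) • v)) ^ 2 ≤
      adicEnergy p m (gridSlope g m t v x) k (k + 1) := by
  rw [adicEnergy_add_eq hm le_rfl]
  gcongr with i
  simp only [tsub_self, pow_zero, Nat.div_one, pow_one]
  rw [← gridSlope_succ_sub g hm]
  simpa only [add_zero] using Finset.single_le_sum (f := fun j ↦
    p (gridSlope g m t v x (k + 1) (i * m + j) - gridSlope g m t v x k i) ^ 2)
    (fun j _ ↦ by positivity) (Finset.mem_range.2 hm)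

lemma continuous_diffQuot (hg : Continuous g) (t : ℝ) :
    Continuous fun z : X × X ↦ diffQuot g z.1 t z.2 := by
  unfold diffQuot
  fun_prop

lemma continuous_sq_slopeGap (hp : Continuous p) (hg : Continuous g) (m : ℕ) (t : ℝ) :
    Continuous fun z : X × X ↦ p (slopeGap g m z.1 t z.2) ^ 2 :=
  (hp.comp ((continuous_diffQuot hg _).sub (continuous_diffQuot hg t))).pow 2

lemma continuous_adicEnergy_gridSlope (hp : Continuous p) (hg : Continuous g) (m : ℕ) (t : ℝ)
    (k l : ℕ) : Continuous fun z : X × X ↦ adicEnergy p m (gridSlope g m t z.1 z.2) k l := by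
  unfold adicEnergy gridSlope diffQuot
  fun_prop

end DifferenceQuotient

section Energy

variable {X Y : Type*} [NormedAddCommGroup X] [NormedSpace ℝ X] [FiniteDimensional ℝ X]
  [MeasurableSpace X] [BorelSpace X] {μ : Measure X} [μ.IsAddHaarMeasure]
  [NormedAddCommGroup Y] [NormedSpace ℝ Y] {g : X → Y} {m : ℕ} {p : Seminorm ℝ Y} {R t : ℝ}

lemma integrableOn_closedBall_prod {Φ : X × X → ℝ} (hΦ : Continuous Φ) (x y : X) (a b : ℝ) :
    IntegrableOn Φ (closedBall x a ×ˢ closedBall y b) (μ.prod μ) :=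
  hΦ.continuousOn.integrableOn_compact ((isCompact_closedBall x a).prod (isCompact_closedBall y b))

lemma setIntegral_setIntegral_le_setIntegral_add_smul {φ : X → X → ℝ}
    (hφ : Continuous fun z : X × X ↦ φ z.1 z.2) (hφ₀ : ∀ v y, 0 ≤ φ v y) {a b : ℝ} (ha : 0 ≤ a)
    (hab : R + a ≤ b) :
    ∫ v in closedBall (0 : X) 1, ∫ y in closedBall (0 : X) R, φ v y ∂μ ∂μ ≤
      ∫ z in closedBall (0 : X) 1 ×ˢ closedBall (0 : X) b, φ z.1 (z.2 + a • z.1) ∂μ.prod μ := by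
  have hshift : Continuous fun z : X × X ↦ φ z.1 (z.2 + a • z.1) :=
    hφ.comp (by fun_prop : Continuous fun z : X × X ↦ (z.1, z.2 + a • z.1))
  have hleft : Continuous fun v ↦ ∫ y in closedBall (0 : X) R, φ v y ∂μ :=
    continuous_setIntegral_closedBall hφ 0 R
  have hright : Continuous fun v ↦ ∫ y in closedBall (0 : X) b, φ v (y + a • v) ∂μ :=
    continuous_setIntegral_closedBall (φ := fun v y ↦ φ v (y + a • v)) hshift 0 b
  rw [setIntegral_prod _ (integrableOn_closedBall_prod hshift 0 0 1 b)]
  refine setIntegral_mono_on (integrableOn_closedBall hleft 0 1)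
    (integrableOn_closedBall hright 0 1) measurableSet_closedBall fun v hv ↦ ?_
  simp only [add_comm _ (a • v)]
  rw [setIntegral_closedBall_add_left, add_zero]
  refine setIntegral_closedBall_mono (hφ.comp (Continuous.prodMk_right v)) (hφ₀ v) ?_
  rw [dist_zero_left, norm_smul, Real.norm_of_nonneg ha]
  linarith [mul_le_of_le_one_right ha (mem_closedBall_zero_iff.1 hv)]

lemma mul_setIntegral_le_setIntegral_sum_add_smul {φ : X → X → ℝ}
    (hφ : Continuous fun z : X × X ↦ φ z.1 z.2) (hφ₀ : ∀ v y, 0 ≤ φ v y) {h b : ℝ} (hh : 0 ≤ h)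
    {M : ℕ} (hb : R + M * h ≤ b) :
    M * ∫ v in closedBall (0 : X) 1, ∫ y in closedBall (0 : X) R, φ v y ∂μ ∂μ ≤
      ∫ z in closedBall (0 : X) 1 ×ˢ closedBall (0 : X) b,
        ∑ i ∈ Finset.range M, φ z.1 (z.2 + (i * h) • z.1) ∂μ.prod μ := by
  have hshift (i : ℕ) : Continuous fun z : X × X ↦ φ z.1 (z.2 + (i * h) • z.1) :=
    hφ.comp (by fun_prop : Continuous fun z : X × X ↦ (z.1, z.2 + (i * h) • z.1))
  rw [integral_finsetSum _ fun i _ ↦ integrableOn_closedBall_prod (hshift i) 0 0 1 b,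
    ← nsmul_eq_mul]
  nth_rw 1 [← Finset.card_range M]
  refine Finset.card_nsmul_le_sum _ _ _ fun i hi ↦
    setIntegral_setIntegral_le_setIntegral_add_smul hφ hφ₀ (by positivity) (le_trans ?_ hb)
  have : (i : ℝ) ≤ M := by exact_mod_cast (Finset.mem_range.1 hi).le
  gcongr

lemma setIntegral_sq_slopeGap_le (hp : Continuous p) (hg : Continuous g) (hm : 0 < m) (ht : 0 ≤ t)
    (k : ℕ) :
    ∫ v in closedBall (0 : X) 1, ∫ y in closedBall (0 : X) R,
        p (slopeGap g m v (t / m ^ k) y) ^ 2 ∂μ ∂μ ≤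
      m * ∫ z in closedBall (0 : X) 1 ×ˢ closedBall (0 : X) (R + t),
        adicEnergy p m (gridSlope g m t z.1 z.2) k (k + 1) ∂μ.prod μ := by
  have hgap := continuous_sq_slopeGap hp hg m (t / m ^ k)
  have hsum : Continuous fun z : X × X ↦ ((m : ℝ) ^ (k + 1))⁻¹ * ∑ i ∈ Finset.range (m ^ k),
      p (slopeGap g m z.1 (t / m ^ k) (z.2 + (i * (t / m ^ k)) • z.1)) ^ 2 :=
    continuous_const.mul <| continuous_finsetSum _ fun i _ ↦ hgap.comp
      (by fun_prop : Continuous fun z : X × X ↦ (z.1, z.2 + (i * (t / m ^ k)) • z.1))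
  have hcells := mul_setIntegral_le_setIntegral_sum_add_smul (μ := μ) (R := R) (b := R + t)
    (M := m ^ k) (φ := fun v y ↦ p (slopeGap g m v (t / m ^ k) y) ^ 2) hgap
    (fun v y ↦ sq_nonneg _) (h := t / m ^ k) (by positivity)
    (by rw [Nat.cast_pow, mul_div_cancel₀ t (by positivity)])
  have henergy := setIntegral_mono (integrableOn_closedBall_prod hsum 0 0 1 (R + t))
    (integrableOn_closedBall_prod (μ := μ) (continuous_adicEnergy_gridSlope hp hg m t k (k + 1))
      0 0 1 (R + t)) fun z ↦ sum_sq_slopeGap_le_adicEnergy g hm t z.1 z.2 k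
  rw [integral_const_mul, inv_mul_le_iff₀ (by positivity), pow_succ, mul_assoc] at henergy
  push_cast at hcells
  exact le_of_mul_le_mul_left (hcells.trans henergy) (by positivity)

lemma setIntegral_adicEnergy_gridSlope_le {K : ℝ≥0} {b : ℝ} (hg : LipschitzWith K g)
    (hp : Continuous p) (hb : 0 ≤ b) (hpb : ∀ y, p y ≤ b * ‖y‖) (hm : 0 < m) (k l : ℕ) :
    ∫ z in closedBall (0 : X) 1 ×ˢ closedBall (0 : X) R,
        adicEnergy p m (gridSlope g m t z.1 z.2) k l ∂μ.prod μ ≤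
      (2 * (b * K)) ^ 2 * (μ.real (closedBall (0 : X) 1) * μ.real (closedBall (0 : X) R)) := by
  have hslope : ∀ v ∈ closedBall (0 : X) 1, ∀ x l j, p (gridSlope g m t v x l j) ≤ b * K :=
    fun v hv x l j ↦ (hpb _).trans <| by
      have hv₁ : K * ‖v‖ ≤ K := mul_le_of_le_one_right K.2 (mem_closedBall_zero_iff.1 hv)
      gcongr
      exact (norm_diffQuot_le hg _ _ _).trans hv₁
  have hconst := setIntegral_mono_on
    (integrableOn_closedBall_prod (μ := μ)
      (continuous_adicEnergy_gridSlope hp hg.continuous m t k l) 0 0 1 R)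
    (integrableOn_closedBall_prod (continuous_const (y := (2 * (b * K)) ^ 2)) 0 0 1 R)
    (measurableSet_closedBall.prod measurableSet_closedBall)
    fun z hz ↦ adicEnergy_le hm (hslope z.1 hz.1 z.2) k l
  rwa [setIntegral_const, measureReal_prod_prod, smul_eq_mul, mul_comm] at hconst

lemma exists_setIntegral_sq_slopeGap_le {K : ℝ≥0} {b c : ℝ} (hg : LipschitzWith K g)
    (hp : Continuous p) (hpc : IsAlmostTwoConvex p c) (hc : 0 < c) (hb : 0 ≤ b)
    (hpb : ∀ y, p y ≤ b * ‖y‖) (hm : 0 < m) (ht : 0 ≤ t) (R : ℝ) {N : ℕ} (hN : 8 / c ≤ N)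
    (r : ℕ) :
    ∃ k < N ^ r, ∫ v in closedBall (0 : X) 1, ∫ y in closedBall (0 : X) R,
        p (slopeGap g m v (t / m ^ k) y) ^ 2 ∂μ ∂μ ≤
      m * ((2 * (b * K)) ^ 2 * (μ.real (closedBall (0 : X) 1) *
        μ.real (closedBall (0 : X) (R + t))) / 4 ^ r) := by
  have hsuper := IsAlmostSuperadditive.integral
    (ν := (μ.prod μ).restrict (closedBall (0 : X) 1 ×ˢ closedBall (0 : X) (R + t)))
    (fun z : X × X ↦
      (isAdicMartingale_gridSlope g hm t z.1 z.2).isAlmostSuperadditive_adicEnergy hm hpc hc.le)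
    fun k l ↦ integrableOn_closedBall_prod
      (continuous_adicEnergy_gridSlope hp hg.continuous m t k l) 0 0 1 (R + t)
  obtain ⟨k, hk, hle⟩ := hsuper.exists_step_le hc hN r 0
  rw [zero_add] at hle
  refine ⟨k, hk, (setIntegral_sq_slopeGap_le hp hg.continuous hm ht k).trans ?_⟩
  gcongr
  refine hle.trans ?_
  gcongr
  exact setIntegral_adicEnergy_gridSlope_le hg hp hb hpb hm _ _

end Energy

section AffineApproximation

variable {X Y : Type*} [NormedAddCommGroup X] [NormedSpace ℝ X] [NormedAddCommGroup Y]
  [NormedSpace ℝ Y] {F g : X → Y} {m : ℕ} {p : Seminorm ℝ Y} {K : ℝ≥0} {A : X →L[ℝ] Y}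
  {L s t τ : ℝ} {v x : X}

lemma norm_diffQuot_sub_le (hA : ∀ w, ‖F (x + w) - F x - A w‖ ≤ L * ‖w‖ ^ 2) (ht : 0 < t) (v : X) :
    ‖diffQuot F v t x - A v‖ ≤ L * t * ‖v‖ ^ 2 := by
  have hscale : diffQuot F v t x - A v = t⁻¹ • (F (x + t • v) - F x - A (t • v)) := by
    rw [diffQuot, map_smul, smul_sub _ _ (t • A v), inv_smul_smul₀ ht.ne']
  rw [hscale, norm_smul, norm_inv, Real.norm_of_nonneg ht.le, inv_mul_le_iff₀ ht]
  refine (hA (t • v)).trans_eq ?_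
  rw [norm_smul, Real.norm_of_nonneg ht.le]
  ring

/-- `A` is accurate at the scale `t / m`, and the slope gap controls what is lost in going back up
to the scale `t`. -/
lemma norm_diffQuot_sub_le_norm_slopeGap_add
    (hA : ∀ w, ‖F (x + w) - F x - A w‖ ≤ L * ‖w‖ ^ 2) (hL : 0 ≤ L) (ht : 0 < t) (hm : 0 < m)
    (hv : ‖v‖ ≤ 1) : ‖diffQuot F v t x - A v‖ ≤ ‖slopeGap F m v t x‖ + L * (t / m) := calc
  ‖diffQuot F v t x - A v‖ = ‖(diffQuot F v (t / m) x - A v) - slopeGap F m v t x‖ := by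
    rw [slopeGap]
    congr 1
    abel
  _ ≤ ‖slopeGap F m v t x‖ + L * (t / m) := by
    have hfine := norm_diffQuot_sub_le hA (div_pos ht (Nat.cast_pos.2 hm)) v
    have hv₁ : L * (t / m) * ‖v‖ ^ 2 ≤ L * (t / m) :=
      mul_le_of_le_one_right (by positivity) (pow_le_one₀ (norm_nonneg v) hv)
    linarith [norm_sub_le (diffQuot F v (t / m) x - A v) (slopeGap F m v t x)]

lemma norm_sub_affine_le {η : ℝ} (hg : LipschitzWith K g) (hF : ∀ x, ‖F x - g x‖ ≤ η)
    (hA : ∀ v, ‖A v‖ ≤ K * ‖v‖) (ht : 0 < t) {y : X} (hv : t⁻¹ • (y - x) ∈ closedBall v τ) :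
    ‖g y - (g x + A (y - x))‖ ≤ 2 * K * (t * τ) + 2 * η + t * ‖diffQuot F v t x - A v‖ := by
  have hdist : ‖(y - x) - t • v‖ ≤ t * τ := by
    have hscale : (y - x) - t • v = t • (t⁻¹ • (y - x) - v) := by
      rw [smul_sub, smul_inv_smul₀ ht.ne']
    rw [hscale, norm_smul, Real.norm_of_nonneg ht.le]
    gcongr
    rwa [← dist_eq_norm]
  have hsplit : g y - (g x + A (y - x)) = (g y - g (x + t • v)) - A ((y - x) - t • v)
      - (F (x + t • v) - g (x + t • v)) + (F x - g x) + t • (diffQuot F v t x - A v) := by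
    rw [diffQuot, smul_sub t, smul_inv_smul₀ ht.ne', map_sub A (y - x), map_smul]
    abel
  have hgy : ‖g y - g (x + t • v)‖ ≤ K * (t * τ) := by
    refine (hg.norm_sub_le _ _).trans ?_
    rw [← sub_sub]
    gcongr
  have hAy : ‖A ((y - x) - t • v)‖ ≤ K * (t * τ) := (hA _).trans (by gcongr)
  have hslope : ‖t • (diffQuot F v t x - A v)‖ = t * ‖diffQuot F v t x - A v‖ := by
    rw [norm_smul, Real.norm_of_nonneg ht.le]
  rw [hsplit]
  refine norm_add_le_of_le (norm_add_le_of_le (norm_sub_le_of_le (norm_sub_le_of_le hgy hAy)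
    (hF (x + t • v))) (hF x)) hslope.le |>.trans_eq ?_
  ring

variable [FiniteDimensional ℝ X] [MeasurableSpace X] [BorelSpace X] {μ : Measure X}
  [μ.IsAddHaarMeasure]

lemma ballMean_diffQuot (hg : Continuous g) (s : ℝ) (v : X) (t : ℝ) (x : X) :
    ballMean μ s (diffQuot g v t) x = diffQuot (ballMean μ s g) v t x := by
  unfold diffQuot
  simp only [add_comm _ (t • v)]
  rw [ballMean_const_smul, ballMean_sub (by fun_prop) hg, ballMean_comp_add_left]

lemma ballMean_slopeGap (hg : Continuous g) (s : ℝ) (m : ℕ) (v : X) (t : ℝ) (x : X) :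
    ballMean μ s (slopeGap g m v t) x = slopeGap (ballMean μ s g) m v t x := by
  have hdiff (t : ℝ) : Continuous (diffQuot g v t) :=
    (continuous_diffQuot hg t).comp (Continuous.prodMk_right v)
  unfold slopeGap
  rw [ballMean_sub (hdiff _) (hdiff _), ballMean_diffQuot hg, ballMean_diffQuot hg]

variable [CompleteSpace Y]

lemma norm_slopeGap_ballMean_le {a θ : ℝ} (hg : Continuous g) (hp : Continuous p) (ha : 0 < a)
    (hap : ∀ y, a * ‖y‖ ≤ p y) (hs : 0 < s) (hθ : 0 ≤ θ)
    (hgap : ballMean μ s (fun y ↦ p (slopeGap g m v t y) ^ 2) x ≤ θ ^ 2) :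
    ‖slopeGap (ballMean μ s g) m v t x‖ ≤ θ / a := by
  have hcont : Continuous (slopeGap g m v t) :=
    ((continuous_diffQuot hg _).sub (continuous_diffQuot hg t)).comp (Continuous.prodMk_right v)
  rw [le_div_iff₀' ha, ← ballMean_slopeGap hg]
  exact (hap _).trans (le_of_sq_le_sq ((sq_ballMean_le p hp hcont hs x).trans hgap) hθ)

lemma exists_continuousLinearMap_ballMean (hg : LipschitzWith K g) (hs : 0 < s) (x : X) :
    ∃ A : X →L[ℝ] Y, (∀ v, ‖A v‖ ≤ K * ‖v‖) ∧ ∀ v,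
      ‖ballMean μ s g (x + v) - ballMean μ s g x - A v‖ ≤
        Module.finrank ℝ X * K / s * ‖v‖ ^ 2 := by
  obtain ⟨A, hAK, hA⟩ := exists_continuousLinearMap_norm_sub_le
    (Δ := fun v ↦ ballMean μ s g (x + v) - ballMean μ s g x) (K := K)
    (L := 2 * Module.finrank ℝ X * K / s)
    (fun v ↦ by simpa using (lipschitzWith_ballMean hg hs).norm_sub_le (x + v) x)
    (norm_secondDiff_ballMean_le hg hs x)
  exact ⟨A, hAK, fun v ↦ (hA v).trans_eq (by ring)⟩

lemma exists_continuousLinearMap_of_slopeGap {a σ θ ε : ℝ} (hg : LipschitzWith K g)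
    (hp : Continuous p) (ha : 0 < a) (hap : ∀ y, a * ‖y‖ ≤ p y) (hm : 0 < m) (ht : 0 < t)
    (hσ : 0 < σ) (hτ : τ ≤ 1 / 2) (hθ : 0 ≤ θ)
    (hgap : ∀ v₀ ∈ closedBall (0 : X) (1 - τ), ∃ v ∈ closedBall v₀ τ,
      ballMean μ (σ * t) (fun y ↦ p (slopeGap g m v t y) ^ 2) x ≤ θ ^ 2)
    (hε : 2 * K * σ + 2 * K * τ + Module.finrank ℝ X * K / (σ * m) + θ / a ≤ ε / 2) :
    ∃ A : X →L[ℝ] Y, ∀ y ∈ closedBall x (t / 2), ‖g y - (g x + A (y - x))‖ ≤ ε * (t / 2) := by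
  have hs : 0 < σ * t := mul_pos hσ ht
  obtain ⟨A, hAK, hA⟩ := exists_continuousLinearMap_ballMean (μ := μ) hg hs x
  refine ⟨A, fun y hy ↦ ?_⟩
  have hv₀ : ‖t⁻¹ • (y - x)‖ ≤ 1 / 2 := by
    rw [norm_smul, norm_inv, Real.norm_of_nonneg ht.le, inv_mul_le_iff₀ ht, ← dist_eq_norm]
    linarith [mem_closedBall.1 hy]
  obtain ⟨v, hv, hsmall⟩ := hgap (t⁻¹ • (y - x)) (mem_closedBall_zero_iff.2 (by linarith))
  have hv₁ : ‖v‖ ≤ 1 := by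
    linarith [norm_le_norm_add_norm_sub' v (t⁻¹ • (y - x)), mem_closedBall_iff_norm.1 hv]
  have hslope := (norm_diffQuot_sub_le_norm_slopeGap_add hA (by positivity) ht hm hv₁).trans
    (add_le_add_left (norm_slopeGap_ballMean_le hg.continuous hp ha hap hs hθ hsmall) _)
  have hcurv : Module.finrank ℝ X * K / (σ * t) * (t / m) = Module.finrank ℝ X * K / (σ * m) := by
    field_simp
  rw [hcurv] at hslope
  calc ‖g y - (g x + A (y - x))‖
      ≤ 2 * K * (t * τ) + 2 * (K * (σ * t)) + t * ‖diffQuot (ballMean μ (σ * t) g) v t x - A v‖ :=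
        norm_sub_affine_le hg (norm_ballMean_sub_le hg hs) hAK ht (mem_closedBall_comm.1 hv)
    _ ≤ 2 * K * (t * τ) + 2 * (K * (σ * t)) +
          t * (θ / a + Module.finrank ℝ X * K / (σ * m)) := by gcongr
    _ = t * (2 * K * σ + 2 * K * τ + Module.finrank ℝ X * K / (σ * m) + θ / a) := by ring
    _ ≤ ε * (t / 2) := by linarith [mul_le_mul_of_nonneg_left hε ht.le]

end AffineApproximation

section MacroscopicScale

variable {X Y : Type*} [NormedAddCommGroup X] [NormedSpace ℝ X] [FiniteDimensional ℝ X]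
  [NormedAddCommGroup Y] [NormedSpace ℝ Y] {f : X → Y} {p : Seminorm ℝ Y} {a b c ε : ℝ}
  {m n r N : ℕ}

lemma continuous_of_le_mul_norm (hpb : ∀ y, p y ≤ b * ‖y‖) : Continuous p := by
  refine Seminorm.continuous_of_continuousAt_zero ?_
  have hlim : Tendsto (fun y : Y ↦ b * ‖y‖) (𝓝 0) (𝓝 0) := by
    simpa using (continuous_norm (E := Y)).const_mul b |>.tendsto 0
  simpa [ContinuousAt] using squeeze_zero (fun y ↦ apply_nonneg p y) hpb hlim

lemma measureReal_closedBall_div [MeasurableSpace X] [BorelSpace X] (μ : Measure X)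
    [μ.IsAddHaarMeasure] {s t : ℝ} (hs : 0 ≤ s) (ht : 0 ≤ t) :
    μ.real (closedBall 0 s) / μ.real (closedBall 0 t) = (s / t) ^ Module.finrank ℝ X := by
  have hball : 0 < μ.real (closedBall (0 : X) 1) := measureReal_closedBall_pos 0 one_pos
  rw [Measure.addHaar_real_closedBall' μ 0 hs, Measure.addHaar_real_closedBall' μ 0 ht,
    mul_div_mul_right _ _ hball.ne', div_pow]

/-- The base point is selected in a ball of radius `1 / 16` and the direction in one of radius
`ε / 32`, which together cost the volume ratio `(128 / ε) ^ finrank ℝ X`. -/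
lemma mul_energy_div_volume_le_sq [MeasurableSpace X] [BorelSpace X] (μ : Measure X)
    [μ.IsAddHaarMeasure] (hε : 0 < ε)
    (hr : 2 ^ 10 * b ^ 2 * m * (128 / ε) ^ Module.finrank ℝ X ≤ a ^ 2 * ε ^ 2 * 4 ^ r) :
    m * ((2 * (b * 2)) ^ 2 *
        (μ.real (closedBall 0 1) * μ.real (closedBall 0 (1 / 8 + 1 / 8))) / 4 ^ r) /
      (μ.real (closedBall 0 (1 / 16)) * μ.real (closedBall 0 (ε / 32))) ≤ (a * ε / 8) ^ 2 := by
  have hvol : (μ.real (closedBall 0 1) * μ.real (closedBall 0 (1 / 8 + 1 / 8))) /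
      (μ.real (closedBall 0 (1 / 16)) * μ.real (closedBall 0 (ε / 32))) =
        (128 / ε) ^ Module.finrank ℝ X := by
    rw [mul_comm (μ.real (closedBall 0 (1 / 16))), mul_div_mul_comm,
      measureReal_closedBall_div μ zero_le_one (by positivity),
      measureReal_closedBall_div μ (by norm_num) (by norm_num), ← mul_pow]
    congr 1
    field_simp
    norm_num
  calc _ = 16 * b ^ 2 * m * (128 / ε) ^ Module.finrank ℝ X / 4 ^ r := by
        rw [← hvol]
        ring
    _ ≤ (a * ε / 8) ^ 2 := by
        rw [div_le_iff₀ (by positivity)]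
        linarith

lemma approximation_error_le (ha : 0 < a) (hε : 0 < ε) (hm : 0 < m)
    (hn : 512 * n ≤ ε ^ 2 * m) :
    2 * 2 * (ε / 32) + 2 * 2 * (ε / 32) + n * 2 / (ε / 32 * m) + a * ε / 8 / a ≤ ε / 2 := by
  have hcurv : n * 2 / (ε / 32 * m) ≤ ε / 8 := by
    rw [div_le_iff₀ (by positivity)]
    linarith
  have hslope : a * ε / 8 / a = ε / 8 := by field_simp
  linarith

lemma exists_lt_pow_exists_affineMap_norm_sub_le [CompleteSpace Y]
    (hf : LipschitzOnWith 1 f (closedBall 0 1)) (hpc : IsAlmostTwoConvex p c) (hc : 0 < c)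
    (ha : 0 < a) (hap : ∀ y, a * ‖y‖ ≤ p y) (hb : 0 ≤ b)
    (hpb : ∀ y, p y ≤ b * ‖y‖) (hε : 0 < ε) (hε₁ : ε ≤ 1) (hm : 0 < m) (hN : 8 / c ≤ N)
    (hn : 512 * Module.finrank ℝ X ≤ ε ^ 2 * m)
    (hr : 2 ^ 10 * b ^ 2 * m * (128 / ε) ^ Module.finrank ℝ X ≤ a ^ 2 * ε ^ 2 * 4 ^ r) :
    ∃ k < N ^ r, ∃ x : X, closedBall x (1 / (16 * m ^ k)) ⊆ closedBall (0 : X) 1 ∧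
      ∃ Λ : X →ᵃ[ℝ] Y, ∀ y ∈ closedBall x (1 / (16 * m ^ k)),
        ‖f y - Λ y‖ ≤ ε * (1 / (16 * m ^ k)) := by
  borelize X
  let μ : Measure X := Measure.addHaar
  obtain ⟨g, hg, hfg⟩ := exists_lipschitzWith_eqOn_closedBall hf
  rw [one_mul] at hg
  have hp : Continuous p := continuous_of_le_mul_norm hpb
  obtain ⟨k, hk, henergy⟩ := exists_setIntegral_sq_slopeGap_le (μ := μ) (t := 1 / 8) hg hp hpc hc
    hb hpb hm (by norm_num) (1 / 8) hN r
  set t : ℝ := 1 / 8 / (m : ℝ) ^ k with ht_def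
  have ht : 0 < t := by positivity
  have ht₁ : t ≤ 1 / 8 := div_le_self (by norm_num) (one_le_pow₀ (Nat.one_le_cast.2 hm))
  obtain ⟨x, hx, hgap⟩ := exists_forall_exists_ballMean_le (ρ := 1 / 16) (s := ε / 32 * t)
    (τ := ε / 32) (continuous_sq_slopeGap hp hg.continuous m t) (fun _ _ ↦ sq_nonneg _)
    (by norm_num) (by positivity) (by nlinarith) (by positivity) henergy
  obtain ⟨A, hA⟩ := exists_continuousLinearMap_of_slopeGap (θ := a * ε / 8) hg hp ha hap hm ht
    (by positivity) (by linarith) (by positivity)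
    (fun v₀ hv₀ ↦ (hgap v₀ hv₀).imp fun v hv ↦
      hv.imp_right (le_trans · (mul_energy_div_volume_le_sq μ hε hr)))
    (approximation_error_le ha hε hm hn)
  have hsub : closedBall x (t / 2) ⊆ closedBall 0 1 :=
    closedBall_subset_closedBall' (by linarith [mem_closedBall.1 hx])
  have hradius : 1 / (16 * (m : ℝ) ^ k) = t / 2 := by
    rw [ht_def]
    ring
  refine ⟨k, hk, x, ?_⟩
  rw [hradius]
  refine ⟨hsub, AffineMap.const ℝ X (g x - A x) + A.toLinearMap.toAffineMap, fun y hy ↦ ?_⟩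
  have hΛ : (AffineMap.const ℝ X (g x - A x) + A.toLinearMap.toAffineMap) y =
      g x + A (y - x) := by
    rw [map_sub]
    exact sub_add_eq_add_sub (g x) (A x) (A y) |>.trans (add_sub_assoc _ _ _)
  rw [hfg (hsub hy), hΛ]
  exact hA y hy

end MacroscopicScale

section Exponent

variable {ε : ℝ} {k n L C : ℕ}

lemma two_le_one_div (hε : ε ∈ Ioc (0 : ℝ) (1 / 2)) : 2 ≤ 1 / ε := by
  rw [le_div_iff₀ hε.1]
  linarith [hε.2]

lemma exists_two_pow_mem_Icc (hn : 0 < n) (hε : ε ∈ Ioc (0 : ℝ) (1 / 2)) :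
    ∃ L : ℕ, (2 : ℝ) ^ L ∈ Icc ((1 / ε) ^ n) ((1 / ε) ^ (2 * n)) := by
  have htwo : 2 ≤ (1 / ε) ^ n :=
    (two_le_one_div hε).trans (le_self_pow₀ (one_le_two.trans (two_le_one_div hε)) hn.ne')
  obtain ⟨e, hle, hlt⟩ := exists_nat_pow_near (one_le_two.trans htwo) one_lt_two
  refine ⟨e + 1, hlt.le, ?_⟩
  rw [pow_succ, two_mul, pow_add]
  gcongr

lemma le_of_one_div_pow_le_two_pow (hε : ε ∈ Ioc (0 : ℝ) (1 / 2)) (hL : (1 / ε) ^ n ≤ 2 ^ L) :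
    n ≤ L :=
  (pow_le_pow_iff_right₀ (one_lt_two (α := ℝ))).1 <|
    (pow_le_pow_left₀ zero_le_two (two_le_one_div hε) n).trans hL

lemma one_le_mul_two_pow (hn : 0 < n) (hε : ε ∈ Ioc (0 : ℝ) (1 / 2))
    (hL : (1 / ε) ^ n ≤ 2 ^ L) : 1 ≤ ε * 2 ^ L :=
  (div_le_iff₀' hε.1).1 <|
    (le_self_pow₀ (one_le_two.trans (two_le_one_div hε)) hn.ne').trans hL

lemma mul_natCast_le_sq_mul_two_pow (hn : 0 < n) (hε : ε ∈ Ioc (0 : ℝ) (1 / 2))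
    (hL : (1 / ε) ^ n ≤ 2 ^ L) : 512 * n ≤ ε ^ 2 * ((2 ^ (12 * L) : ℕ) : ℝ) := by
  have hnL : n ≤ L := le_of_one_div_pow_le_two_pow hε hL
  have htwo : (2 : ℝ) ≤ 2 ^ L := le_self_pow₀ one_le_two (hn.trans_le hnL).ne'
  have hdim : (n : ℝ) ≤ 2 ^ L := mod_cast hnL.trans Nat.lt_two_pow_self.le
  calc (512 : ℝ) * n = 2 ^ 9 * n * 1 ^ 2 := by norm_num
    _ ≤ (2 ^ L) ^ 9 * 2 ^ L * (ε * 2 ^ L) ^ 2 := by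
        gcongr
        exact one_le_mul_two_pow hn hε hL
    _ = ε ^ 2 * ((2 ^ (12 * L) : ℕ) : ℝ) := by
        push_cast
        ring

lemma sq_mul_div_pow_le_sq_mul_four_pow {a b : ℝ} (hn : 0 < n) (hε : ε ∈ Ioc (0 : ℝ) (1 / 2))
    (hL : (1 / ε) ^ n ≤ 2 ^ L) (hC : 2 ^ 10 * b ^ 2 ≤ a ^ 2 * 2 ^ C) :
    2 ^ 10 * b ^ 2 * ((2 ^ (12 * L) : ℕ) : ℝ) * (128 / ε) ^ n ≤
      a ^ 2 * ε ^ 2 * 4 ^ ((22 + C) * L) := by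
  have hε₀ : 0 < ε := hε.1
  have hnL : n ≤ L := le_of_one_div_pow_le_two_pow hε hL
  have hC' : 2 ^ 10 * b ^ 2 ≤ a ^ 2 * (2 ^ L) ^ C :=
    hC.trans (by gcongr; exact le_self_pow₀ one_le_two (hn.trans_le hnL).ne')
  calc 2 ^ 10 * b ^ 2 * ((2 ^ (12 * L) : ℕ) : ℝ) * (128 / ε) ^ n
      = 2 ^ 10 * b ^ 2 * (2 ^ L) ^ 12 * ((2 ^ n) ^ 7 * (1 / ε) ^ n) * 1 ^ 2 := by
        rw [← pow_mul 2 n 7, mul_comm n, pow_mul 2 7 n, ← mul_pow]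
        push_cast
        ring
    _ ≤ a ^ 2 * (2 ^ L) ^ C * (2 ^ L) ^ 12 * ((2 ^ L) ^ 7 * 2 ^ L) * (ε * 2 ^ L) ^ 2 := by
        gcongr ?_ * _ * (?_ ^ 7 * ?_) * ?_ ^ 2
        · exact pow_le_pow_right₀ one_le_two hnL
        · exact one_le_mul_two_pow hn hε hL
    _ = a ^ 2 * ε ^ 2 * 2 ^ ((22 + C) * L) := by
        ring
    _ ≤ a ^ 2 * ε ^ 2 * 4 ^ ((22 + C) * L) := by
        gcongr
        norm_num

lemma sixteen_mul_pow_le_exp (hL₀ : 0 < L) :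
    16 * ((2 ^ (12 * L) : ℕ) : ℝ) ^ k ≤ Real.exp ((12 * L * (k + 1) : ℕ) : ℝ) := calc
  16 * ((2 ^ (12 * L) : ℕ) : ℝ) ^ k = 2 ^ (4 + 12 * L * k) := by
    push_cast
    rw [← pow_mul, pow_add]
    norm_num
  _ ≤ 2 ^ (12 * L * (k + 1)) := pow_le_pow_right₀ one_le_two (by nlinarith)
  _ ≤ Real.exp 1 ^ (12 * L * (k + 1)) := by
    gcongr
    linarith [Real.add_one_le_exp 1]
  _ = Real.exp ((12 * L * (k + 1) : ℕ) : ℝ) := by rw [← Real.exp_nat_mul, mul_one]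

lemma exp_le_one_div_sixteen_mul_pow {H : ℕ} (hL₀ : 0 < L) (hL : 2 ^ L ≤ (1 / ε) ^ (2 * n))
    (hk : k < (2 ^ H) ^ ((22 + C) * L)) :
    Real.exp (-1 / ε ^ (((2 * (12 + H * (22 + C)) : ℕ) : ℝ) * n)) ≤
      1 / (16 * ((2 ^ (12 * L) : ℕ) : ℝ) ^ k) := by
  have hsteps : 12 * L * (k + 1) ≤ (2 ^ L) ^ (12 + H * (22 + C)) := calc
    12 * L * (k + 1) ≤ 2 ^ (12 * L) * (2 ^ H) ^ ((22 + C) * L) :=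
      Nat.mul_le_mul Nat.lt_two_pow_self.le hk
    _ = (2 ^ L) ^ (12 + H * (22 + C)) := by ring
  have hexponent : ((12 * L * (k + 1) : ℕ) : ℝ) ≤
      1 / ε ^ (((2 * (12 + H * (22 + C)) : ℕ) : ℝ) * n) := calc
    ((12 * L * (k + 1) : ℕ) : ℝ) ≤ (2 ^ L) ^ (12 + H * (22 + C)) := mod_cast hsteps
    _ ≤ ((1 / ε) ^ (2 * n)) ^ (12 + H * (22 + C)) := by gcongr
    _ = 1 / ε ^ (((2 * (12 + H * (22 + C)) : ℕ) : ℝ) * n) := by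
      rw [← Nat.cast_mul, Real.rpow_natCast, ← one_div_pow, ← pow_mul]
      ring
  rw [neg_div, Real.exp_neg, one_div (16 * _)]
  gcongr
  exact (sixteen_mul_pow_le_exp hL₀).trans (Real.exp_le_exp.2 hexponent)

end Exponent

lemma exp_mem_uaapSet {X Y : Type*} [NormedAddCommGroup X] [NormedSpace ℝ X]
    [FiniteDimensional ℝ X] [NormedAddCommGroup Y] [NormedSpace ℝ Y] [CompleteSpace Y]
    {p : Seminorm ℝ Y} {a b c ε : ℝ} {n C H : ℕ} (hpc : IsAlmostTwoConvex p c) (hc : 0 < c)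
    (ha : 0 < a) (hap : ∀ y, a * ‖y‖ ≤ p y) (hb : 0 ≤ b) (hpb : ∀ y, p y ≤ b * ‖y‖)
    (hH : 8 / c ≤ 2 ^ H) (hC : 2 ^ 10 * b ^ 2 ≤ a ^ 2 * 2 ^ C) (hn : 0 < n)
    (hX : Module.finrank ℝ X = n) (hε : ε ∈ Ioc (0 : ℝ) (1 / 2)) :
    Real.exp (-1 / ε ^ (((2 * (12 + H * (22 + C)) : ℕ) : ℝ) * n)) ∈ uaapSet X Y ε := by
  have hε₀ : 0 < ε := hε.1
  refine ⟨⟨Real.exp_pos _, ?_⟩, fun f hf ↦ ?_⟩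
  · rw [Real.exp_lt_one_iff]
    exact div_neg_of_neg_of_pos neg_one_lt_zero (by positivity)
  obtain ⟨L, hL, hL'⟩ := exists_two_pow_mem_Icc hn hε
  have hL₀ : 0 < L := hn.trans_le (le_of_one_div_pow_le_two_pow hε hL)
  obtain ⟨k, hk, x, hx⟩ := exists_lt_pow_exists_affineMap_norm_sub_le (m := 2 ^ (12 * L))
    (N := 2 ^ H) (r := (22 + C) * L) hf hpc hc ha hap hb hpb hε₀ (hε.2.trans (by norm_num))
    (by positivity) (mod_cast hH) (hX ▸ mul_natCast_le_sq_mul_two_pow hn hε hL)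
    (hX ▸ sq_mul_div_pow_le_sq_mul_four_pow hn hε hL hC)
  exact ⟨_, exp_le_one_div_sixteen_mul_pow hL₀ hL' hk, x, hx⟩

/-- **Theorem (quantitative differentiation for uniformly convexifiable targets).**
If `Y` admits an equivalent uniformly convex norm, then there is `c = c(Y) > 0` such that
for every `n ∈ ℕ`, every `n`-dimensional normed space `X` and every `ε ∈ (0,1/2]` one has
`r^{X→Y}(ε) ≥ exp(-1/ε^{cn})`. -/
theorem statement0 (Y : Type*) [NormedAddCommGroup Y] [NormedSpace ℝ Y] [CompleteSpace Y]
    (hY : AdmitsEquivUniformlyConvexNorm Y) :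
    ∃ c : ℝ, 0 < c ∧
      ∀ (n : ℕ), 0 < n → ∀ (X : Type) [NormedAddCommGroup X] [NormedSpace ℝ X],
        FiniteDimensional ℝ X → Module.finrank ℝ X = n →
        ∀ ε ∈ Set.Ioc (0 : ℝ) (1 / 2),
          Real.exp (-1 / ε ^ (c * n)) ≤ sSup (uaapSet X Y ε) := by
  obtain ⟨N, hN, ⟨a, b, ha, hb, hab⟩, hconvex⟩ := hY
  obtain ⟨c, hc, hpc⟩ := exists_isAlmostTwoConvex (p := hN.toSeminorm) hconvex
  obtain ⟨H, hH⟩ := pow_unbounded_of_one_lt (8 / c) one_lt_two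
  obtain ⟨C, hC⟩ := pow_unbounded_of_one_lt (2 ^ 10 * b ^ 2 / a ^ 2) one_lt_two
  refine ⟨(2 * (12 + H * (22 + C)) : ℕ), by positivity, fun n hn X _ _ _ hX ε hε ↦ ?_⟩
  exact le_csSup ⟨1, fun r hr ↦ hr.1.2.le⟩ <| exp_mem_uaapSet hpc hc ha (fun y ↦ (hab y).1) hb.le
    (fun y ↦ (hab y).2) hH.le ((div_le_iff₀' (by positivity)).1 hC.le) hn hX hε
end
end

section
/- There exists a universal constant a ∈ (0,1) with the following property. For every q ∈ [2,∞), every n ∈ ℕ, every n-dimensional normed space (X,‖·‖_X), every Banach space (Y,‖·‖_Y) with m_q(Y) < ∞, every Hilbertian norm |·| on X (identifying X with ℝ^n), and every ε ∈ (0,1/2), one has r^{X→Y}(ε) ≥ exp(−(n^{5/4}·√(I_q(X)M(X))·m_q(Y))^q / (aε)^{n+q}). -/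
open MeasureTheory Metric Set ENNReal

noncomputable section

universe u

/-- `m` is an upper bound for the martingale cotype `q` constant `𝔪_q(Y)` of `Y`:
for every martingale `(M_k)` on a probability space, `Σ_k ∫‖M_{k+1}-M_k‖^q ≤ m^q·sup_k ∫‖M_k‖^q`. -/
def MartCotypeBound (q : ℝ) (Y : Type*) [NormedAddCommGroup Y] [NormedSpace ℝ Y]
    [CompleteSpace Y] (m : ℝ) : Prop :=
  ∀ (Ω : Type) [MeasurableSpace Ω] (μ : Measure Ω) [IsProbabilityMeasure μ]
    (ℱ : Filtration ℕ ‹MeasurableSpace Ω›) (M : ℕ → Ω → Y), Martingale M ℱ μ →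
    ∀ B : ℝ≥0∞, (∀ k, ∫⁻ ω, (‖M k ω‖₊ : ℝ≥0∞) ^ q ∂μ ≤ B) →
      ∑' k : ℕ, ∫⁻ ω, (‖M (k + 1) ω - M k ω‖₊ : ℝ≥0∞) ^ q ∂μ ≤ ENNReal.ofReal m ^ q * B

/-- The average of `N` over the Euclidean unit sphere `S^{n-1}` (normalized surface measure):
the quantity `M(X)`. -/
def MX {n : ℕ} (N : EuclideanSpace ℝ (Fin n) → ℝ) : ℝ :=
  ⨍ σ : sphere (0 : EuclideanSpace ℝ (Fin n)) 1, N σ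
    ∂((volume : Measure (EuclideanSpace ℝ (Fin n))).toSphere)

/-- The quantity `I_q(X) = (⨍_{B_X} |x|^q dx)^{1/q}`, where `B_X = {N ≤ 1}` and `|·|`
is the Euclidean norm. -/
def IqX {n : ℕ} (q : ℝ) (N : EuclideanSpace ℝ (Fin n) → ℝ) : ℝ :=
  (⨍ x in {x : EuclideanSpace ℝ (Fin n) | N x ≤ 1}, ‖x‖ ^ q) ^ (1 / q)

/-- The set of admissible radii `r ∈ (0,1)` in the definition of `r^{X→Y}(ε)`, where the
`n`-dimensional normed space `X` is `ℝⁿ` with the norm `N`. -/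
def uaapSetN {n : ℕ} (N : EuclideanSpace ℝ (Fin n) → ℝ) (Y : Type*)
    [NormedAddCommGroup Y] [NormedSpace ℝ Y] (ε : ℝ) : Set ℝ :=
  {r : ℝ | r ∈ Set.Ioo (0 : ℝ) 1 ∧
    ∀ f : EuclideanSpace ℝ (Fin n) → Y,
      (∀ x, N x ≤ 1 → ∀ y, N y ≤ 1 → ‖f x - f y‖ ≤ N (x - y)) →
      ∃ ρ : ℝ, r ≤ ρ ∧ ∃ x : EuclideanSpace ℝ (Fin n),
        {y : EuclideanSpace ℝ (Fin n) | N (y - x) ≤ ρ} ⊆ {y | N y ≤ 1} ∧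
        ∃ Λ : EuclideanSpace ℝ (Fin n) →ᵃ[ℝ] Y,
          ∀ y, N (y - x) ≤ ρ → ‖f y - Λ y‖ ≤ ε * ρ}

/-!
Restricted to a segment, a Lipschitz function `f` has dyadic difference quotients that form a
bounded `Y`-valued martingale, whose increments are rescaled second differences of `f`. Martingale
cotype `q` therefore bounds the sum over all scales `2⁻ᵏ` of the averaged `q`-th powers of these
second differences. On the other hand, the distance of `f` from the affine map whose value and slope
are obtained by averaging `f` and its derivative over the ball twice is controlled by an average of
second differences of `f`. By pigeonhole there are a scale and a ball of that scale on which the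
distance is small in `L_q`, and then uniformly because `f` is Lipschitz. Up to constants,
the number of scales needed is `(n m)^q / ε^(n + q)`, with no factor `I_q(X) M(X)`. Since the
volume of `{N ≤ 1}` bounds both averages from below, `I_q(X) M(X) ≥ 1 / 16`, and this factor can be
inserted.
-/

namespace QuantitativeDifferentiation

section DyadicMartingale

/-- The space of fair coin tosses `ω 0, ω 1, …`; its filtration is `Filtration.piLE`. The dyadic
expansions below read their `i`-th digit, `i ≥ 1`, from `ω i`, so that the `k`-th partial sum is
measurable at time `k`. -/
abbrev coinMeasure : Measure (ℕ → Bool) :=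
  Measure.infinitePi fun _ => ProbabilityTheory.uniformOn univ

/-- The involution of coin-toss space reversing the toss at time `k`. -/
def flipAt (k : ℕ) : (ℕ → Bool) ≃ᵐ (ℕ → Bool) :=
  MeasurableEquiv.ofInvolutive (fun ω i => if i = k then !ω i else ω i)
    (fun ω => by ext i; by_cases h : i = k <;> simp [h])
    (measurable_pi_lambda _ fun i => by
      split_ifs
      · exact (Measurable.of_discrete (f := not)).comp (measurable_pi_apply i)
      · exact measurable_pi_apply i)

lemma flipAt_apply (k : ℕ) (ω : ℕ → Bool) (i : ℕ) :
    flipAt k ω i = if i = k then !ω i else ω i :=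
  rfl

lemma flipAt_apply_self (k : ℕ) (ω : ℕ → Bool) : flipAt k ω k = !ω k := by
  simp [flipAt_apply]

lemma flipAt_apply_of_ne {i k : ℕ} (h : i ≠ k) (ω : ℕ → Bool) : flipAt k ω i = ω i := by
  simp [flipAt_apply, h]

lemma map_not_uniformOn_univ :
    (ProbabilityTheory.uniformOn (univ : Set Bool)).map not = ProbabilityTheory.uniformOn univ := by
  refine Measure.ext_of_singleton fun b => ?_
  have preimage_not : not ⁻¹' {b} = {!b} := by ext c; cases b <;> cases c <;> simp
  rw [Measure.map_apply Measurable.of_discrete (measurableSet_singleton b), preimage_not,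
    ProbabilityTheory.uniformOn_univ, ProbabilityTheory.uniformOn_univ, Measure.count_singleton,
    Measure.count_singleton]

lemma measurePreserving_flipAt (k : ℕ) : MeasurePreserving (flipAt k) coinMeasure coinMeasure := by
  refine ⟨(flipAt k).measurable, ?_⟩
  have flip_eq : (flipAt k : (ℕ → Bool) → ℕ → Bool) =
      fun ω i => (if i = k then not else id) (ω i) := by
    funext ω i
    by_cases h : i = k <;> simp [flipAt_apply, h]
  rw [flip_eq, Measure.infinitePi_map_pi _ fun _ => Measurable.of_discrete]
  congr 1
  funext i
  split_ifs
  · exact map_not_uniformOn_univ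
  · exact Measure.map_id

lemma flipAt_preimage_of_measurableSet_piLE {j k : ℕ} (hjk : j < k) {s : Set (ℕ → Bool)}
    (hs : MeasurableSet[Filtration.piLE j] s) : flipAt k ⁻¹' s = s := by
  obtain ⟨t, -, rfl⟩ := hs
  ext ω
  have restrict_flip : Preorder.restrictLe j (flipAt k ω) = Preorder.restrictLe j ω := by
    funext i
    exact flipAt_apply_of_ne (i.2.trans_lt hjk).ne ω
  rw [mem_preimage, mem_preimage, mem_preimage, restrict_flip]

section

variable {Y : Type*} [NormedAddCommGroup Y] [NormedSpace ℝ Y]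

lemma setIntegral_eq_zero_of_comp_eq_neg {Ω : Type*} [MeasurableSpace Ω] {μ : Measure Ω}
    {φ : Ω ≃ᵐ Ω} (hφ : MeasurePreserving φ μ μ) {s : Set Ω} (hs : φ ⁻¹' s = s) {g : Ω → Y}
    (hg : ∀ ω, g (φ ω) = -g ω) : ∫ ω in s, g ω ∂μ = 0 := by
  have h := hφ.setIntegral_preimage_emb φ.measurableEmbedding g s
  rw [hs] at h
  simp_rw [hg] at h
  have : IsAddTorsionFree Y := .of_isTorsionFree ℝ Y
  rwa [integral_neg, neg_eq_self] at h

lemma martingale_of_sub_flipAt [CompleteSpace Y] {M : ℕ → (ℕ → Bool) → Y}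
    (hM : StronglyAdapted Filtration.piLE M) (hint : ∀ k, Integrable (M k) coinMeasure)
    (hflip : ∀ k ω, M (k + 1) (flipAt (k + 1) ω) - M k (flipAt (k + 1) ω) =
      -(M (k + 1) ω - M k ω)) :
    Martingale M Filtration.piLE coinMeasure := by
  refine martingale_of_setIntegral_eq_succ hM hint fun k s hs => Eq.symm ?_
  rw [← sub_eq_zero, ← integral_sub (hint (k + 1)).integrableOn (hint k).integrableOn]
  exact setIntegral_eq_zero_of_comp_eq_neg (measurePreserving_flipAt (k + 1))
    (flipAt_preimage_of_measurableSet_piLE k.lt_succ_self hs) (hflip k)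

end

/-- The left endpoint of the dyadic interval of length `2⁻ᵏ` of `[0, 1]` selected by the
tosses `ω 1, …, ω k`. -/
def dyadicPoint (k : ℕ) (ω : ℕ → Bool) : ℝ :=
  ∑ i ∈ Finset.range k, if ω (i + 1) then (1 / 2 : ℝ) ^ (i + 1) else 0

lemma dyadicPoint_succ (k : ℕ) (ω : ℕ → Bool) :
    dyadicPoint (k + 1) ω = dyadicPoint k ω + if ω (k + 1) then (1 / 2 : ℝ) ^ (k + 1) else 0 :=
  Finset.sum_range_succ _ k

lemma dyadicPoint_nonneg (k : ℕ) (ω : ℕ → Bool) : 0 ≤ dyadicPoint k ω :=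
  Finset.sum_nonneg fun i _ => by positivity

lemma dyadicPoint_add_le_one (k : ℕ) (ω : ℕ → Bool) : dyadicPoint k ω + (1 / 2) ^ k ≤ 1 := by
  induction k with
  | zero => simp [dyadicPoint]
  | succ k ih =>
    have pos : (0 : ℝ) < (1 / 2) ^ (k + 1) := by positivity
    rw [pow_succ] at pos
    rw [dyadicPoint_succ, pow_succ]
    split_ifs <;> linarith

lemma dyadicPoint_flipAt {j k : ℕ} (hjk : j < k) (ω : ℕ → Bool) :
    dyadicPoint j (flipAt k ω) = dyadicPoint j ω := by
  refine Finset.sum_congr rfl fun i hi => ?_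
  rw [flipAt_apply_of_ne (by have := Finset.mem_range.mp hi; omega)]

lemma measurable_dyadicPoint_piLE (k : ℕ) :
    Measurable[Filtration.piLE (X := fun _ : ℕ => Bool) k] (dyadicPoint k) := by
  have measurable_toss {i : ℕ} (hi : i ≤ k) :
      Measurable[Filtration.piLE (X := fun _ : ℕ => Bool) k] fun ω : ℕ → Bool => ω i :=
    (measurable_pi_apply (⟨i, hi⟩ : Iic k)).comp (comap_measurable (Preorder.restrictLe k))
  refine Finset.measurable_fun_sum _ fun i hi => ?_
  exact (Measurable.of_discrete (f := fun b : Bool => if b then (1 / 2 : ℝ) ^ (i + 1) else 0)).comp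
    (measurable_toss (Finset.mem_range.mp hi))

lemma measurable_dyadicPoint (k : ℕ) : Measurable (dyadicPoint k) :=
  (measurable_dyadicPoint_piLE k).mono (Filtration.piLE.le k) le_rfl

variable {Y : Type*} [NormedAddCommGroup Y] [NormedSpace ℝ Y]

/-- The slope of `F` on the random dyadic interval of length `2⁻ᵏ`: a martingale in `k`. -/
def dyadicSlope (F : ℝ → Y) (k : ℕ) (ω : ℕ → Bool) : Y :=
  (2 : ℝ) ^ k • (F (dyadicPoint k ω + (1 / 2) ^ k) - F (dyadicPoint k ω))

lemma dyadicSlope_succ_sub (F : ℝ → Y) (k : ℕ) (ω : ℕ → Bool) :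
    dyadicSlope F (k + 1) ω - dyadicSlope F k ω = (if ω (k + 1) then (1 : ℝ) else -1) •
      (2 : ℝ) ^ k • (F (dyadicPoint k ω) + F (dyadicPoint k ω + (1 / 2) ^ k) -
        (2 : ℝ) • F (dyadicPoint k ω + (1 / 2) ^ (k + 1))) := by
  have halves : (1 / 2 : ℝ) ^ k = (1 / 2) ^ (k + 1) + (1 / 2) ^ (k + 1) := by ring
  rw [dyadicSlope, dyadicSlope, dyadicPoint_succ]
  split_ifs
  · rw [halves, ← add_assoc]
    module
  · rw [halves, add_zero]
    module

lemma enorm_dyadicSlope_le {K : NNReal} {F : ℝ → Y} (hF : LipschitzWith K F) (k : ℕ)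
    (ω : ℕ → Bool) : ‖dyadicSlope F k ω‖ₑ ≤ K := by
  have slope_le : ‖dyadicSlope F k ω‖ ≤ K := by
    calc ‖dyadicSlope F k ω‖
        ≤ 2 ^ k * (K * ‖dyadicPoint k ω + (1 / 2) ^ k - dyadicPoint k ω‖) := by
          rw [dyadicSlope, norm_smul, Real.norm_of_nonneg (by positivity)]
          gcongr
          exact hF.norm_sub_le _ _
      _ = K := by
          rw [add_sub_cancel_left, Real.norm_of_nonneg (by positivity), mul_left_comm, ← mul_pow]
          norm_num
  exact enorm_le_coe.mpr slope_le

lemma martingale_dyadicSlope [CompleteSpace Y] {K : NNReal} {F : ℝ → Y}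
    (hF : LipschitzWith K F) : Martingale (dyadicSlope F) Filtration.piLE coinMeasure := by
  have adapted : StronglyAdapted Filtration.piLE (dyadicSlope F) := fun k =>
    (hF.continuous.comp (continuous_id.add continuous_const)
      |>.sub hF.continuous |>.const_smul ((2 : ℝ) ^ k)).comp_stronglyMeasurable
      (measurable_dyadicPoint_piLE k).stronglyMeasurable
  refine martingale_of_sub_flipAt adapted (fun k => ?_) fun k ω => ?_
  · refine Integrable.of_bound ((adapted k).mono (Filtration.piLE.le k)).aestronglyMeasurable K
      (Filter.Eventually.of_forall fun ω => ?_)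
    exact enorm_le_coe.mp (enorm_dyadicSlope_le hF k ω)
  · rw [dyadicSlope_succ_sub, dyadicSlope_succ_sub, dyadicPoint_flipAt k.lt_succ_self,
      flipAt_apply_self]
    cases ω (k + 1) <;> simp

lemma tsum_lintegral_dyadic_le [CompleteSpace Y] {q m : ℝ} (hq : 0 ≤ q)
    (hY : MartCotypeBound q Y m)
    {K : NNReal} {F : ℝ → Y} (hF : LipschitzWith K F) :
    ∑' k : ℕ, ∫⁻ ω, ‖(2 : ℝ) ^ k • (F (dyadicPoint k ω) + F (dyadicPoint k ω + (1 / 2) ^ k) -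
      (2 : ℝ) • F (dyadicPoint k ω + (1 / 2) ^ (k + 1)))‖ₑ ^ q ∂coinMeasure
      ≤ (ENNReal.ofReal m * K) ^ q := by
  have slope_bound (k : ℕ) : ∫⁻ ω, ‖dyadicSlope F k ω‖ₑ ^ q ∂coinMeasure ≤ (K : ℝ≥0∞) ^ q :=
    calc ∫⁻ ω, ‖dyadicSlope F k ω‖ₑ ^ q ∂coinMeasure
        ≤ ∫⁻ _, (K : ℝ≥0∞) ^ q ∂coinMeasure := by
          gcongr with ω
          exact enorm_dyadicSlope_le hF k ω
      _ = (K : ℝ≥0∞) ^ q := by simp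
  have cotype := hY _ _ _ _ (martingale_dyadicSlope hF) _ slope_bound
  rw [← ENNReal.mul_rpow_of_nonneg _ _ hq] at cotype
  refine le_trans (le_of_eq ?_) cotype
  congr! 4 with k ω
  rw [dyadicSlope_succ_sub, ← enorm_eq_nnnorm]
  split_ifs <;> simp

lemma one_le_of_martCotypeBound [CompleteSpace Y] [Nontrivial Y] {q m : ℝ} (hq : 0 < q)
    (hY : MartCotypeBound q Y m) : 1 ≤ m := by
  obtain ⟨y, hy⟩ := exists_ne (0 : Y)
  have lipschitz : LipschitzWith ‖y‖₊ fun t : ℝ => |t - 1 / 2| • y := by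
    refine LipschitzWith.of_dist_le_mul fun s t => ?_
    rw [dist_eq_norm, dist_eq_norm, ← sub_smul, norm_smul, mul_comm, coe_nnnorm]
    gcongr
    exact (abs_abs_sub_abs_le_abs_sub _ _).trans_eq (by rw [sub_sub_sub_cancel_right]; rfl)
  have second_diff : |(0 : ℝ) - 1 / 2| • y + |(0 : ℝ) + 1 - 1 / 2| • y -
      (2 : ℝ) • |(0 : ℝ) + 1 / 2 - 1 / 2| • y = y := by
    norm_num [abs_of_pos, ← add_smul]
  have norm_le := (ENNReal.le_tsum 0).trans (tsum_lintegral_dyadic_le hq.le hY lipschitz)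
  simp only [dyadicPoint, Finset.range_zero, Finset.sum_empty, pow_zero, zero_add, pow_one,
    lintegral_const, measure_univ, mul_one, one_smul] at norm_le second_diff
  rw [second_diff, ENNReal.rpow_le_rpow_iff hq] at norm_le
  have one_le : 1 * ‖y‖ₑ ≤ ENNReal.ofReal m * ‖y‖ₑ := by rwa [one_mul]
  rwa [ENNReal.mul_le_mul_iff_left (enorm_ne_zero.mpr hy) enorm_ne_top, ENNReal.one_le_ofReal]
    at one_le

end DyadicMartingale

section SecondDifference

/-- The central second difference of `f` at `x` with increment `w`. -/
def centralSecondDiff {X Y : Type*} [AddCommGroup X] [AddCommGroup Y] [Module ℝ Y] (f : X → Y)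
    (w x : X) : Y :=
  f (x + w) + f (x - w) - (2 : ℝ) • f x

variable {X Y : Type*} [NormedAddCommGroup X] [NormedAddCommGroup Y] [NormedSpace ℝ Y]

lemma continuous_centralSecondDiff {f : X → Y} (hf : Continuous f) :
    Continuous fun p : X × X => centralSecondDiff f p.1 p.2 := by
  unfold centralSecondDiff
  fun_prop

lemma setLIntegral_closedBall_le_comp_add_right [MeasurableSpace X] [BorelSpace X]
    (μ : Measure X) [μ.IsAddRightInvariant] {r s : ℝ} {z : X} (hz : ‖z‖ ≤ s) (g : X → ℝ≥0∞) :
    ∫⁻ x in closedBall 0 r, g x ∂μ ≤ ∫⁻ x in closedBall 0 (r + s), g (x + z) ∂μ := by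
  rw [← (measurePreserving_add_right μ z).setLIntegral_comp_preimage_emb
    (measurableEmbedding_addRight z) g]
  refine lintegral_mono_set fun x hx => ?_
  rw [mem_preimage, mem_closedBall_zero_iff] at hx
  rw [mem_closedBall_zero_iff]
  calc ‖x‖ = ‖x + z - z‖ := by rw [add_sub_cancel_right]
    _ ≤ ‖x + z‖ + ‖z‖ := norm_sub_le _ _
    _ ≤ r + s := by gcongr

variable [NormedSpace ℝ X]

lemma tsum_lintegral_centralSecondDiff_segment_le [CompleteSpace Y] {q m : ℝ} (hq : 0 ≤ q)
    (hY : MartCotypeBound q Y m) {K : NNReal} {f : X → Y} (hf : LipschitzWith K f) (w x : X) :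
    ∑' k : ℕ, ∫⁻ ω, ‖(2 : ℝ) ^ k • centralSecondDiff f ((1 / 2 : ℝ) ^ k • w)
        (x + (dyadicPoint k ω + (1 / 2) ^ (k + 1)) • (2 : ℝ) • w)‖ₑ ^ q ∂coinMeasure
      ≤ (ENNReal.ofReal m * (K * (2 * ‖w‖ₑ))) ^ q := by
  have lipschitz : LipschitzWith (K * (2 * ‖w‖₊)) fun t : ℝ => f (x + t • (2 : ℝ) • w) := by
    refine LipschitzWith.of_dist_le_mul fun s t => (hf.dist_le_mul _ _).trans_eq ?_
    rw [dist_add_left, dist_eq_norm, ← sub_smul, norm_smul, norm_smul, dist_eq_norm]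
    push_cast
    rw [Real.norm_ofNat]
    ring
  refine le_of_eq_of_le ?_ ((tsum_lintegral_dyadic_le hq hY lipschitz).trans_eq ?_)
  · congr! 6 with k ω
    have left_end : x + dyadicPoint k ω • (2 : ℝ) • w =
        x + (dyadicPoint k ω + (1 / 2) ^ (k + 1)) • (2 : ℝ) • w - (1 / 2 : ℝ) ^ k • w := by module
    have right_end : x + (dyadicPoint k ω + (1 / 2) ^ k) • (2 : ℝ) • w =
        x + (dyadicPoint k ω + (1 / 2) ^ (k + 1)) • (2 : ℝ) • w + (1 / 2 : ℝ) ^ k • w := by module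
    rw [left_end, right_end, centralSecondDiff, add_comm (f (_ + _))]
  · push_cast
    rfl

theorem tsum_setLIntegral_centralSecondDiff_le [CompleteSpace Y] [MeasurableSpace X]
    [BorelSpace X] [SecondCountableTopology X] (μ : Measure X) [SFinite μ]
    [μ.IsAddRightInvariant] {q m : ℝ} (hq : 0 ≤ q) (hY : MartCotypeBound q Y m) {K : NNReal}
    {f : X → Y} (hf : LipschitzWith K f) (w : X) (r : ℝ) :
    ∑' k : ℕ, ∫⁻ x in closedBall 0 r,
        ‖(2 : ℝ) ^ k • centralSecondDiff f ((1 / 2 : ℝ) ^ k • w) x‖ₑ ^ q ∂μ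
      ≤ (ENNReal.ofReal m * (K * (2 * ‖w‖ₑ))) ^ q * μ (closedBall 0 (r + 2 * ‖w‖)) := by
  set g : ℕ → X → ℝ≥0∞ := fun k x =>
    ‖(2 : ℝ) ^ k • centralSecondDiff f ((1 / 2 : ℝ) ^ k • w) x‖ₑ ^ q
  set z : ℕ → (ℕ → Bool) → X := fun k ω =>
    (dyadicPoint k ω + (1 / 2) ^ (k + 1)) • (2 : ℝ) • w
  have measurable_g (k : ℕ) : Measurable (g k) :=
    ((continuous_centralSecondDiff hf.continuous).comp (Continuous.prodMk_right _)
      |>.const_smul ((2 : ℝ) ^ k)).enorm.measurable.pow_const q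
  have measurable_comp (k : ℕ) : Measurable fun p : X × (ℕ → Bool) => g k (p.1 + z k p.2) := by
    have measurable_z : Measurable (z k) :=
      ((measurable_dyadicPoint k).add_const _).smul_const _
    exact (measurable_g k).comp (measurable_fst.add (measurable_z.comp measurable_snd))
  have norm_z_le (k : ℕ) (ω : ℕ → Bool) : ‖z k ω‖ ≤ 2 * ‖w‖ := by
    have coeff_le : dyadicPoint k ω + (1 / 2) ^ (k + 1) ≤ 1 := by
      have := dyadicPoint_add_le_one k ω
      have : (1 / 2 : ℝ) ^ (k + 1) ≤ (1 / 2) ^ k :=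
        pow_le_pow_of_le_one (by norm_num) (by norm_num) k.le_succ
      linarith
    have coeff_nonneg := add_nonneg (dyadicPoint_nonneg k ω)
      (by positivity : (0 : ℝ) ≤ (1 / 2) ^ (k + 1))
    calc ‖z k ω‖ = (dyadicPoint k ω + (1 / 2) ^ (k + 1)) * (2 * ‖w‖) := by
          rw [norm_smul, norm_smul, Real.norm_ofNat, Real.norm_of_nonneg coeff_nonneg]
      _ ≤ 1 * (2 * ‖w‖) := by gcongr
      _ = 2 * ‖w‖ := one_mul _
  calc ∑' k, ∫⁻ x in closedBall 0 r, g k x ∂μ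
      = ∑' k, ∫⁻ _, ∫⁻ x in closedBall 0 r, g k x ∂μ ∂coinMeasure := by simp
    _ ≤ ∑' k, ∫⁻ ω, ∫⁻ x in closedBall 0 (r + 2 * ‖w‖), g k (x + z k ω) ∂μ ∂coinMeasure := by
        refine ENNReal.tsum_le_tsum fun k => lintegral_mono fun ω => ?_
        exact setLIntegral_closedBall_le_comp_add_right μ (norm_z_le k ω) (g k)
    _ = ∫⁻ x in closedBall 0 (r + 2 * ‖w‖), ∑' k, ∫⁻ ω, g k (x + z k ω) ∂coinMeasure ∂μ := by
        rw [lintegral_tsum fun k => (measurable_comp k).lintegral_prod_right'.aemeasurable]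
        congr! 2 with k
        exact (lintegral_lintegral_swap (measurable_comp k).aemeasurable).symm
    _ ≤ ∫⁻ _ in closedBall 0 (r + 2 * ‖w‖), (ENNReal.ofReal m * (K * (2 * ‖w‖ₑ))) ^ q ∂μ := by
        gcongr with x
        exact tsum_lintegral_centralSecondDiff_segment_le hq hY hf w x
    _ = _ := setLIntegral_const _ _

lemma tsum_setLIntegral_centralSecondDiff_shift_le [CompleteSpace Y] [MeasurableSpace X]
    [BorelSpace X] [SecondCountableTopology X] (μ : Measure X) [SFinite μ]
    [μ.IsAddRightInvariant] {q m : ℝ} (hq : 0 ≤ q) (hY : MartCotypeBound q Y m) {K : NNReal}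
    {f : X → Y} (hf : LipschitzWith K f) (w v : X) (r : ℝ) :
    ∑' k : ℕ, ∫⁻ x in closedBall 0 r, ‖(2 : ℝ) ^ k •
        centralSecondDiff f ((1 / 2 : ℝ) ^ k • w) (x + (1 / 2 : ℝ) ^ k • v)‖ₑ ^ q ∂μ
      ≤ (ENNReal.ofReal m * (K * (2 * ‖w‖ₑ))) ^ q * μ (closedBall 0 (r + ‖v‖ + 2 * ‖w‖)) := by
  refine (ENNReal.tsum_le_tsum fun k => ?_).trans
    (tsum_setLIntegral_centralSecondDiff_le μ hq hY hf w (r + ‖v‖))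
  have norm_shift_le : ‖-((1 / 2 : ℝ) ^ k • v)‖ ≤ ‖v‖ := by
    rw [norm_neg, norm_smul_of_nonneg (by positivity)]
    exact mul_le_of_le_one_left (norm_nonneg v) (pow_le_one₀ (by norm_num) (by norm_num))
  simpa only [neg_add_cancel_right] using setLIntegral_closedBall_le_comp_add_right μ
    norm_shift_le fun x => ‖(2 : ℝ) ^ k •
      centralSecondDiff f ((1 / 2 : ℝ) ^ k • w) (x + (1 / 2 : ℝ) ^ k • v)‖ₑ ^ q

end SecondDifference

section DoubleAverage

variable {X Y : Type*} [NormedAddCommGroup X] [NormedAddCommGroup Y] [NormedSpace ℝ Y]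

/-- The average of `f` over `x + u + v` with `u`, `v` independent and uniform in the unit ball, the
Haar measure `μ` being normalized by `μ (closedBall 0 1) = 1`. The unit ball of `X × X` is the
product of two unit balls. -/
def doubleAverage [MeasurableSpace X] (μ : Measure X) (f : X → Y) (x : X) : Y :=
  ∫ p in closedBall (0 : X × X) 1, f (x + (p.1 + p.2)) ∂(μ.prod μ)

/-- The difference of the indicators of two opposite translates of the unit ball. Tensor products
of two such kernels represent the mixed second differences of `doubleAverage μ f`. -/
def ballDifference (a u : X) : ℝ :=
  (closedBall a 1).indicator 1 u - (closedBall (-a) 1).indicator 1 u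

lemma norm_doubleAverage_le [MeasurableSpace X] (μ : Measure X) [SFinite μ]
    (hμ : μ (closedBall 0 1) = 1) {g : X → Y} {C : ℝ}
    (hg : ∀ x, ‖g x‖ ≤ C) (x : X) : ‖doubleAverage μ g x‖ ≤ C := by
  have measure_ball : μ.prod μ (closedBall 0 1) = 1 := by
    rw [← Prod.mk_zero_zero, ← closedBall_prod_same, Measure.prod_prod, hμ, one_mul]
  have := norm_setIntegral_le_of_norm_le_const (μ := μ.prod μ) (s := closedBall 0 1)
    (by rw [measure_ball]; exact one_lt_top) fun p _ => hg (x + (p.1 + p.2))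
  rwa [measureReal_def, measure_ball, toReal_one, mul_one] at this

lemma ballDifference_neg (a u : X) : ballDifference a (-u) = -ballDifference a u := by
  have reflect (b : X) : (closedBall b 1).indicator (1 : X → ℝ) (-u) =
      (closedBall (-b) 1).indicator 1 u := by
    simp only [indicator, mem_closedBall, dist_eq_norm, ← norm_neg (-u - b), neg_sub', neg_neg,
      sub_neg_eq_add, Pi.one_apply]
  rw [ballDifference, ballDifference, reflect, reflect, neg_neg, neg_sub]

lemma norm_le_two_of_ballDifference_ne_zero {a u : X} (ha : ‖a‖ ≤ 1)
    (hu : ballDifference a u ≠ 0) : ‖u‖ ≤ 2 := by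
  contrapose! hu
  have notMem {b : X} (hb : ‖b‖ ≤ 1) : u ∉ closedBall b 1 := fun hub => by
    have := norm_le_norm_add_norm_sub' u b
    rw [mem_closedBall, dist_eq_norm] at hub
    linarith
  rw [ballDifference, indicator_of_notMem (notMem ha),
    indicator_of_notMem (notMem (by rwa [norm_neg])), sub_zero]

variable [MeasurableSpace X] [BorelSpace X]

lemma measurable_ballDifference (a : X) : Measurable (ballDifference a) :=
  (measurable_one.indicator measurableSet_closedBall).sub
    (measurable_one.indicator measurableSet_closedBall)

variable [NormedSpace ℝ X] [FiniteDimensional ℝ X]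
  (μ : Measure X) [μ.IsAddHaarMeasure]

lemma doubleAverage_add (f : X → Y) (x a b : X) :
    doubleAverage μ f (x + a + b) =
      ∫ p in closedBall (a, b) 1, f (x + (p.1 + p.2)) ∂(μ.prod μ) := by
  rw [← (measurePreserving_add_right (μ.prod μ) (a, b)).setIntegral_preimage_emb
    (measurableEmbedding_addRight (a, b)), preimage_add_right_closedBall, sub_self, doubleAverage]
  congr! 3 with p
  simp only [Prod.fst_add, Prod.snd_add]
  abel

lemma integral_ballDifference (a : X) : ∫ u, ballDifference a u ∂μ = 0 := by
  have integrable_indicator (b : X) : Integrable ((closedBall b 1).indicator (1 : X → ℝ)) μ :=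
    (integrable_indicator_iff measurableSet_closedBall).mpr
      (integrableOn_const (isCompact_closedBall b 1).measure_lt_top.ne)
  unfold ballDifference
  rw [integral_sub (integrable_indicator a) (integrable_indicator (-a)),
    integral_indicator_one measurableSet_closedBall,
    integral_indicator_one measurableSet_closedBall, measureReal_def, measureReal_def,
    Measure.addHaar_closedBall_center, Measure.addHaar_closedBall_center μ (-a), sub_self]

lemma measure_closedBall_one_diff {a : X} (ha : ‖a‖ ≤ 1) (hμ : μ (closedBall 0 1) = 1) :
    μ (closedBall a 1 \ closedBall 0 (1 - ‖a‖)) ≤ Module.finrank ℝ X * ‖a‖ₑ := by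
  set n := Module.finrank ℝ X
  have radius_nonneg : 0 ≤ 1 - ‖a‖ := sub_nonneg.mpr ha
  have subset : closedBall 0 (1 - ‖a‖) ⊆ closedBall a 1 :=
    closedBall_subset_closedBall' (by rw [dist_zero_left]; linarith)
  have bernoulli : 1 - (1 - ‖a‖) ^ n ≤ n * ‖a‖ := by
    have := one_add_mul_le_pow (a := -‖a‖) (by linarith) n
    rw [← sub_eq_add_neg] at this
    linarith
  rw [measure_sdiff subset measurableSet_closedBall.nullMeasurableSet
    (isCompact_closedBall _ _).measure_lt_top.ne, Measure.addHaar_closedBall_center,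
    Measure.addHaar_closedBall' μ 0 radius_nonneg, hμ, mul_one, ← ENNReal.ofReal_one,
    ← ENNReal.ofReal_sub _ (by positivity)]
  refine (ENNReal.ofReal_le_ofReal bernoulli).trans_eq ?_
  rw [ENNReal.ofReal_mul (by positivity), ENNReal.ofReal_natCast, ofReal_norm]

lemma lintegral_ballDifference_le {a : X} (ha : ‖a‖ ≤ 1) (hμ : μ (closedBall 0 1) = 1) :
    ∫⁻ u, ‖ballDifference a u‖ₑ ∂μ ≤ 2 * (Module.finrank ℝ X * ‖a‖ₑ) := by
  have enorm_eq (u : X) : ‖ballDifference a u‖ₑ =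
      (symmDiff (closedBall a 1) (closedBall (-a) 1)).indicator 1 u := by
    rw [ballDifference, ← apply_indicator_symmDiff (g := fun t : ℝ => ‖t‖ₑ) enorm_neg,
      enorm_indicator_eq_indicator_enorm]
    simp [indicator]
  have subset : symmDiff (closedBall a 1) (closedBall (-a) 1) ⊆
      closedBall a 1 \ closedBall 0 (1 - ‖a‖) ∪ closedBall (-a) 1 \ closedBall 0 (1 - ‖-a‖) := by
    refine union_subset_union (sdiff_subset_sdiff_right ?_) (sdiff_subset_sdiff_right ?_) <;>
      refine closedBall_subset_closedBall' ?_ <;>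
      simp
  simp_rw [enorm_eq]
  rw [lintegral_indicator_one (measurableSet_closedBall.symmDiff measurableSet_closedBall)]
  calc μ (symmDiff (closedBall a 1) (closedBall (-a) 1))
      ≤ μ (closedBall a 1 \ closedBall 0 (1 - ‖a‖)) +
          μ (closedBall (-a) 1 \ closedBall 0 (1 - ‖-a‖)) :=
        (measure_mono subset).trans (measure_union_le _ _)
    _ ≤ Module.finrank ℝ X * ‖a‖ₑ + Module.finrank ℝ X * ‖-a‖ₑ :=
        add_le_add (measure_closedBall_one_diff μ ha hμ)
          (measure_closedBall_one_diff μ (by rwa [norm_neg]) hμ)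
    _ = 2 * (Module.finrank ℝ X * ‖a‖ₑ) := by rw [enorm_neg, two_mul]

lemma mixedDifference_doubleAverage {f : X → Y} (hf : Continuous f) (x a b : X) :
    doubleAverage μ f (x + a + b) - doubleAverage μ f (x + a - b) -
        doubleAverage μ f (x - a + b) + doubleAverage μ f (x - a - b) =
      ∫ p, (ballDifference a p.1 * ballDifference b p.2) • f (x + (p.1 + p.2)) ∂(μ.prod μ) := by
  set g : X × X → Y := fun p => f (x + (p.1 + p.2))
  have integrable_indicator (c : X × X) :
      Integrable ((closedBall c 1).indicator g) (μ.prod μ) :=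
    (integrable_indicator_iff measurableSet_closedBall).mpr
      ((by fun_prop : Continuous g).locallyIntegrable.integrableOn_isCompact
        (isCompact_closedBall c 1))
  have kernel_eq : (fun p => (ballDifference a p.1 * ballDifference b p.2) • g p) =
      (closedBall (a, b) 1).indicator g - (closedBall (a, -b) 1).indicator g -
        (closedBall (-a, b) 1).indicator g + (closedBall (-a, -b) 1).indicator g := by
    funext p
    have indicator_prod (c d : X) : (closedBall (c, d) 1).indicator g p =
        ((closedBall c 1).indicator (1 : X → ℝ) p.1 * (closedBall d 1).indicator 1 p.2) • g p := by
      rw [← closedBall_prod_same, ← indicator_prod_one]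
      by_cases hp : p ∈ closedBall c 1 ×ˢ closedBall d 1 <;> simp [hp]
    simp only [Pi.add_apply, Pi.sub_apply, indicator_prod, ballDifference]
    module
  rw [show (fun p : X × X => (ballDifference a p.1 * ballDifference b p.2) • f (x + (p.1 + p.2))) =
      _ from kernel_eq,
    integral_add' (((integrable_indicator _).sub (integrable_indicator _)).sub
      (integrable_indicator _)) (integrable_indicator _),
    integral_sub' ((integrable_indicator _).sub (integrable_indicator _)) (integrable_indicator _),
    integral_sub' (integrable_indicator _) (integrable_indicator _)]
  have integral_eq (c d : X) : ∫ p, (closedBall (c, d) 1).indicator g p ∂(μ.prod μ) =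
      doubleAverage μ f (x + c + d) := by
    rw [integral_indicator measurableSet_closedBall, doubleAverage_add]
  rw [integral_eq, integral_eq, integral_eq, integral_eq]
  simp only [← sub_eq_add_neg]

end DoubleAverage

section SecondDiffControl

lemma norm_le_one_of_finrank_mul_norm_le_one {X : Type*} [NormedAddCommGroup X] [NormedSpace ℝ X]
    [FiniteDimensional ℝ X] {y : X} (hy : Module.finrank ℝ X * ‖y‖ ≤ 1) : ‖y‖ ≤ 1 := by
  rcases subsingleton_or_nontrivial X with hX | hX
  · simp [Subsingleton.elim y 0]
  · have : (1 : ℝ) ≤ Module.finrank ℝ X := Nat.one_le_cast.mpr Module.finrank_pos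
    nlinarith [norm_nonneg y]

variable {X Y : Type*} [NormedAddCommGroup X] [MeasurableSpace X]
  [NormedAddCommGroup Y] [NormedSpace ℝ Y]

/-- The error at `y` of the affine approximation of `f` at the origin built from the double average
of `f`, with difference quotients of step `1 / J` in place of derivatives. -/
def discreteTaylorRemainder [NormedSpace ℝ X] (μ : Measure X) (J : ℕ) (f : X → Y) (y : X) : Y :=
  f y - doubleAverage μ f 0 -
    (J : ℝ) • (doubleAverage μ f ((1 / J : ℝ) • y) - doubleAverage μ f 0)

/-- The operator `ℓ` is dominated by a measure `ν` of mass at most `c` on pairs (increment, center)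
of second differences. The increments are at most `4`, being sums of two vectors of norm at most
`2`, and the centers stay in the unit ball. -/
def IsSecondDiffControlled (ℓ : (X → Y) → Y) (c : ℝ≥0∞) : Prop :=
  ∃ ν : Measure (X × X), ν univ ≤ c ∧ (∀ᵐ z ∂ν, ‖z.1‖ ≤ 4 ∧ ‖z.2‖ ≤ 1) ∧
    ∀ f : X → Y, Continuous f → ‖ℓ f‖ₑ ≤ ∫⁻ z, ‖centralSecondDiff f z.1 z.2‖ₑ ∂ν

namespace IsSecondDiffControlled

variable {ℓ ℓ' : (X → Y) → Y} {c c' : ℝ≥0∞}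

lemma mono (hℓ : IsSecondDiffControlled ℓ c) (hc : c ≤ c') : IsSecondDiffControlled ℓ c' := by
  obtain ⟨ν, mass, supp, bound⟩ := hℓ
  exact ⟨ν, mass.trans hc, supp, bound⟩

lemma congr (hℓ : IsSecondDiffControlled ℓ c) (h : ∀ f, Continuous f → ℓ' f = ℓ f) :
    IsSecondDiffControlled ℓ' c := by
  obtain ⟨ν, mass, supp, bound⟩ := hℓ
  exact ⟨ν, mass, supp, fun f hf => (h f hf).symm ▸ bound f hf⟩

lemma add (hℓ : IsSecondDiffControlled ℓ c) (hℓ' : IsSecondDiffControlled ℓ' c') :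
    IsSecondDiffControlled (fun f => ℓ f + ℓ' f) (c + c') := by
  obtain ⟨ν, mass, supp, bound⟩ := hℓ
  obtain ⟨ν', mass', supp', bound'⟩ := hℓ'
  refine ⟨ν + ν', add_le_add mass mass', ae_add_measure_iff.mpr ⟨supp, supp'⟩, fun f hf => ?_⟩
  rw [lintegral_add_measure]
  exact (enorm_add_le _ _).trans (add_le_add (bound f hf) (bound' f hf))

lemma const_smul (hℓ : IsSecondDiffControlled ℓ c) (t : ℝ) :
    IsSecondDiffControlled (fun f => t • ℓ f) (‖t‖ₑ * c) := by
  obtain ⟨ν, mass, supp, bound⟩ := hℓ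
  refine ⟨‖t‖ₑ • ν, mul_le_mul_right mass _, Measure.ae_smul_measure supp _, fun f hf => ?_⟩
  rw [lintegral_smul_measure, enorm_smul, smul_eq_mul]
  exact mul_le_mul_right (bound f hf) _

lemma finsetSum {ι : Type*} {s : Finset ι} {ℓ : ι → (X → Y) → Y} {c : ℝ≥0∞}
    (hℓ : ∀ i ∈ s, IsSecondDiffControlled (ℓ i) c) :
    IsSecondDiffControlled (fun f => ∑ i ∈ s, ℓ i f) (s.card * c) := by
  classical
  induction s using Finset.induction_on with
  | empty => exact ⟨0, by simp⟩
  | insert j s hj ih =>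
    simp_rw [Finset.sum_insert hj, Finset.card_insert_of_notMem hj, Nat.cast_succ, add_one_mul,
      add_comm _ c]
    exact (hℓ j (Finset.mem_insert_self j s)).add
      (ih fun i hi => hℓ i (Finset.mem_insert_of_mem hi))

end IsSecondDiffControlled

variable [BorelSpace X] [NormedSpace ℝ X] [FiniteDimensional ℝ X]
  (μ : Measure X) [μ.IsAddHaarMeasure]

lemma two_smul_integral_even_kernel {w : X × X → ℝ} (hw : Integrable w (μ.prod μ))
    (even : ∀ p, w (-p) = w p) (supp : ∀ p, w p ≠ 0 → ‖p‖ ≤ 2) {f : X → Y} (hf : Continuous f)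
    (x : X) :
    (2 : ℝ) • (∫ p, w p • f (x + (p.1 + p.2)) ∂(μ.prod μ) - ∫ p, w p • f x ∂(μ.prod μ)) =
      ∫ p, w p • centralSecondDiff f (p.1 + p.2) x ∂(μ.prod μ) := by
  have integrable {g : X × X → Y} (hg : Continuous g) :
      Integrable (fun p => w p • g p) (μ.prod μ) := by
    rw [← integrableOn_iff_integrable_of_support_subset (s := closedBall 0 2)
      fun p hp => mem_closedBall_zero_iff.mpr (supp p (left_ne_zero_of_smul hp))]
    exact hw.integrableOn.smul_continuousOn hg.continuousOn (isCompact_closedBall 0 2)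
  have : (μ.prod μ).IsNegInvariant := Measure.IsAddHaarMeasure.isNegInvariant_of_regular _
  have reflect : ∫ p, w p • f (x - (p.1 + p.2)) ∂(μ.prod μ) =
      ∫ p, w p • f (x + (p.1 + p.2)) ∂(μ.prod μ) := by
    rw [← integral_neg_eq_self]
    congr! 3 with p
    · exact even p
    · rw [Prod.fst_neg, Prod.snd_neg, ← neg_add, sub_neg_eq_add]
  simp only [centralSecondDiff, smul_sub, smul_add, smul_comm _ (2 : ℝ)]
  rw [integral_sub ((integrable (by fun_prop)).fun_add (integrable (by fun_prop)))
      ((integrable (by fun_prop)).fun_smul (2 : ℝ)),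
    integral_add (integrable (by fun_prop)) (integrable (by fun_prop)), reflect, integral_smul,
    two_smul ℝ (∫ p, w p • f (x + (p.1 + p.2)) ∂(μ.prod μ))]

lemma isSecondDiffControlled_of_even_kernel {w : X × X → ℝ} (hw : Measurable w)
    (hint : Integrable w (μ.prod μ)) (even : ∀ p, w (-p) = w p) (supp : ∀ p, w p ≠ 0 → ‖p‖ ≤ 2)
    {x : X} (hx : ‖x‖ ≤ 1) :
    IsSecondDiffControlled
      (fun f : X → Y => (2 : ℝ) •
        (∫ p, w p • f (x + (p.1 + p.2)) ∂(μ.prod μ) - ∫ p, w p • f x ∂(μ.prod μ)))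
      (∫⁻ p, ‖w p‖ₑ ∂(μ.prod μ)) := by
  have measurable_pair : Measurable fun p : X × X => (p.1 + p.2, x) := by fun_prop
  refine ⟨((μ.prod μ).withDensity fun p => ‖w p‖ₑ).map fun p => (p.1 + p.2, x), ?_, ?_, ?_⟩
  · rw [Measure.map_apply measurable_pair MeasurableSet.univ, preimage_univ,
      withDensity_apply _ MeasurableSet.univ, Measure.restrict_univ]
  · have measurableSet_supp : MeasurableSet {z : X × X | ‖z.1‖ ≤ 4 ∧ ‖z.2‖ ≤ 1} := by measurability
    rw [ae_map_iff measurable_pair.aemeasurable measurableSet_supp,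
      ae_withDensity_iff hw.enorm]
    refine Filter.Eventually.of_forall fun p hp => ⟨?_, hx⟩
    have norm_p_le := supp p (enorm_ne_zero.mp hp)
    calc ‖p.1 + p.2‖ ≤ ‖p‖ + ‖p‖ := norm_add_le_of_le (norm_fst_le p) (norm_snd_le p)
      _ ≤ 4 := by linarith
  · intro f hf
    have continuous_diff := continuous_centralSecondDiff hf
    beta_reduce
    rw [two_smul_integral_even_kernel μ hint even supp hf,
      lintegral_map continuous_diff.enorm.measurable measurable_pair,
      lintegral_withDensity_eq_lintegral_mul _ hw.enorm
        (by exact continuous_diff.enorm.measurable.comp measurable_pair)]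
    refine (enorm_integral_le_lintegral_enorm _).trans_eq ?_
    simp only [enorm_smul, Pi.mul_apply]

lemma isSecondDiffControlled_sub_doubleAverage [CompleteSpace Y] (hμ : μ (closedBall 0 1) = 1)
    {x : X} (hx : ‖x‖ ≤ 1) :
    IsSecondDiffControlled (fun f : X → Y => f x - doubleAverage μ f x) (1 / 2) := by
  have measure_ball : μ.prod μ (closedBall 0 1) = 1 := by
    rw [← Prod.mk_zero_zero, ← closedBall_prod_same, Measure.prod_prod, hμ, one_mul]
  set w : X × X → ℝ := (closedBall 0 1).indicator 1
  have smul_eq (g : X × X → Y) (p : X × X) : w p • g p = (closedBall 0 1).indicator g p := by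
    by_cases hp : p ∈ closedBall (0 : X × X) 1 <;> simp [w, hp]
  have integral_eq (g : X × X → Y) :
      ∫ p, w p • g p ∂(μ.prod μ) = ∫ p in closedBall 0 1, g p ∂(μ.prod μ) := by
    simp_rw [smul_eq]
    exact integral_indicator measurableSet_closedBall
  have controlled := isSecondDiffControlled_of_even_kernel (Y := Y) μ (w := w)
    (measurable_one.indicator measurableSet_closedBall)
    ((integrable_indicator_iff measurableSet_closedBall).mpr
      (integrableOn_const (isCompact_closedBall _ _).measure_lt_top.ne))
    (fun p => by simp [w, indicator])
    (fun p hp => (mem_closedBall_zero_iff.mp (mem_of_indicator_ne_zero hp)).trans one_le_two) hx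
  have mass : ∫⁻ p, ‖w p‖ₑ ∂(μ.prod μ) = 1 := by
    simp_rw [w, enorm_indicator_eq_indicator_enorm]
    rw [lintegral_indicator measurableSet_closedBall]
    simp [measure_ball]
  rw [mass] at controlled
  convert (controlled.const_smul (-(1 / 2))).congr fun f _ => ?_ using 1
  · simp [enorm]
  · rw [integral_eq, integral_eq, ← doubleAverage, setIntegral_const, measureReal_def, measure_ball]
    simp only [toReal_one]
    module

lemma isSecondDiffControlled_mixedDifference [CompleteSpace Y] (hμ : μ (closedBall 0 1) = 1)
    {x a b : X} (hx : ‖x‖ ≤ 1) (ha : ‖a‖ ≤ 1) (hb : ‖b‖ ≤ 1) :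
    IsSecondDiffControlled
      (fun f : X → Y => doubleAverage μ f (x + a + b) - doubleAverage μ f (x + a - b) -
        doubleAverage μ f (x - a + b) + doubleAverage μ f (x - a - b))
      (2 * (Module.finrank ℝ X * ‖a‖ₑ * (Module.finrank ℝ X * ‖b‖ₑ))) := by
  set w : X × X → ℝ := fun p => ballDifference a p.1 * ballDifference b p.2
  have measurable_w : Measurable w :=
    ((measurable_ballDifference a).comp measurable_fst).mul
      ((measurable_ballDifference b).comp measurable_snd)
  have mass : ∫⁻ p, ‖w p‖ₑ ∂(μ.prod μ) ≤
      2 * (Module.finrank ℝ X * ‖a‖ₑ) * (2 * (Module.finrank ℝ X * ‖b‖ₑ)) := by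
    simp_rw [w, enorm_mul]
    rw [lintegral_prod_mul (measurable_ballDifference a).enorm.aemeasurable
      (measurable_ballDifference b).enorm.aemeasurable]
    exact mul_le_mul' (lintegral_ballDifference_le μ ha hμ) (lintegral_ballDifference_le μ hb hμ)
  have integrable_w : Integrable w (μ.prod μ) :=
    ⟨measurable_w.aestronglyMeasurable, mass.trans_lt (by finiteness)⟩
  have controlled := isSecondDiffControlled_of_even_kernel (Y := Y) μ measurable_w integrable_w
    (fun p => by simp only [w, Prod.fst_neg, Prod.snd_neg, ballDifference_neg, neg_mul_neg])
    (fun p hp => max_le (norm_le_two_of_ballDifference_ne_zero ha (left_ne_zero_of_mul hp))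
      (norm_le_two_of_ballDifference_ne_zero hb (right_ne_zero_of_mul hp))) hx
  have integral_w : ∫ p, w p ∂(μ.prod μ) = 0 := by
    rw [integral_prod_mul, integral_ballDifference, zero_mul]
  have mass_eq (s t : ℝ≥0∞) : ‖(1 / 2 : ℝ)‖ₑ * (2 * s * (2 * t)) = 2 * (s * t) := by
    have half : ‖(1 / 2 : ℝ)‖ₑ * 2 = 1 := by
      simp [enorm, ENNReal.inv_mul_cancel]
    calc ‖(1 / 2 : ℝ)‖ₑ * (2 * s * (2 * t)) = ‖(1 / 2 : ℝ)‖ₑ * 2 * (2 * (s * t)) := by ring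
      _ = 2 * (s * t) := by rw [half, one_mul]
  rw [← mass_eq]
  refine ((controlled.mono mass).const_smul (1 / 2)).congr fun f hf => ?_
  rw [mixedDifference_doubleAverage μ hf, integral_smul_const, integral_w, zero_smul, sub_zero,
    smul_smul, one_div_mul_cancel two_ne_zero, one_smul]

lemma isSecondDiffControlled_doubleAverage_add [CompleteSpace Y] (hμ : μ (closedBall 0 1) = 1)
    {u v : X} (hu : ‖u‖ ≤ 1) (hv : ‖v‖ ≤ 1) :
    IsSecondDiffControlled
      (fun f : X → Y => doubleAverage μ f (u + v) - doubleAverage μ f u - doubleAverage μ f v +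
        doubleAverage μ f 0)
      (Module.finrank ℝ X * ‖u‖ₑ * (Module.finrank ℝ X * ‖v‖ₑ) / 2) := by
  have norm_half_le {z : X} (hz : ‖z‖ ≤ 1) : ‖(1 / 2 : ℝ) • z‖ ≤ 1 / 2 := by
    rw [norm_smul_of_nonneg (by norm_num)]
    linarith
  have enorm_half (z : X) : ‖(1 / 2 : ℝ) • z‖ₑ = ‖z‖ₑ / 2 := by
    rw [enorm_smul, ENNReal.div_eq_inv_mul]
    simp [enorm]
  have mass (n s t : ℝ≥0∞) : 2 * (n * (s / 2) * (n * (t / 2))) = n * s * (n * t) / 2 := by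
    simp only [ENNReal.div_eq_inv_mul]
    calc 2 * (n * (2⁻¹ * s) * (n * (2⁻¹ * t))) = 2 * 2⁻¹ * (2⁻¹ * (n * s * (n * t))) := by ring
      _ = 2⁻¹ * (n * s * (n * t)) := by
        rw [ENNReal.mul_inv_cancel two_ne_zero ofNat_ne_top, one_mul]
  have controlled := isSecondDiffControlled_mixedDifference (Y := Y) μ hμ
    ((norm_add_le_of_le (norm_half_le hu) (norm_half_le hv)).trans_eq (add_halves 1))
    ((norm_half_le hu).trans (by norm_num)) ((norm_half_le hv).trans (by norm_num))
  rw [enorm_half, enorm_half, mass] at controlled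
  refine controlled.congr fun f _ => ?_
  congr! 4 <;> module

lemma isSecondDiffControlled_discreteTaylorRemainder [CompleteSpace Y]
    (hμ : μ (closedBall 0 1) = 1) {y : X} (hy : Module.finrank ℝ X * ‖y‖ ≤ 1) {J : ℕ} (hJ : J ≠ 0) :
    IsSecondDiffControlled (fun f : X → Y => discreteTaylorRemainder μ J f y) 1 := by
  set n := Module.finrank ℝ X
  have J_pos : (0 : ℝ) < J := Nat.cast_pos.mpr hJ.bot_lt
  have norm_le_one := norm_le_one_of_finrank_mul_norm_le_one hy
  have norm_smul_le {t : ℝ} (ht : t ∈ Icc 0 1) : ‖t • y‖ ≤ 1 := by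
    rw [norm_smul_of_nonneg ht.1]
    exact mul_le_one₀ ht.2 (norm_nonneg y) norm_le_one
  have enorm_smul_le {t : ℝ} (ht : t ∈ Icc 0 1) : n * ‖t • y‖ₑ ≤ ENNReal.ofReal t := by
    rw [enorm_smul, ← ofReal_norm, ← ofReal_norm, Real.norm_of_nonneg ht.1,
      ← ENNReal.ofReal_natCast, ← ENNReal.ofReal_mul ht.1, ← ENNReal.ofReal_mul n.cast_nonneg]
    exact ENNReal.ofReal_le_ofReal (by nlinarith [ht.1])
  have one_div_mem : (1 / J : ℝ) ∈ Icc 0 1 :=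
    ⟨by positivity, div_le_one_of_le₀ (Nat.one_le_cast.mpr hJ.bot_lt) J_pos.le⟩
  have step_controlled (i : ℕ) (hi : i ∈ Finset.range J) : IsSecondDiffControlled
      (fun f : X → Y => doubleAverage μ f (((i + 1 : ℕ) / J : ℝ) • y) -
        doubleAverage μ f ((i / J : ℝ) • y) - doubleAverage μ f ((1 / J : ℝ) • y) +
        doubleAverage μ f 0) (ENNReal.ofReal (1 / J) / 2) := by
    have div_mem : (i / J : ℝ) ∈ Icc 0 1 :=
      ⟨by positivity, div_le_one_of_le₀ (Nat.cast_le.mpr (Finset.mem_range.mp hi).le) J_pos.le⟩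
    refine ((isSecondDiffControlled_doubleAverage_add (Y := Y) μ hμ (norm_smul_le div_mem)
      (norm_smul_le one_div_mem)).congr fun f _ => ?_).mono ?_
    · rw [← add_smul, ← add_div, Nat.cast_succ]
    · refine ENNReal.div_le_div_right ((mul_le_mul' ((enorm_smul_le div_mem).trans
        (ENNReal.ofReal_le_one.mpr div_mem.2)) (enorm_smul_le one_div_mem)).trans_eq ?_) 2
      rw [one_mul]
  refine (((IsSecondDiffControlled.finsetSum step_controlled).add
    (isSecondDiffControlled_sub_doubleAverage (Y := Y) μ hμ norm_le_one)).congr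
      fun f _ => ?_).mono ?_
  · simp only [discreteTaylorRemainder, Finset.sum_add_distrib, Finset.sum_sub_distrib,
      Finset.sum_const, Finset.card_range]
    rw [← Finset.sum_sub_distrib,
      Finset.sum_range_sub fun i : ℕ => doubleAverage μ f ((i / J : ℝ) • y)]
    simp only [div_self J_pos.ne', one_smul, Nat.cast_zero, zero_div, zero_smul]
    module
  · rw [Finset.card_range, ← mul_div_assoc, ← ENNReal.ofReal_natCast J,
      ← ENNReal.ofReal_mul J_pos.le, mul_one_div_cancel J_pos.ne', ENNReal.ofReal_one,
      ENNReal.add_halves]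

end SecondDiffControl

section TaylorRemainder

lemma rpow_lintegral_le_lintegral_rpow {α : Type*} [MeasurableSpace α] {ν : Measure α}
    (hν : ν univ ≤ 1) {q : ℝ} (hq : 1 ≤ q) {g : α → ℝ≥0∞} (hg : AEMeasurable g ν) :
    (∫⁻ z, g z ∂ν) ^ q ≤ ∫⁻ z, g z ^ q ∂ν := by
  have q_pos : 0 < q := one_pos.trans_le hq
  have exponent_nonneg : 0 ≤ 1 - q⁻¹ := sub_nonneg.mpr (inv_le_one_of_one_le₀ hq)
  have holder := eLpNorm'_le_eLpNorm'_mul_rpow_measure_univ one_pos hq hg.aestronglyMeasurable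
  simp only [eLpNorm'_eq_lintegral_enorm, enorm_eq_self, ENNReal.rpow_one, div_one,
    one_div] at holder
  rw [← ENNReal.le_rpow_inv_iff q_pos]
  exact holder.trans (mul_le_of_le_one_right' (ENNReal.rpow_le_one hν exponent_nonneg))

variable {X : Type*} [NormedAddCommGroup X] [NormedSpace ℝ X]

lemma centralSecondDiff_comp_add_smul {Y : Type*} [AddCommGroup Y] [Module ℝ Y] (f : X → Y)
    (x : X) (r : ℝ) (w z : X) :
    centralSecondDiff (fun z => f (x + r • z)) w z = centralSecondDiff f (r • w) (x + r • z) := by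
  simp only [centralSecondDiff, smul_add, smul_sub, add_assoc, add_sub_assoc]

lemma lipschitzWith_add_smul (x : X) (r : ℝ) : LipschitzWith ‖r‖₊ fun z => x + r • z :=
  .of_dist_le_mul fun z w => by rw [dist_add_left, dist_smul₀, coe_nnnorm]

lemma fderiv_comp_add_smul {Y : Type*} [NormedAddCommGroup Y] [NormedSpace ℝ Y]
    (f : X → Y) (x : X) (r : ℝ) (z : X) :
    fderiv ℝ (fun z => f (x + r • z)) z = r • fderiv ℝ f (x + r • z) := by
  rw [fderiv_comp_smul (f := fun w => f (x + w)), fderiv_comp_add_left]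

variable {Y : Type*} [NormedAddCommGroup Y] [NormedSpace ℝ Y] [MeasurableSpace X] (μ : Measure X)

/-- The error at `y` of the affine approximation of `g` at the origin built from the value and the
derivative at the origin of the double average of `g`. -/
def taylorRemainder (g : X → Y) (y : X) : Y :=
  g y - doubleAverage μ g 0 - doubleAverage μ (fderiv ℝ g) 0 y

lemma lipschitzWith_taylorRemainder [SFinite μ] (hμ : μ (closedBall 0 1) = 1) {K : NNReal}
    {g : X → Y} (hg : LipschitzWith K g) : LipschitzWith (2 * K) (taylorRemainder μ g) := by
  rw [two_mul]
  have norm_le : ‖doubleAverage μ (fderiv ℝ g) 0‖₊ ≤ K :=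
    norm_doubleAverage_le μ hμ (fun _ => norm_fderiv_le_of_lipschitz ℝ hg) 0
  have := (hg.sub (LipschitzWith.const (doubleAverage μ g 0))).sub
    ((doubleAverage μ (fderiv ℝ g) 0).lipschitz.weaken norm_le)
  rwa [add_zero] at this

lemma lipschitzWith_smul_taylorRemainder_rescaled [SFinite μ] (hμ : μ (closedBall 0 1) = 1)
    {K : NNReal} {f : X → Y} (hf : LipschitzWith K f) (k : ℕ) (x : X) : LipschitzWith (2 * K)
      fun y => (2 : ℝ) ^ k • taylorRemainder μ (fun z => f (x + (1 / 2 : ℝ) ^ k • z)) y := by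
  have lipschitz_remainder := lipschitzWith_taylorRemainder μ hμ
    (hf.comp (lipschitzWith_add_smul x ((1 / 2 : ℝ) ^ k)))
  refine ((lipschitzWith_smul ((2 : ℝ) ^ k)).comp lipschitz_remainder).weaken (le_of_eq ?_)
  have scales : ‖(2 : ℝ) ^ k‖₊ * ‖(1 / 2 : ℝ) ^ k‖₊ = 1 := by
    rw [← nnnorm_mul, ← mul_pow]
    norm_num
  linear_combination 2 * K * scales

variable [BorelSpace X] [FiniteDimensional ℝ X] [μ.IsAddHaarMeasure]

lemma tsum_setLIntegral_centralSecondDiff_shift_le_of_norm_le [CompleteSpace Y] {q m : ℝ}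
    (hq : 0 ≤ q) (hY : MartCotypeBound q Y m) {K : NNReal} {f : X → Y} (hf : LipschitzWith K f)
    {w v : X} (hw : ‖w‖ ≤ 4) (hv : ‖v‖ ≤ 1) (r : ℝ) :
    ∑' k : ℕ, ∫⁻ x in closedBall 0 r, ‖(2 : ℝ) ^ k •
        centralSecondDiff f ((1 / 2 : ℝ) ^ k • w) (x + (1 / 2 : ℝ) ^ k • v)‖ₑ ^ q ∂μ
      ≤ (ENNReal.ofReal m * (K * 8)) ^ q * μ (closedBall 0 (r + 9)) := by
  have two_mul_enorm_le : 2 * ‖w‖ₑ ≤ 8 := by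
    rw [show (8 : ℝ≥0∞) = 2 * ENNReal.ofReal 4 by norm_num, ← ofReal_norm]
    gcongr
  have radius_le : r + ‖v‖ + 2 * ‖w‖ ≤ r + 9 := by linarith
  refine (tsum_setLIntegral_centralSecondDiff_shift_le μ hq hY hf w v r).trans ?_
  gcongr

theorem IsSecondDiffControlled.tsum_setLIntegral_le [CompleteSpace Y] {q m : ℝ} (hq : 1 ≤ q)
    (hY : MartCotypeBound q Y m) {K : NNReal} {f : X → Y} (hf : LipschitzWith K f)
    {ℓ : (X → Y) → Y} (hℓ : IsSecondDiffControlled ℓ 1) (r : ℝ) :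
    ∑' k : ℕ, ∫⁻ x in closedBall 0 r,
        ‖(2 : ℝ) ^ k • ℓ (fun z => f (x + (1 / 2 : ℝ) ^ k • z))‖ₑ ^ q ∂μ
      ≤ (ENNReal.ofReal m * (K * 8)) ^ q * μ (closedBall 0 (r + 9)) := by
  obtain ⟨ν, mass, supp, bound⟩ := hℓ
  have : IsFiniteMeasure ν := ⟨mass.trans_lt one_lt_top⟩
  have continuous_diff {f : X → Y} (hf : Continuous f) := continuous_centralSecondDiff hf
  set g : ℕ → X → X × X → ℝ≥0∞ := fun k x z =>
    ‖(2 : ℝ) ^ k • centralSecondDiff f ((1 / 2 : ℝ) ^ k • z.1) (x + (1 / 2 : ℝ) ^ k • z.2)‖ₑ ^ q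
  have measurable_g (k : ℕ) : Measurable fun p : X × X × X => g k p.1 p.2 :=
    ((continuous_diff hf.continuous).comp (f := fun p : X × X × X =>
      ((1 / 2 : ℝ) ^ k • p.2.1, p.1 + (1 / 2 : ℝ) ^ k • p.2.2)) (by fun_prop)
      |>.const_smul ((2 : ℝ) ^ k)).enorm.measurable.pow_const q
  have pointwise (k : ℕ) (x : X) :
      ‖(2 : ℝ) ^ k • ℓ (fun z => f (x + (1 / 2 : ℝ) ^ k • z))‖ₑ ^ q ≤ ∫⁻ z, g k x z ∂ν := by
    have continuous_comp : Continuous fun z => f (x + (1 / 2 : ℝ) ^ k • z) :=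
      hf.continuous.comp (by fun_prop)
    have measurable_diff := (continuous_diff continuous_comp).enorm.measurable
    simp_rw [g, ← centralSecondDiff_comp_add_smul, enorm_smul]
    refine le_trans ?_ (rpow_lintegral_le_lintegral_rpow mass hq
      (measurable_diff.const_mul _).aemeasurable)
    rw [lintegral_const_mul _ measurable_diff]
    gcongr
    exact bound _ continuous_comp
  calc _ ≤ ∑' k, ∫⁻ x in closedBall 0 r, ∫⁻ z, g k x z ∂ν ∂μ := by
        gcongr with k x
        exact pointwise k x
    _ = ∫⁻ z, ∑' k, ∫⁻ x in closedBall 0 r, g k x z ∂μ ∂ν := by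
        rw [lintegral_tsum fun k => (measurable_g k).lintegral_prod_left'.aemeasurable]
        congr! 2 with k
        exact lintegral_lintegral_swap (measurable_g k).aemeasurable
    _ ≤ ∫⁻ _, (ENNReal.ofReal m * (K * 8)) ^ q * μ (closedBall 0 (r + 9)) ∂ν :=
        lintegral_mono_ae (supp.mono fun z hz =>
          tsum_setLIntegral_centralSecondDiff_shift_le_of_norm_le μ
            (zero_le_one.trans hq) hY hf hz.1 hz.2 r)
    _ ≤ _ := by
        rw [lintegral_const]
        exact mul_le_of_le_one_right' mass

lemma hasFDerivAt_doubleAverage {K : NNReal} {g : X → Y} (hd : ContDiff ℝ 1 g)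
    (hg : LipschitzWith K g) (x : X) :
    HasFDerivAt (doubleAverage μ g) (doubleAverage μ (fderiv ℝ g) x) x := by
  have := hg.continuous
  have := hd.continuous_fderiv one_ne_zero
  have : SecondCountableTopologyEither (X × X) (X →L[ℝ] Y) :=
    secondCountableTopologyEither_of_left _ _
  exact hasFDerivAt_integral_of_dominated_of_fderiv_le
    (F' := fun x (p : X × X) => fderiv ℝ g (x + (p.1 + p.2))) (bound := fun _ => K) Filter.univ_mem
    (.of_forall fun x => Continuous.aestronglyMeasurable (by fun_prop))
    (ContinuousOn.integrableOn_compact (isCompact_closedBall 0 1) (by fun_prop))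
    (Continuous.aestronglyMeasurable (by fun_prop))
    (.of_forall fun p x _ => norm_fderiv_le_of_lipschitz ℝ hg)
    (integrableOn_const (isCompact_closedBall 0 1).measure_lt_top.ne)
    (.of_forall fun p x _ => (hasFDerivAt_comp_add_right _).mpr
      (hd.differentiable one_ne_zero _).hasFDerivAt)

lemma continuous_doubleAverage_rescaled {f : X → Y} (hf : Continuous f) (r : ℝ) :
    Continuous fun p : X × X => doubleAverage μ (fun z => f (p.1 + r • z)) p.2 := by
  have : SecondCountableTopologyEither (X × X) Y := secondCountableTopologyEither_of_left _ _
  refine continuous_parametric_integral_of_continuous ?_ (isCompact_closedBall 0 1)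
  unfold Function.uncurry
  fun_prop

lemma continuous_taylorRemainder_rescaled {f : X → Y} (hd : ContDiff ℝ 1 f) (r : ℝ) :
    Continuous fun p : X × X => taylorRemainder μ (fun z => f (p.1 + r • z)) p.2 := by
  have continuous_average := continuous_doubleAverage_rescaled μ hd.continuous r
  have continuous_slope := continuous_doubleAverage_rescaled μ
    ((hd.continuous_fderiv one_ne_zero).const_smul r) r
  have := hd.continuous
  have continuous_first : Continuous fun p : X × X => f (p.1 + r • p.2) := by fun_prop
  simp_rw [taylorRemainder, funext (fderiv_comp_add_smul f _ r)]
  exact (continuous_first.sub (continuous_average.comp (f := fun p => (p.1, 0)) (by fun_prop))).sub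
    ((continuous_slope.comp (f := fun p => (p.1, 0)) (by fun_prop)).clm_apply continuous_snd)

lemma continuous_discreteTaylorRemainder_rescaled {f : X → Y} (hf : Continuous f) (r : ℝ) (J : ℕ)
    (y : X) : Continuous fun x => discreteTaylorRemainder μ J (fun z => f (x + r • z)) y := by
  have continuous_average (b : X) :
      Continuous fun x => doubleAverage μ (fun z => f (x + r • z)) b :=
    (continuous_doubleAverage_rescaled μ hf r).comp (Continuous.prodMk_left b)
  unfold discreteTaylorRemainder
  fun_prop

lemma tendsto_discreteTaylorRemainder {K : NNReal} {g : X → Y} (hd : ContDiff ℝ 1 g)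
    (hg : LipschitzWith K g) (y : X) :
    Filter.Tendsto (fun J => discreteTaylorRemainder μ J g y) Filter.atTop
      (nhds (taylorRemainder μ g y)) := by
  have := ((hasFDerivAt_doubleAverage μ hd hg 0).lim_real y).comp
    (tendsto_natCast_atTop_atTop (R := ℝ))
  simp only [Function.comp_def, zero_add, ← one_div] at this
  exact this.const_sub _

theorem tsum_setLIntegral_taylorRemainder_le [CompleteSpace Y] (hμ : μ (closedBall 0 1) = 1)
    {q m : ℝ} (hq : 1 ≤ q) (hY : MartCotypeBound q Y m) {K : NNReal} {f : X → Y}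
    (hd : ContDiff ℝ 1 f) (hf : LipschitzWith K f) {y : X} (hy : Module.finrank ℝ X * ‖y‖ ≤ 1)
    (r : ℝ) :
    ∑' k : ℕ, ∫⁻ x in closedBall 0 r,
        ‖(2 : ℝ) ^ k • taylorRemainder μ (fun z => f (x + (1 / 2 : ℝ) ^ k • z)) y‖ₑ ^ q ∂μ
      ≤ (ENNReal.ofReal m * (K * 8)) ^ q * μ (closedBall 0 (r + 9)) := by
  set g : ℕ → X → X → Y := fun k x z => f (x + (1 / 2 : ℝ) ^ k • z)
  have measurable_remainder (k : ℕ) :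
      Measurable fun x => ‖(2 : ℝ) ^ k • taylorRemainder μ (g k x) y‖ₑ ^ q :=
    ((continuous_taylorRemainder_rescaled μ hd _).comp (Continuous.prodMk_left y)
      |>.const_smul ((2 : ℝ) ^ k)).enorm.measurable.pow_const q
  have measurable_discrete (J k : ℕ) :
      Measurable fun x => ‖(2 : ℝ) ^ k • discreteTaylorRemainder μ J (g k x) y‖ₑ ^ q :=
    ((continuous_discreteTaylorRemainder_rescaled μ hf.continuous _ J y).const_smul
      ((2 : ℝ) ^ k)).enorm.measurable.pow_const q
  have tendsto_sum (T : ℕ) (x : X) :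
      Filter.Tendsto (fun J => ∑ k ∈ Finset.range T,
        ‖(2 : ℝ) ^ k • discreteTaylorRemainder μ J (g k x) y‖ₑ ^ q) Filter.atTop
        (nhds (∑ k ∈ Finset.range T, ‖(2 : ℝ) ^ k • taylorRemainder μ (g k x) y‖ₑ ^ q)) := by
    have lipschitz_g (k : ℕ) : LipschitzWith (K * ‖(1 / 2 : ℝ) ^ k‖₊) (g k x) :=
      hf.comp (lipschitzWith_add_smul x _)
    have contDiff_g (k : ℕ) : ContDiff ℝ 1 (g k x) := hd.comp (by fun_prop)
    exact tendsto_finsetSum _ fun k _ => ((ENNReal.continuous_rpow_const.tendsto _).comp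
      (((tendsto_discreteTaylorRemainder μ (contDiff_g k) (lipschitz_g k) y).const_smul
        ((2 : ℝ) ^ k)).enorm))
  refine ENNReal.tsum_le_of_sum_range_le fun T => ?_
  rw [← lintegral_finsetSum _ fun k _ => measurable_remainder k]
  simp_rw [← (tendsto_sum T _).liminf_eq]
  refine (lintegral_liminf_le fun J => Finset.measurable_fun_sum _ fun k _ =>
    measurable_discrete J k).trans (Filter.liminf_le_of_frequently_le'
      ((Filter.eventually_ne_atTop 0).frequently.mono fun J hJ => ?_))
  rw [lintegral_finsetSum _ fun k _ => measurable_discrete J k]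
  exact (ENNReal.sum_le_tsum _).trans ((isSecondDiffControlled_discreteTaylorRemainder μ hμ hy
    hJ).tsum_setLIntegral_le μ hq hY hf r)

end TaylorRemainder

section Pigeonhole

lemma rpow_mul_pow_lt_of_scale_count {n : ℕ} (hn : n ≠ 0) {q m K ε b : ℝ} (hm : 0 ≤ m) (hK : 0 < K)
    (hε : 0 < ε) (hb : b = 1 / (2 * n)) {T : ℝ}
    (hT : (32 * K * n * m / ε) ^ q * (152 * K / ε) ^ n < T) :
    (m * (K * 8)) ^ q * (1 / 2 + 9) ^ n * b ^ n
      < T * ((ε * b / 2) ^ q * (ε * b / (8 * K)) ^ n) * (1 / 2) ^ n := by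
  have : (0 : ℝ) < n := Nat.cast_pos.mpr (Nat.pos_of_ne_zero hn)
  have b_pos : 0 < b := hb ▸ by positivity
  have rpow_part : (m * (K * 8)) ^ q = (32 * K * n * m / ε) ^ q * (ε * b / 2) ^ q := by
    rw [← Real.mul_rpow (by positivity) (by positivity), hb]
    congr 1
    field_simp
    ring
  have pow_part : (1 / 2 + 9) ^ n * b ^ n =
      (152 * K / ε) ^ n * ((ε * b / (8 * K)) ^ n * (1 / 2) ^ n) := by
    rw [← mul_pow, ← mul_pow, ← mul_pow]
    congr 1
    field_simp
    norm_num
  calc (m * (K * 8)) ^ q * (1 / 2 + 9) ^ n * b ^ n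
      = (32 * K * n * m / ε) ^ q * (152 * K / ε) ^ n *
          ((ε * b / 2) ^ q * (ε * b / (8 * K)) ^ n * (1 / 2) ^ n) := by
        rw [mul_assoc, pow_part, rpow_part]
        ring
    _ < T * ((ε * b / 2) ^ q * (ε * b / (8 * K)) ^ n * (1 / 2) ^ n) := by gcongr
    _ = _ := by ring

variable {X Y : Type*} [NormedAddCommGroup X] [NormedSpace ℝ X] [NormedAddCommGroup Y]
  [MeasurableSpace X] [BorelSpace X] (μ : Measure X) [μ.IsAddHaarMeasure]

lemma mul_measure_closedBall_le_setLIntegral_of_lt_norm {L : NNReal} {F : X → Y}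
    (hF : LipschitzWith L F) {η t b : ℝ} (ht : 0 ≤ t) (htb : t ≤ b) (hLt : 4 * L * t ≤ η) {y : X}
    (hy : ‖y‖ ≤ b) (hη : η < ‖F y‖) {q : ℝ} (hq : 0 ≤ q) :
    ENNReal.ofReal (η / 2) ^ q * μ (closedBall 0 t) ≤ ∫⁻ z in closedBall 0 b, ‖F z‖ₑ ^ q ∂μ := by
  obtain ⟨c, dist_zero, dist_y⟩ : ∃ c, dist c 0 ≤ b - t ∧ dist c y ≤ t := by
    refine (exists_dist_le_le (sub_nonneg.mpr htb) ht ?_ : ∃ c, dist 0 c ≤ b - t ∧ dist c y ≤ t).imp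
      fun c hc => ⟨dist_comm c 0 ▸ hc.1, hc.2⟩
    rwa [dist_zero_left, add_sub_cancel]
  have large {z : X} (hz : z ∈ closedBall c t) : η / 2 ≤ ‖F z‖ := by
    have dist_le : dist y z ≤ 2 * t := by
      have := dist_triangle_left y z c
      rw [mem_closedBall'] at hz
      linarith
    have lipschitz_le := hF.dist_le_mul_of_le dist_le
    rw [dist_eq_norm] at lipschitz_le
    have := norm_sub_norm_le (F y) (F z)
    linarith
  calc ENNReal.ofReal (η / 2) ^ q * μ (closedBall 0 t)
      = ∫⁻ _ in closedBall c t, ENNReal.ofReal (η / 2) ^ q ∂μ := by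
        rw [setLIntegral_const, Measure.addHaar_closedBall_center μ c]
    _ ≤ ∫⁻ z in closedBall c t, ‖F z‖ₑ ^ q ∂μ := by
        refine setLIntegral_mono' measurableSet_closedBall fun z hz => ?_
        rw [← ofReal_norm]
        gcongr
        exact large hz
    _ ≤ ∫⁻ z in closedBall 0 b, ‖F z‖ₑ ^ q ∂μ :=
        lintegral_mono_set (closedBall_subset_closedBall' (by linarith))

variable [NormedSpace ℝ Y] [CompleteSpace Y] [FiniteDimensional ℝ X]

lemma exists_setLIntegral_taylorRemainder_lt (hμ : μ (closedBall 0 1) = 1) {q m : ℝ} (hq : 1 ≤ q)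
    (hY : MartCotypeBound q Y m) {K : NNReal} {f : X → Y} (hd : ContDiff ℝ 1 f)
    (hf : LipschitzWith K f) {b : ℝ} (hb : Module.finrank ℝ X * b ≤ 1) {r : ℝ} {T : ℕ} {c : ℝ≥0∞}
    (hc : (ENNReal.ofReal m * (K * 8)) ^ q * μ (closedBall 0 (r + 9)) * μ (closedBall 0 b)
      < T * c * μ (closedBall 0 r)) :
    ∃ k < T, ∃ x ∈ closedBall (0 : X) r, ∫⁻ y in closedBall 0 b,
      ‖(2 : ℝ) ^ k • taylorRemainder μ (fun z => f (x + (1 / 2 : ℝ) ^ k • z)) y‖ₑ ^ q ∂μ < c := by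
  contrapose! hc
  set g : ℕ → X → X → ℝ≥0∞ := fun k x y =>
    ‖(2 : ℝ) ^ k • taylorRemainder μ (fun z => f (x + (1 / 2 : ℝ) ^ k • z)) y‖ₑ ^ q
  have measurable_g (k : ℕ) : Measurable fun p : X × X => g k p.1 p.2 :=
    ((continuous_taylorRemainder_rescaled μ hd _).const_smul
      ((2 : ℝ) ^ k)).enorm.measurable.pow_const q
  calc T * c * μ (closedBall 0 r)
      = ∑ _ ∈ Finset.range T, ∫⁻ _ in closedBall (0 : X) r, c ∂μ := by
        rw [Finset.sum_const, Finset.card_range, setLIntegral_const, nsmul_eq_mul, mul_assoc]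
    _ ≤ ∑ k ∈ Finset.range T, ∫⁻ x in closedBall 0 r, ∫⁻ y in closedBall 0 b, g k x y ∂μ ∂μ :=
        Finset.sum_le_sum fun k hk => setLIntegral_mono' measurableSet_closedBall fun x hx =>
          hc k (Finset.mem_range.mp hk) x hx
    _ ≤ ∑' k, ∫⁻ y in closedBall 0 b, ∫⁻ x in closedBall 0 r, g k x y ∂μ ∂μ := by
        refine (Finset.sum_le_sum fun k _ => ?_).trans (ENNReal.sum_le_tsum _)
        exact (lintegral_lintegral_swap (measurable_g k).aemeasurable).le
    _ = ∫⁻ y in closedBall 0 b, ∑' k, ∫⁻ x in closedBall 0 r, g k x y ∂μ ∂μ :=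
        (lintegral_tsum fun k => (measurable_g k).lintegral_prod_left'.aemeasurable).symm
    _ ≤ ∫⁻ _ in closedBall (0 : X) b,
          (ENNReal.ofReal m * (K * 8)) ^ q * μ (closedBall 0 (r + 9)) ∂μ := by
        refine setLIntegral_mono' measurableSet_closedBall fun y hy => ?_
        rw [mem_closedBall_zero_iff] at hy
        exact tsum_setLIntegral_taylorRemainder_le μ hμ hq hY hd hf (le_trans (by gcongr) hb) r
    _ = _ := setLIntegral_const _ _

lemma measure_closedBall_lt_of_scale_count [Nontrivial X] (hμ : μ (closedBall 0 1) = 1) {q m : ℝ}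
    (hq : 0 ≤ q) (hm : 0 ≤ m) {K : NNReal} (hK : 0 < K) {ε b : ℝ} (hε : 0 < ε)
    (hb : b = 1 / (2 * Module.finrank ℝ X)) {T : ℕ}
    (hT : (32 * K * Module.finrank ℝ X * m / ε) ^ q * (152 * K / ε) ^ Module.finrank ℝ X < T) :
    (ENNReal.ofReal m * (K * 8)) ^ q * μ (closedBall 0 (1 / 2 + 9)) * μ (closedBall 0 b)
      < T * (ENNReal.ofReal (ε * b / 2) ^ q * μ (closedBall 0 (ε * b / (8 * K)))) *
        μ (closedBall 0 (1 / 2)) := by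
  have K_pos : (0 : ℝ) < K := hK
  have b_pos : 0 < b := by
    have : (0 : ℝ) < Module.finrank ℝ X := Nat.cast_pos.mpr Module.finrank_pos
    rw [hb]
    positivity
  have volume {s : ℝ} (hs : 0 ≤ s) :
      μ (closedBall 0 s) = ENNReal.ofReal (s ^ Module.finrank ℝ X) := by
    rw [Measure.addHaar_closedBall' _ _ hs, hμ, mul_one]
  have constant_eq : ENNReal.ofReal m * (K * 8) = ENNReal.ofReal (m * (K * 8)) := by
    rw [ofReal_mul hm, ofReal_mul K_pos.le, ofReal_coe_nnreal, ofReal_ofNat]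
  rw [volume (by norm_num), volume b_pos.le, volume (by positivity), volume (by norm_num),
    constant_eq, ofReal_rpow_of_nonneg (by positivity) hq,
    ofReal_rpow_of_nonneg (by positivity) hq, ← ofReal_natCast,
    ← ofReal_mul (by positivity), ← ofReal_mul (by positivity), ← ofReal_mul (by positivity),
    ← ofReal_mul (by positivity), ← ofReal_mul (by positivity),
    ofReal_lt_ofReal_iff_of_nonneg (by positivity)]
  exact rpow_mul_pow_lt_of_scale_count Module.finrank_pos.ne' hm K_pos hε hb hT

theorem exists_taylorRemainder_le [Nontrivial X] (hμ : μ (closedBall 0 1) = 1) {q m : ℝ}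
    (hq : 1 ≤ q) (hm : 0 ≤ m) (hY : MartCotypeBound q Y m) {K : NNReal} {f : X → Y}
    (hd : ContDiff ℝ 1 f) (hf : LipschitzWith K f) {ε : ℝ} (hε : 0 < ε) (hεK : ε ≤ 8 * K) {T : ℕ}
    (hT : (32 * K * Module.finrank ℝ X * m / ε) ^ q * (152 * K / ε) ^ Module.finrank ℝ X < T) :
    ∃ k < T, ∃ x : X, ‖x‖ ≤ 1 / 2 ∧ ∀ y, ‖y‖ ≤ 1 / (2 * Module.finrank ℝ X) →
      ‖(2 : ℝ) ^ k • taylorRemainder μ (fun z => f (x + (1 / 2 : ℝ) ^ k • z)) y‖ ≤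
        ε * (1 / (2 * Module.finrank ℝ X)) := by
  set n := Module.finrank ℝ X
  have n_pos : (0 : ℝ) < n := Nat.cast_pos.mpr Module.finrank_pos
  have K_pos : (0 : ℝ) < K := by linarith
  have q_nonneg : 0 ≤ q := zero_le_one.trans hq
  set b : ℝ := 1 / (2 * n) with hb
  have b_pos : 0 < b := by positivity
  have n_mul_b : n * b ≤ 1 := by rw [hb]; field_simp; norm_num
  obtain ⟨k, hk, x, hx, small⟩ := exists_setLIntegral_taylorRemainder_lt μ hμ hq hY hd hf
    n_mul_b (measure_closedBall_lt_of_scale_count μ hμ q_nonneg hm K_pos hε hb hT)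
  refine ⟨k, hk, x, mem_closedBall_zero_iff.mp hx, fun y hy => ?_⟩
  contrapose! small
  refine mul_measure_closedBall_le_setLIntegral_of_lt_norm μ
    (lipschitzWith_smul_taylorRemainder_rescaled μ hμ hf k x) (by positivity) ?_ ?_ hy small
    q_nonneg
  · rw [div_le_iff₀ (by positivity), mul_comm]
    gcongr
  · field_simp
    exact le_of_eq (by push_cast; ring)

end Pigeonhole

section Reduction

variable {X Y : Type*} [NormedAddCommGroup X] [NormedSpace ℝ X] [NormedAddCommGroup Y]

/-- The retraction of `X` onto its closed unit ball along rays, through which a function on the ball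
is extended to `X`. -/
def radialRetraction (x : X) : X := (max 1 ‖x‖)⁻¹ • x

lemma radialRetraction_of_norm_le_one {x : X} (hx : ‖x‖ ≤ 1) : radialRetraction x = x := by
  rw [radialRetraction, max_eq_left hx, inv_one, one_smul]

lemma norm_radialRetraction_le_one (x : X) : ‖radialRetraction x‖ ≤ 1 := by
  rw [radialRetraction, norm_smul, norm_inv, Real.norm_of_nonneg (by positivity),
    inv_mul_le_one₀ (by positivity)]
  exact le_max_right _ _

lemma lipschitzWith_radialRetraction : LipschitzWith 2 (radialRetraction : X → X) := by
  refine .of_dist_le_mul fun x y => ?_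
  set a := max 1 ‖x‖
  set b := max 1 ‖y‖
  have one_le_a : 1 ≤ a := le_max_left _ _
  have b_pos : 0 < b := by positivity
  have abs_sub_le : |b - a| ≤ ‖x - y‖ := by
    rw [abs_sub_comm]
    exact (abs_max_sub_max_le_max 1 ‖x‖ 1 ‖y‖).trans (by simpa using abs_norm_sub_norm_le x y)
  have decomposition :
      radialRetraction x - radialRetraction y = a⁻¹ • (x - y + (b - a) • radialRetraction y) := by
    have split : (b - a) • radialRetraction y = y - a • radialRetraction y := by
      rw [sub_smul, radialRetraction, smul_inv_smul₀ b_pos.ne']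
    rw [split, sub_add_sub_cancel, smul_sub, inv_smul_smul₀ (by positivity)]
    rfl
  rw [dist_eq_norm, dist_eq_norm, decomposition, norm_smul, norm_inv,
    Real.norm_of_nonneg (by positivity)]
  calc a⁻¹ * ‖x - y + (b - a) • radialRetraction y‖
      ≤ 1 * (‖x - y‖ + ‖x - y‖ * 1) := by
        gcongr
        · exact inv_le_one_of_one_le₀ one_le_a
        · refine (norm_add_le _ _).trans ?_
          rw [norm_smul, Real.norm_eq_abs]
          gcongr
          exact norm_radialRetraction_le_one y
    _ = (2 : NNReal) * ‖x - y‖ := by push_cast; ring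

variable [NormedSpace ℝ Y]

lemma exists_affineMap_taylorRemainder_rescaled [MeasurableSpace X] (μ : Measure X) (f : X → Y)
    (x : X) {r : ℝ} (hr : r ≠ 0) : ∃ Λ : X →ᵃ[ℝ] Y, ∀ z,
      taylorRemainder μ (fun w => f (x + r • w)) (r⁻¹ • (z - x)) = f z - Λ z := by
  set g : X → Y := fun w => f (x + r • w)
  set L := r⁻¹ • doubleAverage μ (fderiv ℝ g) 0 with hL
  refine ⟨L.toLinearMap.toAffineMap + AffineMap.const ℝ X (doubleAverage μ g 0 - L x), fun z => ?_⟩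
  have value_eq : g (r⁻¹ • (z - x)) = f z := by
    simp only [g, smul_inv_smul₀ hr, add_sub_cancel]
  have slope_eq : doubleAverage μ (fderiv ℝ g) 0 (r⁻¹ • (z - x)) = L z - L x := by
    rw [← map_sub, map_smul, hL, smul_apply]
  rw [taylorRemainder, value_eq, slope_eq]
  simp only [AffineMap.coe_add, Pi.add_apply, LinearMap.coe_toAffineMap,
    ContinuousLinearMap.coe_coe, AffineMap.const_apply]
  abel

variable [FiniteDimensional ℝ X]

lemma exists_contDiff_lipschitzWith_dist_le [CompleteSpace Y] {K : NNReal} {h : X → Y}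
    (hh : LipschitzWith K h) {δ : ℝ} (hδ : 0 < δ) :
    ∃ g : X → Y, ContDiff ℝ 1 g ∧ LipschitzWith K g ∧ ∀ x, dist (g x) (h x) ≤ δ := by
  borelize X
  set μ : Measure X := Measure.addHaar
  have continuous_h := hh.continuous
  obtain ⟨R, R_pos, R_le⟩ : ∃ R > 0, K * R ≤ δ :=
    ⟨δ / (K + 1), by positivity, by
      rw [mul_div_left_comm]
      exact mul_le_of_le_one_right hδ.le ((div_le_one (by positivity)).mpr (by linarith))⟩
  let φ : ContDiffBump (0 : X) := ⟨R / 2, R, half_pos R_pos, half_lt_self R_pos⟩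
  have integrable (x : X) : Integrable (fun t => φ.normed μ t • h (x - t)) μ :=
    ((φ.continuous_normed.smul (by fun_prop)).integrable_of_hasCompactSupport
      φ.hasCompactSupport_normed.smul_right)
  refine ⟨convolution (φ.normed μ) h (ContinuousLinearMap.lsmul ℝ ℝ) μ,
    φ.hasCompactSupport_normed.contDiff_convolution_left _ φ.contDiff_normed
      continuous_h.locallyIntegrable, .of_dist_le_mul fun x y => ?_, fun x => ?_⟩
  · simp only [convolution, ContinuousLinearMap.lsmul_apply]
    rw [dist_eq_norm, ← integral_sub (integrable x) (integrable y)]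
    calc _ ≤ ∫ t, φ.normed μ t * (K * dist x y) ∂μ := by
          refine norm_integral_le_of_norm_le (φ.integrable_normed.mul_const _)
            (.of_forall fun t => ?_)
          rw [← smul_sub, norm_smul, Real.norm_of_nonneg (φ.nonneg_normed t), ← dist_eq_norm,
            ← dist_sub_right x y t]
          exact mul_le_mul_of_nonneg_left (hh.dist_le_mul _ _) (φ.nonneg_normed t)
      _ = K * dist x y := by rw [integral_mul_const, φ.integral_normed, one_mul]
  · refine φ.dist_normed_convolution_le continuous_h.aestronglyMeasurable fun z hz => ?_
    exact (hh.dist_le_mul_of_le (mem_ball.mp hz).le).trans R_le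

lemma exists_isAddHaarMeasure_closedBall_eq_one [MeasurableSpace X] [BorelSpace X] :
    ∃ μ : Measure X, μ.IsAddHaarMeasure ∧ μ (closedBall 0 1) = 1 :=
  let unitBall : TopologicalSpace.PositiveCompacts X :=
    ⟨⟨closedBall 0 1, isCompact_closedBall 0 1⟩,
      ⟨0, ball_subset_interior_closedBall (mem_ball_self one_pos)⟩⟩
  ⟨Measure.addHaarMeasure unitBall, inferInstance, Measure.addHaarMeasure_self⟩

variable [CompleteSpace Y] [Nontrivial X]

theorem exists_affineMap_dist_le_of_contDiff {q m : ℝ} (hq : 1 ≤ q) (hm : 0 ≤ m)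
    (hY : MartCotypeBound q Y m) {K : NNReal} {f : X → Y} (hd : ContDiff ℝ 1 f)
    (hf : LipschitzWith K f) {ε : ℝ} (hε : 0 < ε) (hεK : ε ≤ 8 * K) {T : ℕ}
    (hT : (32 * K * Module.finrank ℝ X * m / ε) ^ q * (152 * K / ε) ^ Module.finrank ℝ X < T) :
    ∃ ρ ∈ Icc ((1 / 2 : ℝ) ^ T / (2 * Module.finrank ℝ X)) (1 / 2), ∃ x : X, ‖x‖ ≤ 1 / 2 ∧
      ∃ Λ : X →ᵃ[ℝ] Y, ∀ z ∈ closedBall x ρ, dist (f z) (Λ z) ≤ ε * ρ := by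
  borelize X
  obtain ⟨μ, _, hμ⟩ := exists_isAddHaarMeasure_closedBall_eq_one (X := X)
  obtain ⟨k, hk, x, hx, small⟩ := exists_taylorRemainder_le μ hμ hq hm hY hd hf hε hεK hT
  obtain ⟨Λ, remainder_eq⟩ := exists_affineMap_taylorRemainder_rescaled μ f x
    (pow_ne_zero k (one_half_pos (α := ℝ)).ne')
  have one_le_n : (1 : ℝ) ≤ Module.finrank ℝ X := Nat.one_le_cast.mpr Module.finrank_pos
  set n := Module.finrank ℝ X
  set r := (1 / 2 : ℝ) ^ k with hr
  have r_pos : 0 < r := by positivity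
  have two_pow_eq : (2 : ℝ) ^ k = r⁻¹ := by rw [hr, one_div, inv_pow, inv_inv]
  refine ⟨r / (2 * n), ⟨?_, ?_⟩, x, hx, Λ, fun z hz => ?_⟩
  · gcongr ?_ / _
    exact pow_le_pow_of_le_one (by norm_num) (by norm_num) hk.le
  · exact div_le_div₀ zero_le_one (pow_le_one₀ (by norm_num) (by norm_num)) two_pos (by linarith)
  have norm_le : ‖r⁻¹ • (z - x)‖ ≤ 1 / (2 * n) := by
    rw [mem_closedBall, dist_eq_norm] at hz
    rwa [norm_smul, norm_inv, Real.norm_of_nonneg r_pos.le, inv_mul_le_iff₀ r_pos, mul_one_div]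
  have := small _ norm_le
  rwa [two_pow_eq, remainder_eq, norm_smul, ← dist_eq_norm, norm_inv, Real.norm_of_nonneg r_pos.le,
    inv_mul_le_iff₀ r_pos, mul_left_comm, mul_one_div] at this

theorem exists_affineMap_dist_le_of_lipschitzOnWith {q m : ℝ} (hq : 1 ≤ q) (hm : 0 ≤ m)
    (hY : MartCotypeBound q Y m) {f : X → Y} (hf : LipschitzOnWith 1 f (closedBall 0 1)) {ε : ℝ}
    (hε : 0 < ε) (hε1 : ε ≤ 1) {T : ℕ}
    (hT : (128 * Module.finrank ℝ X * m / ε) ^ q * (608 / ε) ^ Module.finrank ℝ X < T) :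
    ∃ ρ ∈ Icc ((1 / 2 : ℝ) ^ T / (2 * Module.finrank ℝ X)) (1 / 2), ∃ x : X, ‖x‖ ≤ 1 / 2 ∧
      ∃ Λ : X →ᵃ[ℝ] Y, ∀ z ∈ closedBall x ρ, dist (f z) (Λ z) ≤ ε * ρ := by
  have lipschitz_extension : LipschitzWith 2 (f ∘ radialRetraction) := by
    rw [← lipschitzOnWith_univ, ← one_mul (2 : NNReal)]
    exact hf.comp (lipschitzWith_radialRetraction.lipschitzOnWith)
      fun x _ => mem_closedBall_zero_iff.mpr (norm_radialRetraction_le_one x)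
  have n_pos : (0 : ℝ) < Module.finrank ℝ X := Nat.cast_pos.mpr Module.finrank_pos
  obtain ⟨g, contDiff_g, lipschitz_g, dist_le⟩ :=
    exists_contDiff_lipschitzWith_dist_le lipschitz_extension
      (δ := ε / 2 * ((1 / 2) ^ T / (2 * Module.finrank ℝ X))) (by positivity)
  obtain ⟨ρ, hρ, x, hx, Λ, hΛ⟩ := exists_affineMap_dist_le_of_contDiff hq hm hY contDiff_g
    lipschitz_g (half_pos hε) (by push_cast; linarith) (T := T) (by
      convert hT using 3 <;> push_cast <;> field_simp <;> ring)
  refine ⟨ρ, hρ, x, hx, Λ, fun z hz => ?_⟩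
  have norm_le : ‖z‖ ≤ 1 := by
    have := norm_le_norm_add_norm_sub' z x
    rw [mem_closedBall, dist_eq_norm] at hz
    linarith [hρ.2]
  calc dist (f z) (Λ z) ≤ dist (g z) (f z) + dist (g z) (Λ z) := dist_triangle_left _ _ _
    _ ≤ ε / 2 * ρ + ε / 2 * ρ := by
        gcongr
        · have := dist_le z
          rw [Function.comp_apply, radialRetraction_of_norm_le_one norm_le] at this
          exact this.trans (by gcongr; exact hρ.1)
        · exact hΛ z hz
    _ = ε * ρ := by ring

end Reduction

section Modulus

variable {X Y : Type*} [NormedAddCommGroup X] [NormedSpace ℝ X] [NormedAddCommGroup Y]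
  [NormedSpace ℝ Y] {ε : ℝ}

variable (X Y ε) in
/-- The radii admissible in the definition of the modulus `r^{X→Y}(ε)`, which is the supremum of
this set. -/
def affineApproxRadii : Set ℝ :=
  {r ∈ Ioo 0 1 | ∀ f : X → Y, LipschitzOnWith 1 f (closedBall 0 1) →
    ∃ ρ ≥ r, ∃ x, closedBall x ρ ⊆ closedBall 0 1 ∧
      ∃ Λ : X →ᵃ[ℝ] Y, ∀ z ∈ closedBall x ρ, dist (f z) (Λ z) ≤ ε * ρ}

lemma bddAbove_affineApproxRadii : BddAbove (affineApproxRadii X Y ε) :=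
  ⟨1, fun _ hr => hr.1.2.le⟩

lemma one_le_sSup_affineApproxRadii (hε : 0 ≤ ε)
    (h : Subsingleton X ∨ Subsingleton Y ∨ 1 ≤ ε) : 1 ≤ sSup (affineApproxRadii X Y ε) := by
  have dist_le {f : X → Y} (hf : LipschitzOnWith 1 f (closedBall 0 1)) {z : X}
      (hz : z ∈ closedBall 0 1) : dist (f z) (f 0) ≤ ε * ‖z‖ := by
    rcases h with _ | _ | one_le_ε
    · simp [Subsingleton.elim z 0]
    · rw [Subsingleton.elim (f z) (f 0), dist_self]
      positivity
    · have : dist (f z) (f 0) ≤ ‖z‖ := by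
        simpa using hf.dist_le_mul z hz 0 (mem_closedBall_self zero_le_one)
      exact this.trans (le_mul_of_one_le_left (norm_nonneg z) one_le_ε)
  have mem {r : ℝ} (hr : r ∈ Ioo 0 1) : r ∈ affineApproxRadii X Y ε := by
    have subset := closedBall_subset_closedBall (x := (0 : X)) hr.2.le
    refine ⟨hr, fun f hf => ⟨r, le_rfl, 0, subset, AffineMap.const ℝ X (f 0), fun z hz => ?_⟩⟩
    exact (dist_le hf (subset hz)).trans (by gcongr; exact mem_closedBall_zero_iff.mp hz)
  calc (1 : ℝ) = sSup (Ioo 0 1) := (csSup_Ioo one_pos).symm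
    _ ≤ _ := csSup_le_csSup bddAbove_affineApproxRadii (nonempty_Ioo.mpr one_pos) fun _ => mem

lemma one_half_pow_div_mem_affineApproxRadii [FiniteDimensional ℝ X] [Nontrivial X]
    [CompleteSpace Y] {q m : ℝ} (hq : 1 ≤ q) (hm : 0 ≤ m) (hY : MartCotypeBound q Y m)
    (hε : 0 < ε) (hε1 : ε ≤ 1) {T : ℕ}
    (hT : (128 * Module.finrank ℝ X * m / ε) ^ q * (608 / ε) ^ Module.finrank ℝ X < T) :
    (1 / 2 : ℝ) ^ T / (2 * Module.finrank ℝ X) ∈ affineApproxRadii X Y ε := by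
  have one_le_n : (1 : ℝ) ≤ Module.finrank ℝ X := Nat.one_le_cast.mpr Module.finrank_pos
  refine ⟨⟨by positivity, ?_⟩, fun f hf => ?_⟩
  · rw [div_lt_one (by positivity)]
    exact (pow_le_one₀ (by norm_num) (by norm_num)).trans_lt (by linarith)
  obtain ⟨ρ, hρ, x, hx, Λ, hΛ⟩ := exists_affineMap_dist_le_of_lipschitzOnWith hq hm hY hf hε hε1 hT
  refine ⟨ρ, hρ.1, x, closedBall_subset_closedBall' ?_, Λ, hΛ⟩
  rw [dist_zero_right]
  linarith [hρ.2]

lemma exp_neg_four_mul_le_one_half_pow_div {n z : ℝ} (hn : 1 ≤ n) (hz : n ≤ z) :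
    Real.exp (-(4 * z)) ≤ (1 / 2) ^ (⌊z⌋₊ + 1) / (2 * n) := by
  set T := ⌊z⌋₊ + 1 with hT
  have T_le : (T : ℝ) ≤ z + 1 := by
    rw [hT, Nat.cast_succ]
    gcongr
    exact Nat.floor_le (by linarith)
  have two_pow_le : (2 : ℝ) ^ T ≤ Real.exp T := by
    rw [← Real.exp_one_pow]
    gcongr
    linarith [Real.add_one_le_exp 1]
  have two_mul_le : 2 * n ≤ Real.exp (2 * n) := by linarith [Real.add_one_le_exp (2 * n)]
  rw [Real.exp_neg, one_div, inv_pow, div_eq_mul_inv, ← mul_inv]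
  refine inv_anti₀ (by positivity) ?_
  calc (2 : ℝ) ^ T * (2 * n) ≤ Real.exp T * Real.exp (2 * n) := by gcongr
    _ = Real.exp (T + 2 * n) := (Real.exp_add _ _).symm
    _ ≤ Real.exp (4 * z) := Real.exp_le_exp.mpr (by linarith)

lemma scale_count_le {n : ℕ} {q m : ℝ} (hq : 0 ≤ q) (hm : 0 ≤ m) (hε : 0 < ε) :
    (128 * n * m / ε) ^ q * (608 / ε) ^ n ≤ (n * m) ^ q * (608 / ε) ^ (n + q) := by
  calc (128 * n * m / ε) ^ q * (608 / ε) ^ n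
      ≤ (n * m * (608 / ε)) ^ q * (608 / ε) ^ n := by
        gcongr ?_ ^ q * _
        rw [mul_div_assoc', mul_comm (n * m), ← mul_assoc]
        gcongr
        norm_num
    _ = (n * m) ^ q * (608 / ε) ^ (n + q) := by
        rw [Real.mul_rpow (by positivity) (by positivity), add_comm, Real.rpow_add (by positivity),
          Real.rpow_natCast, mul_assoc]

lemma four_mul_scale_count_le {n q c : ℝ} (hn : 1 ≤ n) (hq : 0 ≤ q) (hc : 0 ≤ c) (hε : 0 < ε) :
    4 * (c * (608 / ε) ^ (n + q)) ≤ c / (1 / 2432 * ε) ^ (n + q) := by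
  have inv_eq : (1 / 2432 * ε)⁻¹ = 4 * (608 / ε) := by
    field_simp
    norm_num
  rw [div_eq_mul_inv c, ← Real.inv_rpow (by positivity), inv_eq,
    Real.mul_rpow (by norm_num) (by positivity), mul_left_comm]
  gcongr
  exact Real.self_le_rpow_of_one_le (by norm_num) (by linarith)

theorem exp_le_sSup_affineApproxRadii [FiniteDimensional ℝ X] [Nontrivial X] [CompleteSpace Y]
    [Nontrivial Y] {q m : ℝ} (hq : 1 ≤ q) (hm : 0 ≤ m) (hY : MartCotypeBound q Y m)
    (hε : 0 < ε) (hε1 : ε ≤ 1) :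
    Real.exp (-(Module.finrank ℝ X * m) ^ q / (1 / 2432 * ε) ^ (Module.finrank ℝ X + q)) ≤
      sSup (affineApproxRadii X Y ε) := by
  set n := Module.finrank ℝ X
  have one_le_n : (1 : ℝ) ≤ n := Nat.one_le_cast.mpr Module.finrank_pos
  have one_le_m : 1 ≤ m := one_le_of_martCotypeBound (zero_lt_one.trans_le hq) hY
  have one_le_nm : 1 ≤ n * m := one_le_mul_of_one_le_of_one_le one_le_n one_le_m
  have n_le : n ≤ (n * m) ^ q * (608 / ε) ^ (n + q) := calc
    (n : ℝ) ≤ n * m := le_mul_of_one_le_right (by positivity) one_le_m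
    _ ≤ (n * m) ^ q := Real.self_le_rpow_of_one_le one_le_nm hq
    _ ≤ (n * m) ^ q * (608 / ε) ^ (n + q) := by
        refine le_mul_of_one_le_right (by positivity) (Real.one_le_rpow ?_ (by positivity))
        rw [one_le_div hε]
        linarith
  refine le_trans (Real.exp_le_exp.mpr ?_)
    ((exp_neg_four_mul_le_one_half_pow_div one_le_n n_le).trans (le_csSup bddAbove_affineApproxRadii
      (one_half_pow_div_mem_affineApproxRadii hq hm hY hε hε1 ?_)))
  · rw [neg_div, neg_le_neg_iff]
    exact four_mul_scale_count_le one_le_n (zero_le_one.trans hq) (by positivity) hε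
  · rw [Nat.cast_succ]
    exact (scale_count_le (zero_le_one.trans hq) hm hε).trans_lt (Nat.lt_floor_add_one _)

end Modulus

lemma half_le_average {α : Type*} [MeasurableSpace α] {ν : Measure α} [IsFiniteMeasure ν]
    [NeZero ν] {g : α → ℝ} (hg : 0 ≤ᵐ[ν] g) (hint : Integrable g ν) {s : ℝ} (hs : 0 ≤ s)
    (h : ν.real {x | g x < s} ≤ ν.real univ / 2) : s / 2 ≤ ⨍ x, g x ∂ν := by
  have univ_le : ν.real univ ≤ ν.real {x | g x < s} + ν.real {x | s ≤ g x} := by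
    refine le_trans (measureReal_mono fun x _ => ?_) (measureReal_union_le _ _)
    exact lt_or_ge (g x) s
  have univ_pos : 0 < ν.real univ := measureReal_univ_pos
  rw [average_eq, smul_eq_mul, ← div_eq_inv_mul, le_div_iff₀ univ_pos]
  calc s / 2 * ν.real univ = s * (ν.real univ / 2) := by ring
    _ ≤ s * ν.real {x | s ≤ g x} := by gcongr; linarith
    _ ≤ ∫ x, g x ∂ν := mul_meas_ge_le_integral_of_nonneg hg hint s

lemma exp_neg_div_le_exp_neg_div {n q m w a ε : ℝ} (hn : 1 ≤ n) (hq : 0 ≤ q) (hm : 0 ≤ m)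
    (hw : 1 / 16 ≤ w) (ha : 0 ≤ a) (hε : 0 ≤ ε) :
    Real.exp (-(n ^ ((5 : ℝ) / 4) * √w * m) ^ q / (a / 4 * ε) ^ (n + q)) ≤
      Real.exp (-(n * m) ^ q / (a * ε) ^ (n + q)) := by
  have one_div_four_le : 1 / 4 ≤ √w := Real.le_sqrt_of_sq_le (by linarith)
  have n_le : n ≤ n ^ ((5 : ℝ) / 4) := Real.self_le_rpow_of_one_le hn (by norm_num)
  rw [Real.exp_le_exp, neg_div, neg_div, neg_le_neg_iff]
  calc (n * m) ^ q / (a * ε) ^ (n + q)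
      = (n * (1 / 4) * m) ^ q * 4 ^ q / (a * ε) ^ (n + q) := by
        rw [← Real.mul_rpow (by positivity) (by norm_num)]
        ring_nf
    _ ≤ (n ^ ((5 : ℝ) / 4) * √w * m) ^ q * 4 ^ (n + q) / (a * ε) ^ (n + q) := by
        gcongr
        · norm_num
        · linarith
    _ = (n ^ ((5 : ℝ) / 4) * √w * m) ^ q / (a / 4 * ε) ^ (n + q) := by
        rw [div_mul_eq_mul_div, Real.div_rpow (by positivity) (by norm_num), div_div_eq_mul_div]

end QuantitativeDifferentiation

namespace IsNorm

open QuantitativeDifferentiation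

section

variable {V : Type*} [AddCommGroup V] [Module ℝ V] {N : V → ℝ}

lemma map_zero (hN : IsNorm N) : N 0 = 0 := by
  simpa using hN.2.1 0 0

lemma map_neg (hN : IsNorm N) (x : V) : N (-x) = N x := by
  simpa using hN.2.1 (-1) x

/-- The vector space `V` with the norm `N`, as a type synonym, so that the norm instance does not
clash with one that `V` already carries. -/
def NormedCopy (_ : IsNorm N) : Type _ := V

instance (hN : IsNorm N) : AddCommGroup hN.NormedCopy := inferInstanceAs (AddCommGroup V)

instance (hN : IsNorm N) : Module ℝ hN.NormedCopy := inferInstanceAs (Module ℝ V)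

instance [FiniteDimensional ℝ V] (hN : IsNorm N) : FiniteDimensional ℝ hN.NormedCopy :=
  inferInstanceAs (FiniteDimensional ℝ V)

instance (hN : IsNorm N) : NormedAddCommGroup hN.NormedCopy :=
  AddGroupNorm.toNormedAddCommGroup
    { toFun := N
      map_zero' := hN.map_zero
      add_le' := hN.2.2
      neg' := hN.map_neg
      eq_zero_of_map_eq_zero' := hN.1 }

instance (hN : IsNorm N) : NormedSpace ℝ hN.NormedCopy where
  norm_smul_le a x := (hN.2.1 a x).le

/-- The identity map from `V` to `V` with the norm `N`. -/
def toNormedCopy (hN : IsNorm N) : V ≃ₗ[ℝ] hN.NormedCopy := LinearEquiv.refl ℝ V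

lemma finrank_normedCopy {n : ℕ} {N : EuclideanSpace ℝ (Fin n) → ℝ} (hN : IsNorm N) :
    Module.finrank ℝ hN.NormedCopy = n := by
  rw [← hN.toNormedCopy.finrank_eq, finrank_euclideanSpace_fin]

lemma nonneg (hN : IsNorm N) (x : V) : 0 ≤ N x := norm_nonneg (hN.toNormedCopy x)

end

lemma affineApproxRadii_normedCopy {n : ℕ} {N : EuclideanSpace ℝ (Fin n) → ℝ} (hN : IsNorm N)
    (Y : Type*) [NormedAddCommGroup Y] [NormedSpace ℝ Y] (ε : ℝ) :
    affineApproxRadii hN.NormedCopy Y ε = uaapSetN N Y ε := by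
  simp only [affineApproxRadii, uaapSetN, lipschitzOnWith_iff_norm_sub_le, mem_closedBall,
    dist_eq_norm, sub_zero, NNReal.coe_one, one_mul, subset_def]
  rfl

section

open scoped Pointwise

variable {E : Type*} [NormedAddCommGroup E] [NormedSpace ℝ E] [FiniteDimensional ℝ E] {N : E → ℝ}

lemma continuous (hN : IsNorm N) : Continuous N :=
  hN.toNormedCopy.toLinearMap.continuous_of_finiteDimensional.norm

lemma isCompact_unitBall (hN : IsNorm N) : IsCompact {x | N x ≤ 1} := by
  have preimage_eq : {x | N x ≤ 1} = hN.toNormedCopy.toContinuousLinearEquiv ⁻¹' closedBall 0 1 :=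
    Set.ext fun x => (mem_closedBall_zero_iff (a := hN.toNormedCopy x)).symm
  rw [preimage_eq]
  exact hN.toNormedCopy.toContinuousLinearEquiv.toHomeomorph.isCompact_preimage.mpr
    (isCompact_closedBall 0 1)

variable [MeasurableSpace E] (μ : Measure E) [μ.IsAddHaarMeasure]

lemma measureReal_unitBall_pos (hN : IsNorm N) : 0 < μ.real {x | N x ≤ 1} := by
  refine ENNReal.toReal_pos (Measure.measure_pos_of_mem_nhds μ (x := 0) ?_).ne'
    hN.isCompact_unitBall.measure_lt_top.ne
  exact hN.continuous.continuousAt.eventually_le_const (by rw [hN.map_zero]; exact one_pos)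

variable [BorelSpace E]

lemma toSphere_setOf_lt_le (hN : IsNorm N) {s : ℝ} (hs : 0 < s) :
    μ.toSphere.real {σ | N σ < s} ≤
      Module.finrank ℝ E * (s ^ Module.finrank ℝ E * μ.real {x | N x ≤ 1}) := by
  have cone_subset : Ioo (0 : ℝ) 1 • (Subtype.val '' {σ : sphere (0 : E) 1 | N σ < s}) ⊆
      s • {x | N x ≤ 1} := by
    rintro _ ⟨c, ⟨c_pos, c_lt⟩, _, ⟨σ, hσ, rfl⟩, rfl⟩
    rw [mem_smul_set_iff_inv_smul_mem₀ hs.ne', mem_ofPred_eq, hN.2.1, hN.2.1,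
      abs_of_pos (inv_pos.mpr hs), abs_of_pos c_pos, inv_mul_le_iff₀ hs, mul_one]
    exact (mul_le_of_le_one_left (hN.nonneg σ) c_lt.le).trans hσ.le
  have measurableSet : MeasurableSet {σ : sphere (0 : E) 1 | N σ < s} :=
    (isOpen_lt (hN.continuous.comp continuous_subtype_val) continuous_const).measurableSet
  rw [measureReal_def, μ.toSphere_apply' measurableSet, ENNReal.toReal_mul, ENNReal.toReal_natCast]
  gcongr
  calc _ ≤ μ.real (s • {x | N x ≤ 1}) :=
        measureReal_mono cone_subset (hN.isCompact_unitBall.smul s).measure_lt_top.ne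
    _ = s ^ Module.finrank ℝ E * μ.real {x | N x ≤ 1} := by
        rw [measureReal_def, Measure.addHaar_smul_of_nonneg _ hs.le, ENNReal.toReal_mul,
          ENNReal.toReal_ofReal (by positivity), measureReal_def]

lemma half_le_average_toSphere [Nontrivial E] (hN : IsNorm N) {s : ℝ} (hs : 0 < s)
    (h : s ^ Module.finrank ℝ E * μ.real {x | N x ≤ 1} ≤ μ.real (ball 0 1) / 2) :
    s / 2 ≤ ⨍ σ : sphere (0 : E) 1, N σ ∂μ.toSphere := by
  have : NeZero μ.toSphere := ⟨Measure.toSphere_ne_zero μ⟩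
  have integrable : Integrable (fun σ : sphere (0 : E) 1 => N σ) μ.toSphere :=
    (hN.continuous.comp continuous_subtype_val).integrable_of_hasCompactSupport (.of_compactSpace _)
  refine half_le_average (g := fun σ : sphere (0 : E) 1 => N σ) (.of_forall fun σ => hN.nonneg σ)
    integrable hs.le ?_
  refine (hN.toSphere_setOf_lt_le μ hs).trans ?_
  rw [Measure.toSphere_real_apply_univ, mul_div_assoc]
  gcongr

lemma half_le_rpow_setAverage_norm_rpow (hN : IsNorm N) {q : ℝ} (hq : 1 ≤ q) {t : ℝ} (ht : 0 < t)
    (h : t ^ Module.finrank ℝ E * μ.real (ball 0 1) ≤ μ.real {x | N x ≤ 1} / 2) :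
    t / 2 ≤ (⨍ x in {x | N x ≤ 1}, ‖x‖ ^ q ∂μ) ^ (1 / q) := by
  have q_pos : 0 < q := by linarith
  have finite : μ {x | N x ≤ 1} ≠ ∞ := hN.isCompact_unitBall.measure_lt_top.ne
  have : IsFiniteMeasure (μ.restrict {x | N x ≤ 1}) := isFiniteMeasure_restrict.mpr finite
  have : NeZero (μ.restrict {x | N x ≤ 1}) :=
    ⟨fun h0 => (hN.measureReal_unitBall_pos μ).ne' (by
      rw [measureReal_def, Measure.restrict_eq_zero.mp h0, ENNReal.toReal_zero])⟩
  have half_le : t ^ q / 2 ≤ ⨍ x in {x | N x ≤ 1}, ‖x‖ ^ q ∂μ := by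
    refine half_le_average (.of_forall fun x => by positivity)
      ((continuous_norm.rpow_const fun _ => .inr q_pos.le).continuousOn.integrableOn_compact
        hN.isCompact_unitBall) (by positivity) ?_
    have setOf_eq : {x : E | ‖x‖ ^ q < t ^ q} = ball 0 t := by
      ext x
      rw [mem_ofPred_eq, Real.rpow_lt_rpow_iff (norm_nonneg x) ht.le q_pos, mem_ball_zero_iff]
    rw [setOf_eq, measureReal_restrict_apply_univ]
    calc _ ≤ μ.real (ball 0 t) :=
          ENNReal.toReal_mono measure_ball_lt_top.ne (Measure.restrict_apply_le _ _)
      _ = t ^ Module.finrank ℝ E * μ.real (ball 0 1) := by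
          rw [measureReal_def, Measure.addHaar_ball_of_pos _ _ ht, ENNReal.toReal_mul,
            ENNReal.toReal_ofReal (by positivity), measureReal_def]
      _ ≤ _ := h
  calc t / 2 = ((t / 2) ^ q) ^ (1 / q) := by
        rw [one_div, Real.rpow_rpow_inv (by positivity) q_pos.ne']
    _ ≤ (t ^ q / 2) ^ (1 / q) := by
        rw [Real.div_rpow ht.le zero_le_two]
        gcongr
        exact Real.self_le_rpow_of_one_le one_le_two hq
    _ ≤ _ := by gcongr

theorem one_div_sixteen_le_mul_average_toSphere [Nontrivial E] (hN : IsNorm N) {q : ℝ}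
    (hq : 1 ≤ q) : 1 / 16 ≤ (⨍ x in {x | N x ≤ 1}, ‖x‖ ^ q ∂μ) ^ (1 / q) *
      ⨍ σ : sphere (0 : E) 1, N σ ∂μ.toSphere := by
  have d_ne : Module.finrank ℝ E ≠ 0 := Module.finrank_pos.ne'
  have b_pos : 0 < μ.real (ball (0 : E) 1) :=
    ENNReal.toReal_pos (measure_ball_pos μ _ one_pos).ne' measure_ball_lt_top.ne
  have v_pos := hN.measureReal_unitBall_pos μ
  set d := Module.finrank ℝ E
  set b := μ.real (ball (0 : E) 1)
  set v := μ.real {x | N x ≤ 1}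
  obtain ⟨s, s_pos, s_pow⟩ : ∃ s > 0, s ^ d = b / (2 * v) :=
    ⟨_, by positivity, Real.rpow_inv_natCast_pow (by positivity) d_ne⟩
  obtain ⟨t, t_pos, t_pow⟩ : ∃ t > 0, t ^ d = v / (2 * b) :=
    ⟨_, by positivity, Real.rpow_inv_natCast_pow (by positivity) d_ne⟩
  have le_average := hN.half_le_average_toSphere μ s_pos (by
    change _ * v ≤ b / 2
    rw [s_pow]
    exact le_of_eq (by field_simp))
  have le_rpow_average := hN.half_le_rpow_setAverage_norm_rpow μ hq t_pos (by
    change _ * b ≤ v / 2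
    rw [t_pow]
    exact le_of_eq (by field_simp))
  have prod_pow : (t * s) ^ d = 1 / 4 := by
    rw [mul_pow, s_pow, t_pow]
    field_simp
    norm_num
  have le_prod : 1 / 4 ≤ t * s := by
    by_contra! lt
    linarith [pow_le_of_le_one (by positivity) (by linarith : t * s ≤ 1) d_ne]
  calc (1 : ℝ) / 16 ≤ t / 2 * (s / 2) := by linarith
    _ ≤ _ := mul_le_mul le_rpow_average le_average (by positivity)
        ((half_pos t_pos).le.trans le_rpow_average)

end

theorem one_div_sixteen_le_IqX_mul_MX {n : ℕ} (hn : 0 < n) {N : EuclideanSpace ℝ (Fin n) → ℝ}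
    (hN : IsNorm N) {q : ℝ} (hq : 1 ≤ q) : 1 / 16 ≤ IqX q N * MX N :=
  have : NeZero n := ⟨hn.ne'⟩
  hN.one_div_sixteen_le_mul_average_toSphere volume hq

end IsNorm

theorem statement1_general : ∃ a : ℝ, 0 < a ∧ a < 1 ∧
    ∀ (q : ℝ), 1 ≤ q →
    ∀ (X : Type*) [NormedAddCommGroup X] [NormedSpace ℝ X] [FiniteDimensional ℝ X]
      (Y : Type*) [NormedAddCommGroup Y] [NormedSpace ℝ Y] [CompleteSpace Y],
    ∀ m : ℝ, 0 ≤ m → MartCotypeBound q Y m →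
    ∀ ε : ℝ, 0 < ε →
      Real.exp (-(Module.finrank ℝ X * m) ^ q / (a * ε) ^ (Module.finrank ℝ X + q))
        ≤ sSup (QuantitativeDifferentiation.affineApproxRadii X Y ε) := by
  refine ⟨1 / 2432, by norm_num, by norm_num, fun q hq X _ _ _ Y _ _ _ m hm hY ε hε => ?_⟩
  by_cases degenerate : Subsingleton X ∨ Subsingleton Y ∨ 1 ≤ ε
  · refine (Real.exp_le_one_iff.mpr ?_).trans
      (QuantitativeDifferentiation.one_le_sSup_affineApproxRadii hε.le degenerate)
    rw [neg_div, neg_nonpos]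
    positivity
  · push Not at degenerate
    obtain ⟨_, _, ε_lt_one⟩ := degenerate
    exact QuantitativeDifferentiation.exp_le_sSup_affineApproxRadii hq hm hY hε ε_lt_one.le

/-- **Refined quantitative differentiation.** There is a universal `a ∈ (0,1)` such that for
every `q ∈ [2,∞)`, `n ∈ ℕ`, every `n`-dimensional normed space `X = (ℝⁿ, N)` endowed with a
Hilbertian norm (the Euclidean one), every Banach space `Y` of martingale cotype `q`
(with constant `m`), and every `ε ∈ (0,1/2)`:
`r^{X→Y}(ε) ≥ exp(−(n^{5/4}·√(I_q(X)M(X))·𝔪_q(Y))^q / (aε)^{n+q})`. -/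
theorem statement1 :
    ∃ a : ℝ, 0 < a ∧ a < 1 ∧
      ∀ (q : ℝ), 2 ≤ q → ∀ (n : ℕ), 0 < n →
      ∀ (N : EuclideanSpace ℝ (Fin n) → ℝ), IsNorm N →
      ∀ (Y : Type u) [NormedAddCommGroup Y] [NormedSpace ℝ Y] [CompleteSpace Y],
      ∀ m : ℝ, 0 ≤ m → MartCotypeBound q Y m →
      ∀ ε : ℝ, ε ∈ Set.Ioo (0 : ℝ) (1 / 2) →
        Real.exp (-((n : ℝ) ^ ((5 : ℝ) / 4) * Real.sqrt (IqX q N * MX N) * m) ^ q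
            / (a * ε) ^ ((n : ℝ) + q))
          ≤ sSup (uaapSetN N Y ε) := by
  obtain ⟨a, a_pos, a_lt, exp_le⟩ := statement1_general
  refine ⟨a / 4, by positivity, by linarith, fun q hq n hn N hN Y _ _ _ m hm hY ε hε => ?_⟩
  refine (QuantitativeDifferentiation.exp_neg_div_le_exp_neg_div (Nat.one_le_cast.mpr hn)
    (zero_le_two.trans hq) hm (hN.one_div_sixteen_le_IqX_mul_MX hn (one_le_two.trans hq))
    a_pos.le hε.1.le).trans ?_
  simpa only [hN.affineApproxRadii_normedCopy, hN.finrank_normedCopy] using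
    exp_le q (one_le_two.trans hq) hN.NormedCopy Y m hm hY ε hε.1
end
end
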